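/- arXiv:2110.15947 — 11 statements merged into one kernel-verified Lean document; each statement's English description precedes it below -/
import Mathlib

section
/- The characteristic polynomial D(λ) = φ_l(λ) φ•_{l+1}(λ) − φ_{l+1}(λ) φ•_l(λ) has degree exactly 2l−1, with leading coefficient (∏_{k=1}^{l} (α_k α•_k)^{-1})·(α_l − α•_l) ≠ 0; consequently the discrete transmission eigenvalue problem has exactly 2l−1 eigenvalues counted with multiplicity. -/
open Polynomial

theorem natDegree_sub_aux {p q : Polynomial ℂ} {n : ℕ} (hp : p.natDegree ≤ n)
    (hq : q.natDegree ≤ n) : (p - q).natDegree ≤ n :=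
  (natDegree_sub_le p q).trans (max_le hp hq)

theorem phi_aux (l : ℕ) (α β : ℕ → ℂ) (hα : ∀ n, 1 ≤ n → n ≤ l → α n ≠ 0)
    (φ : ℕ → Polynomial ℂ) (hφ0 : φ 0 = 0) (hφ1 : φ 1 = 1)
    (hrec : ∀ n, 1 ≤ n → n ≤ l →
      C (α n) * φ (n + 1) + C (β n) * φ n + C (α n) * φ (n - 1) = X * φ n) (m : ℕ) :
    m ≤ l → (φ m).natDegree ≤ m ∧ (φ (m + 1)).natDegree ≤ m ∧
      (φ (m + 1)).coeff m = ∏ k ∈ Finset.Icc 1 m, (α k)⁻¹ := by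
  induction m with
  | zero => intro _; simp [hφ0, hφ1]
  | succ m ih =>
    intro h
    obtain ⟨h1, h2, h3⟩ := ih (by omega)
    have ha := hα (m + 1) (by omega) h
    have hC : C (α (m + 1))⁻¹ * C (α (m + 1)) = 1 := by
      rw [← C_mul, inv_mul_cancel₀ ha, C_1]
    have e : φ (m + 1 + 1) = C (α (m + 1))⁻¹ * (X * φ (m + 1))
        - C (α (m + 1))⁻¹ * (C (β (m + 1)) * φ (m + 1)) - φ m := by
      have hr := hrec (m + 1) (by omega) h
      simp only [Nat.add_sub_cancel] at hr
      linear_combination (-φ (m + 1 + 1) - φ m) * hC + C (α (m + 1))⁻¹ * hr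
    have hX : (X * φ (m + 1)).natDegree ≤ m + 1 := by
      refine natDegree_mul_le.trans ?_
      rw [natDegree_X]; omega
    have hd : (φ (m + 1 + 1)).natDegree ≤ m + 1 := by
      rw [e]
      refine natDegree_sub_aux (natDegree_sub_aux ?_ ?_) (h1.trans (by omega))
      · exact (natDegree_C_mul_le _ _).trans hX
      · exact (natDegree_C_mul_le _ _).trans ((natDegree_C_mul_le _ _).trans (by omega))
    refine ⟨by omega, hd, ?_⟩
    rw [e, Finset.prod_Icc_succ_top (by omega), ← h3]
    simp only [coeff_sub, coeff_C_mul, coeff_X_mul]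
    rw [coeff_eq_zero_of_natDegree_lt (p := φ (m + 1)) (n := m + 1) (by omega),
      coeff_eq_zero_of_natDegree_lt (p := φ m) (n := m + 1) (by omega)]
    ring

/-- The characteristic polynomial `D = φ l * φ• (l+1) - φ (l+1) * φ• l` of the discrete
transmission eigenvalue problem has degree exactly `2l-1`, with nonzero leading coefficient
`(∏_{k=1}^{l} (α k * α• k)⁻¹) * (α l - α• l)`; consequently the problem has exactly `2l-1`
eigenvalues counted with multiplicity (the roots of `D` over `ℂ`). -/
theorem transmission_char_poly_degree (l : ℕ) (hl : 1 ≤ l)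
    (α β αs βs : ℕ → ℂ)
    (hα : ∀ n, 1 ≤ n → n ≤ l → α n ≠ 0)
    (hαs : ∀ n, 1 ≤ n → n ≤ l → αs n ≠ 0)
    (hne : α l ≠ αs l)
    (φ φs : ℕ → Polynomial ℂ)
    (hφ0 : φ 0 = 0) (hφ1 : φ 1 = 1) (hφs0 : φs 0 = 0) (hφs1 : φs 1 = 1)
    (hrec : ∀ n, 1 ≤ n → n ≤ l →
      C (α n) * φ (n + 1) + C (β n) * φ n + C (α n) * φ (n - 1) = X * φ n)
    (hrecs : ∀ n, 1 ≤ n → n ≤ l →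
      C (αs n) * φs (n + 1) + C (βs n) * φs n + C (αs n) * φs (n - 1) = X * φs n) :
    (φ l * φs (l + 1) - φ (l + 1) * φs l).degree = ((2 * l - 1 : ℕ) : WithBot ℕ) ∧
    (φ l * φs (l + 1) - φ (l + 1) * φs l).leadingCoeff
      = (∏ k ∈ Finset.Icc 1 l, (α k * αs k)⁻¹) * (α l - αs l) ∧
    (∏ k ∈ Finset.Icc 1 l, (α k * αs k)⁻¹) * (α l - αs l) ≠ 0 ∧
    Multiset.card (φ l * φs (l + 1) - φ (l + 1) * φs l).roots = 2 * l - 1 := by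
  obtain ⟨-, a1, a2⟩ := phi_aux l α β hα φ hφ0 hφ1 hrec l le_rfl
  obtain ⟨-, b1, b2⟩ := phi_aux l αs βs hαs φs hφs0 hφs1 hrecs l le_rfl
  obtain ⟨m, rfl⟩ : ∃ m, l = m + 1 := ⟨l - 1, by omega⟩
  obtain ⟨-, c1, c2⟩ := phi_aux (m + 1) α β hα φ hφ0 hφ1 hrec m (by omega)
  obtain ⟨-, d1, d2⟩ := phi_aux (m + 1) αs βs hαs φs hφs0 hφs1 hrecs m (by omega)
  have hnz : (∏ k ∈ Finset.Icc 1 (m + 1), (α k * αs k)⁻¹) * (α (m + 1) - αs (m + 1)) ≠ 0 := by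
    refine mul_ne_zero (Finset.prod_ne_zero_iff.2 ?_) (sub_ne_zero.2 hne)
    intro k hk
    rw [Finset.mem_Icc] at hk
    exact inv_ne_zero (mul_ne_zero (hα k hk.1 hk.2) (hαs k hk.1 hk.2))
  have ha := hα (m + 1) hl le_rfl
  have hb := hαs (m + 1) hl le_rfl
  have hidx : 2 * (m + 1) - 1 = m + (m + 1) := by omega
  rw [hidx]
  set D := φ (m + 1) * φs (m + 1 + 1) - φ (m + 1 + 1) * φs (m + 1) with hD
  have hc : D.coeff (m + (m + 1)) =
      (∏ k ∈ Finset.Icc 1 (m + 1), (α k * αs k)⁻¹) * (α (m + 1) - αs (m + 1)) := by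
    rw [hD, coeff_sub, coeff_mul_add_eq_of_natDegree_le c1 b1, mul_comm (φ (m + 1 + 1)),
      coeff_mul_add_eq_of_natDegree_le d1 a1, a2, b2, c2, d2]
    simp only [mul_inv, Finset.prod_mul_distrib]
    rw [Finset.prod_Icc_succ_top (by omega), Finset.prod_Icc_succ_top (by omega)]
    field_simp
  have hdeg : D.natDegree ≤ m + (m + 1) := by
    refine natDegree_sub_aux ?_ ?_
    · exact natDegree_mul_le.trans (by omega)
    · exact natDegree_mul_le.trans (by omega)
  have hnd : D.natDegree = m + (m + 1) :=
    le_antisymm hdeg (le_natDegree_of_ne_zero (by rw [hc]; exact hnz))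
  have hD0 : D ≠ 0 := by
    intro h0
    rw [h0, coeff_zero] at hc
    exact hnz hc.symm
  refine ⟨?_, ?_, hnz, ?_⟩
  · rw [degree_eq_natDegree hD0, hnd]
  · rw [leadingCoeff, hnd, hc]
  · rw [← hnd]
    exact (IsAlgClosed.splits D).natDegree_eq_card_roots.symm
end

section
/- If two systems of coefficients (a_n, b_n) and (ã_n, b̃_n) (each with all a_n ≠ 0, ã_n ≠ 0) have the same Weyl coefficients M_1,…,M_{2l}, then Q_{l+1}(λ) P̃_{l+1}(λ) − P_{l+1}(λ) Q̃_{l+1}(λ) ≡ 0, i.e., the two Weyl functions coincide: −Q_{l+1}/P_{l+1} = −Q̃_{l+1}/P̃_{l+1} as rational functions. In other words, the Weyl coefficients M_1,…,M_{2l} uniquely specify the Weyl function M(λ). -/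
open Polynomial

lemma weyl_natDegree_aux (l : ℕ) (a b : ℕ → ℂ) (ha : ∀ n, 1 ≤ n → n ≤ l → a n ≠ 0)
    (P : ℕ → Polynomial ℂ) (hP0 : P 0 = 0) (hP1 : P 1 = 1)
    (hPrec : ∀ n, 1 ≤ n → n ≤ l →
      C (a n) * P (n + 1) + C (b n) * P n + P (n - 1) = X * P n) :
    ∀ n, n ≤ l → (P n).natDegree ≤ n ∧ (P (n + 1)).natDegree ≤ n := by
  intro n
  induction n with
  | zero => intro _; simp [hP0, hP1]
  | succ n ih =>
    intro hn
    obtain ⟨h1, h2⟩ := ih (by omega)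
    refine ⟨by omega, ?_⟩
    have h := hPrec (n + 1) (by omega) hn
    have hne := ha (n + 1) (by omega) hn
    simp only [Nat.add_sub_cancel] at h
    have e : C (a (n + 1)) * P (n + 1 + 1) = X * P (n + 1) - C (b (n + 1)) * P (n + 1) - P n := by
      rw [← h]; ring
    rw [← natDegree_C_mul hne, e]
    refine (natDegree_sub_le_of_le (natDegree_sub_le_of_le (m := n + 1) (n := n + 1)
      ?_ ?_) (n := n + 1) ?_).trans (by simp)
    · exact natDegree_mul_le.trans (by rw [natDegree_X]; omega)
    · exact (natDegree_C_mul_le _ _).trans (by omega)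
    · omega

/-- If two systems of coefficients with all `a n ≠ 0`, `ã n ≠ 0` have the same Weyl
coefficients `M 1, …, M (2l)`, then `Q (l+1) * P̃ (l+1) - P (l+1) * Q̃ (l+1) = 0`, i.e. the
two Weyl functions `-Q (l+1)/P (l+1)` and `-Q̃ (l+1)/P̃ (l+1)` coincide: the Weyl
coefficients uniquely specify the Weyl function. -/
theorem weyl_coefficients_determine_weyl_function (l : ℕ) (hl : 1 ≤ l)
    (a b a' b' : ℕ → ℂ)
    (ha : ∀ n, 1 ≤ n → n ≤ l → a n ≠ 0)
    (ha' : ∀ n, 1 ≤ n → n ≤ l → a' n ≠ 0)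
    (P Q P' Q' : ℕ → Polynomial ℂ)
    (hP0 : P 0 = 0) (hP1 : P 1 = 1) (hQ0 : Q 0 = 1) (hQ1 : Q 1 = 0)
    (hP'0 : P' 0 = 0) (hP'1 : P' 1 = 1) (hQ'0 : Q' 0 = 1) (hQ'1 : Q' 1 = 0)
    (hPrec : ∀ n, 1 ≤ n → n ≤ l →
      C (a n) * P (n + 1) + C (b n) * P n + P (n - 1) = X * P n)
    (hQrec : ∀ n, 1 ≤ n → n ≤ l →
      C (a n) * Q (n + 1) + C (b n) * Q n + Q (n - 1) = X * Q n)
    (hP'rec : ∀ n, 1 ≤ n → n ≤ l →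
      C (a' n) * P' (n + 1) + C (b' n) * P' n + P' (n - 1) = X * P' n)
    (hQ'rec : ∀ n, 1 ≤ n → n ≤ l →
      C (a' n) * Q' (n + 1) + C (b' n) * Q' n + Q' (n - 1) = X * Q' n)
    (M : ℕ → ℂ)
    (hM : (X ^ (2 * l) * Q (l + 1) +
        P (l + 1) * ∑ k ∈ Finset.Icc 1 (2 * l), C (M k) * X ^ (2 * l - k)).degree
        ≤ ((l - 1 : ℕ) : WithBot ℕ))
    (hM' : (X ^ (2 * l) * Q' (l + 1) +
        P' (l + 1) * ∑ k ∈ Finset.Icc 1 (2 * l), C (M k) * X ^ (2 * l - k)).degree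
        ≤ ((l - 1 : ℕ) : WithBot ℕ)) :
    Q (l + 1) * P' (l + 1) - P (l + 1) * Q' (l + 1) = 0 := by
  have dP := (weyl_natDegree_aux l a b ha P hP0 hP1 hPrec l le_rfl).2
  have dP' := (weyl_natDegree_aux l a' b' ha' P' hP'0 hP'1 hP'rec l le_rfl).2
  have dR := natDegree_le_of_degree_le hM
  have dR' := natDegree_le_of_degree_le hM'
  set S := ∑ k ∈ Finset.Icc 1 (2 * l), C (M k) * X ^ (2 * l - k)
  set R := X ^ (2 * l) * Q (l + 1) + P (l + 1) * S with hR
  set R' := X ^ (2 * l) * Q' (l + 1) + P' (l + 1) * S with hR'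
  have key : (Q (l + 1) * P' (l + 1) - P (l + 1) * Q' (l + 1)) * X ^ (2 * l)
      = R * P' (l + 1) - R' * P (l + 1) := by
    rw [hR, hR']; ring
  have hd : (R * P' (l + 1) - R' * P (l + 1)).natDegree ≤ 2 * l - 1 := by
    refine (natDegree_sub_le_of_le (m := 2 * l - 1) (n := 2 * l - 1) ?_ ?_).trans (by simp)
    · exact natDegree_mul_le.trans (by omega)
    · exact natDegree_mul_le.trans (by omega)
  by_contra hne
  rw [← key, natDegree_mul_X_pow _ hne] at hd
  omega
end

section
/- (Necessity part of Theorem on Weyl coefficients.) If M_1,…,M_{2l} are the Weyl coefficients of a system with a_n ≠ 0 for n = 1,…,l−1 and a_l = 1, then M_1 = 1 and the Hankel determinants satisfy Δ_n := det[M_{i+j−1}]_{i,j=1}^{n+1} ≠ 0 for every n = 1,…,l−1. -/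
open Polynomial

lemma wc_step (f g : Polynomial ℂ) (b c : ℂ) (d : ℕ) (hf : f.natDegree ≤ d)
    (hg : g.natDegree ≤ d) :
    (X * f - C b * f - C c * g).natDegree ≤ d + 1 ∧
      (X * f - C b * f - C c * g).coeff (d + 1) = f.coeff d := by
  constructor
  · refine (natDegree_sub_le _ _).trans (max_le ((natDegree_sub_le _ _).trans (max_le ?_ ?_)) ?_)
    · have := natDegree_mul_le (p := (X : Polynomial ℂ)) (q := f)
      rw [natDegree_X] at this
      omega
    · exact (natDegree_C_mul_le b f).trans (by omega)
    · exact (natDegree_C_mul_le c g).trans (by omega)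
  · rw [coeff_sub, coeff_sub, coeff_X_mul, coeff_C_mul, coeff_C_mul,
      coeff_eq_zero_of_natDegree_lt (show f.natDegree < d + 1 by omega),
      coeff_eq_zero_of_natDegree_lt (show g.natDegree < d + 1 by omega)]
    ring

/-- Necessity part of the theorem on Weyl coefficients: if `M 1, …, M (2l)` are the Weyl
coefficients of a system with `a n ≠ 0` for `n = 1,…,l-1` and `a l = 1`, then `M 1 = 1` and
the Hankel determinants `Δ_n = det [M (i+j-1)]_{i,j=1}^{n+1}` are nonzero for `n = 1,…,l-1`. -/
theorem weyl_coefficients_necessity (l : ℕ) (hl : 1 ≤ l) (a b : ℕ → ℂ)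
    (ha : ∀ n, 1 ≤ n → n ≤ l - 1 → a n ≠ 0) (hal : a l = 1)
    (P Q : ℕ → Polynomial ℂ)
    (hP0 : P 0 = 0) (hP1 : P 1 = 1) (hQ0 : Q 0 = 1) (hQ1 : Q 1 = 0)
    (hPrec : ∀ n, 1 ≤ n → n ≤ l →
      C (a n) * P (n + 1) + C (b n) * P n + P (n - 1) = X * P n)
    (hQrec : ∀ n, 1 ≤ n → n ≤ l →
      C (a n) * Q (n + 1) + C (b n) * Q n + Q (n - 1) = X * Q n)
    (M : ℕ → ℂ)
    (hM : (X ^ (2 * l) * Q (l + 1) +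
        P (l + 1) * ∑ k ∈ Finset.Icc 1 (2 * l), C (M k) * X ^ (2 * l - k)).degree
        ≤ ((l - 1 : ℕ) : WithBot ℕ)) :
    M 1 = 1 ∧
    ∀ n, 1 ≤ n → n ≤ l - 1 →
      Matrix.det (Matrix.of fun i j : Fin (n + 1) => M ((i : ℕ) + (j : ℕ) + 1)) ≠ 0 := by
  have ha' : ∀ n, 1 ≤ n → n ≤ l → a n ≠ 0 := by
    intro n h1 h2
    rcases Nat.lt_or_ge n l with h | h
    · exact ha n h1 (by omega)
    · have : n = l := by omega
      rw [this, hal]; exact one_ne_zero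
  have key : ∀ n, n ≤ l → (P n).natDegree ≤ n - 1 ∧ (P (n+1)).natDegree ≤ n ∧
      ∃ e : ℂ, e ≠ 0 ∧ (P (n+1)).coeff n = e ∧ Q n * P (n+1) - Q (n+1) * P n = C e := by
    intro n
    induction n with
    | zero =>
      intro _
      refine ⟨by simp [hP0], by simp [hP1], 1, one_ne_zero, by simp [hP1], ?_⟩
      simp [hP0, hP1, hQ0, hQ1]
    | succ n ih =>
      intro hn
      obtain ⟨h0, h1, e, he, hc, hW⟩ := ih (by omega)
      have hane := ha' (n+1) (by omega) hn
      have hp := hPrec (n+1) (by omega) hn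
      have hq := hQrec (n+1) (by omega) hn
      simp only [Nat.add_sub_cancel] at hp hq
      have hinv : C (a (n+1))⁻¹ * C (a (n+1)) = (1 : Polynomial ℂ) := by
        rw [← C_mul, inv_mul_cancel₀ hane, C_1]
      have hp2 : P (n+1+1) = C (a (n+1))⁻¹ *
          (X * P (n+1) - C (b (n+1)) * P (n+1) - C 1 * P n) := by
        rw [C_1]
        linear_combination C (a (n+1))⁻¹ * hp - P (n+1+1) * hinv
      obtain ⟨s1, s2⟩ := wc_step (P (n+1)) (P n) (b (n+1)) 1 n h1 (by omega)
      refine ⟨by simpa using h1, ?_, (a (n+1))⁻¹ * e, mul_ne_zero (inv_ne_zero hane) he, ?_, ?_⟩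
      · rw [hp2]; exact (natDegree_C_mul_le _ _).trans s1
      · rw [hp2, coeff_C_mul, s2, hc]
      · rw [C_mul, ← hW]
        linear_combination (-(Q (n+1) * P (n+1+1) - Q (n+1+1) * P (n+1))) * hinv +
          C (a (n+1))⁻¹ * (Q (n+1) * hp - P (n+1) * hq)
  set S : Polynomial ℂ := ∑ k ∈ Finset.Icc 1 (2 * l), C (M k) * X ^ (2 * l - k) with hS
  have hSc : ∀ k, k < 2 * l → S.coeff (2 * l - 1 - k) = M (k + 1) := by
    intro k hk
    rw [hS, finsetSum_coeff, Finset.sum_eq_single (k+1)]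
    · rw [coeff_C_mul, coeff_X_pow, if_pos (by omega), mul_one]
    · intro j hj hne
      rw [Finset.mem_Icc] at hj
      rw [coeff_C_mul, coeff_X_pow, if_neg (by omega), mul_zero]
    · intro h
      exact absurd (Finset.mem_Icc.2 ⟨by omega, by omega⟩) h
  set W : ℕ → Polynomial ℂ := fun n => X ^ (2 * l) * Q n + P n * S with hWdef
  have hWrec : ∀ n, 1 ≤ n → n ≤ l →
      W (n - 1) = X * W n - C (b n) * W n - C (a n) * W (n + 1) := by
    intro n h1 h2
    simp only [hWdef]
    linear_combination X ^ (2 * l) * hQrec n h1 h2 + S * hPrec n h1 h2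
  have hWl1 : (W (l+1)).natDegree ≤ l - 1 := natDegree_le_of_degree_le hM
  have hWl : (W l).natDegree ≤ l ∧ (W l).coeff l = 1 := by
    obtain ⟨h0, h1, e, he, hc, hcas⟩ := key l le_rfl
    have hid : W l * P (l+1) = W (l+1) * P l + C e * X ^ (2 * l) := by
      simp only [hWdef]
      linear_combination X ^ (2 * l) * hcas
    have hsm : (W (l+1) * P l).natDegree < 2 * l := by
      have := natDegree_mul_le (p := W (l+1)) (q := P l)
      omega
    have hco : (W l * P (l+1)).coeff (2 * l) = e := by
      rw [hid, coeff_add, coeff_eq_zero_of_natDegree_lt hsm, coeff_C_mul, coeff_X_pow_self]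
      simp
    have hdeg : (W l * P (l+1)).natDegree ≤ 2 * l := by
      rw [hid]
      exact natDegree_add_le_of_degree_le hsm.le (natDegree_C_mul_X_pow_le _ _)
    have hPd : (P (l+1)).natDegree = l :=
      natDegree_eq_of_le_of_coeff_ne_zero h1 (by rw [hc]; exact he)
    have hP0 : P (l+1) ≠ 0 := by
      intro h; rw [h, coeff_zero] at hc; exact he hc.symm
    have hW0 : W l ≠ 0 := by
      intro h; rw [h, zero_mul, coeff_zero] at hco; exact he hco.symm
    have hWd : (W l).natDegree ≤ l := by
      rw [natDegree_mul hW0 hP0] at hdeg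
      omega
    refine ⟨hWd, ?_⟩
    rw [two_mul, coeff_mul_add_eq_of_natDegree_le hWd h1, hc] at hco
    exact mul_right_cancel₀ he (by rw [hco, one_mul])
  have hWm : ∀ k, k < l → (W (l - k + 1)).natDegree ≤ l + k ∧
      (W (l - k)).natDegree ≤ l + k ∧ (W (l - k)).coeff (l + k) = 1 := by
    intro k
    induction k with
    | zero => intro _; exact ⟨hWl1.trans (by omega), hWl.1, hWl.2⟩
    | succ k ih =>
      intro hk
      obtain ⟨i1, i2, i3⟩ := ih (by omega)
      obtain ⟨s1, s2⟩ := wc_step _ _ (b (l-k)) (a (l-k)) _ i2 i1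
      rw [← hWrec (l-k) (by omega) (by omega)] at s1 s2
      have e1 : l - (k+1) = l - k - 1 := by omega
      have e2 : l - (k+1) + 1 = l - k := by omega
      rw [e2, e1]
      exact ⟨i2.trans (by omega), s1, s2.trans i3⟩
  have hWn : ∀ m, m < l → (W (m+1)).natDegree ≤ 2 * l - 1 - m ∧
      (W (m+1)).coeff (2 * l - 1 - m) = 1 := by
    intro m hm
    have := hWm (l - (m+1)) (by omega)
    rw [show l - (l - (m+1)) = m + 1 by omega,
      show l + (l - (m+1)) = 2 * l - 1 - m by omega] at this
    exact this.2
  constructor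
  · have h := (hWn 0 (by omega)).2
    have hW1 : W 1 = S := by simp [hWdef, hQ1, hP1]
    rw [zero_add, hW1, hSc 0 (by omega)] at h
    exact h
  · intro n hn1 hn hdet
    obtain ⟨v, hv, hmv⟩ := Matrix.exists_mulVec_eq_zero_iff.2 hdet
    set f : Polynomial ℂ := ∑ j : Fin (n+1), C (v j) * X ^ (j : ℕ) with hf
    have hfc : ∀ j : Fin (n+1), f.coeff j = v j := by
      intro j
      rw [hf, finsetSum_coeff, Finset.sum_eq_single j]
      · simp
      · intro i _ hij
        rw [coeff_C_mul, coeff_X_pow, if_neg, mul_zero]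
        intro h; exact hij (Fin.ext h.symm)
      · simp
    have hf0 : f ≠ 0 := by
      intro h
      apply hv
      ext j
      rw [← hfc j, h]; simp
    have hfd : f.natDegree ≤ n := by
      apply natDegree_sum_le_of_forall_le
      intro j _
      exact (natDegree_C_mul_X_pow_le _ _).trans (by omega)
    have hL : ∀ i, i ≤ n → (X ^ i * (f * S)).coeff (2 * l - 1) = 0 := by
      intro i hi
      have h := congrFun hmv ⟨i, by omega⟩
      simp only [Matrix.mulVec, dotProduct, Matrix.of_apply, Pi.zero_apply] at h
      rw [← h, hf, Finset.sum_mul, Finset.mul_sum, finsetSum_coeff]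
      apply Finset.sum_congr rfl
      intro j _
      have hj := j.2
      rw [show X ^ i * (C (v j) * X ^ (j:ℕ) * S) = C (v j) * (S * X ^ (i + (j:ℕ))) by ring,
        coeff_C_mul, coeff_mul_X_pow', if_pos (by omega), hSc _ (by omega), mul_comm]
    set m := f.natDegree with hm
    obtain ⟨w1, w2⟩ := hWn m (by omega)
    have hPd := (key m (by omega)).2.1
    have z : (P (m+1) * (f * S)).coeff (2 * l - 1) = 0 := by
      rw [(P (m+1)).as_sum_range_C_mul_X_pow, Finset.sum_mul, finsetSum_coeff]
      apply Finset.sum_eq_zero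
      intro i hi
      rw [Finset.mem_range] at hi
      rw [mul_assoc, coeff_C_mul, hL i (by omega), mul_zero]
    have e : P (m+1) * (f * S) = f * W (m+1) - f * Q (m+1) * X ^ (2 * l) := by
      simp only [hWdef]; ring
    rw [e, coeff_sub, coeff_mul_X_pow', if_neg (by omega), sub_zero,
      show 2 * l - 1 = m + (2 * l - 1 - m) by omega,
      coeff_mul_add_eq_of_natDegree_le hm.ge w1, w2, mul_one] at z
    exact hf0 (leadingCoeff_eq_zero.1 z)
end

section
/- (Sufficiency part of Theorem on Weyl coefficients.) Let M_1,…,M_{2l} be complex numbers with M_1 = 1 such that the Hankel determinants Δ_n := det[M_{i+j−1}]_{i,j=1}^{n+1} are nonzero for all n = 1,…,l−1. Then there exist complex numbers a_1,…,a_l and b_1,…,b_l with a_n ≠ 0 for n = 1,…,l−1 and a_l = 1 such that M_1,…,M_{2l} are the Weyl coefficients of the corresponding system. -/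
open Polynomial

noncomputable def wR (F : Polynomial ℂ) (l : ℕ) (p : ℂ[X] × ℂ[X]) : ℂ[X] :=
  X ^ (2 * l) * p.2 + p.1 * F

noncomputable def wb (F : ℂ[X]) (l n : ℕ) (p q : ℂ[X] × ℂ[X]) : ℂ :=
  (X * wR F l q - wR F l p).coeff (2 * l - n)

noncomputable def wU (F : ℂ[X]) (l n : ℕ) (p q : ℂ[X] × ℂ[X]) : ℂ[X] × ℂ[X] :=
  (X * q.1 - C (wb F l n p q) * q.1 - p.1, X * q.2 - C (wb F l n p q) * q.2 - p.2)

noncomputable def wa (F : ℂ[X]) (l n : ℕ) (p q : ℂ[X] × ℂ[X]) : ℂ :=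
  if n = l then 1 else (wR F l (wU F l n p q)).coeff (2 * l - n - 1)

noncomputable def wnext (F : ℂ[X]) (l n : ℕ) (p q : ℂ[X] × ℂ[X]) : ℂ[X] × ℂ[X] :=
  (C (wa F l n p q)⁻¹ * (wU F l n p q).1, C (wa F l n p q)⁻¹ * (wU F l n p q).2)

noncomputable def wst (F : ℂ[X]) (l : ℕ) : ℕ → (ℂ[X] × ℂ[X]) × (ℂ[X] × ℂ[X])
  | 0 => ((0, 1), (1, 0))
  | k + 1 => ((wst F l k).2, wnext F l (k + 1) (wst F l k).1 (wst F l k).2)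

lemma wR_U (F : ℂ[X]) (l n : ℕ) (p q : ℂ[X] × ℂ[X]) :
    wR F l (wU F l n p q) = X * wR F l q - C (wb F l n p q) * wR F l q - wR F l p := by
  simp only [wR, wU]; ring

lemma wR_next (F : ℂ[X]) (l n : ℕ) (p q : ℂ[X] × ℂ[X]) :
    wR F l (wnext F l n p q) = C (wa F l n p q)⁻¹ * wR F l (wU F l n p q) := by
  simp only [wR, wnext]; ring

/-- the invariant at index `n` (pairs `p` at `n-1`, `q` at `n`) -/
def WInv (F : ℂ[X]) (l n : ℕ) (p q : ℂ[X] × ℂ[X]) : Prop :=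
  (∀ j, 2 * l < j + n → (wR F l q).coeff j = 0) ∧ (∀ j, j + n = 2 * l → (wR F l q).coeff j = 1) ∧
  (∀ j, 2 * l + 1 < j + n → (wR F l p).coeff j = 0) ∧
  (∀ j, j + n = 2 * l + 1 → (wR F l p).coeff j = 1) ∧
  (∀ j, n ≤ j → q.1.coeff j = 0) ∧ (∀ j, j + 1 = n → q.1.coeff j ≠ 0) ∧
  (∀ j, n ≤ j + 1 → p.1.coeff j = 0)

lemma wU_low {F : ℂ[X]} {l n : ℕ} {p q : ℂ[X] × ℂ[X]} (hn : 1 ≤ n) (hnl : n ≤ l)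
    (h : WInv F l n p q) (j : ℕ) (hj : 2 * l ≤ j + n) :
    (wR F l (wU F l n p q)).coeff j = 0 := by
  obtain ⟨h1, h2, h3, h4, -⟩ := h
  rw [wR_U]
  obtain ⟨i, rfl⟩ : ∃ i, j = i + 1 := ⟨j - 1, by omega⟩
  rcases Nat.lt_or_ge (2 * l) (i + 1 + n) with hlt | hge
  · simp only [coeff_sub, coeff_X_mul, coeff_C_mul, h1 _ hlt]
    rcases Nat.lt_or_ge (2 * l) (i + n) with h' | h'
    · rw [h1 _ h', h3 _ (by omega)]; simp
    · rw [h2 _ (by omega), h4 _ (by omega)]; simp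
  · have e : 2 * l - n = i + 1 := by omega
    simp only [coeff_sub, coeff_C_mul, h2 (i + 1) (by omega), wb, e]
    ring

lemma wU_top {F : ℂ[X]} {l n : ℕ} {p q : ℂ[X] × ℂ[X]} (hn : 1 ≤ n)
    (h : WInv F l n p q) : (wU F l n p q).1.coeff n ≠ 0 ∧
      ∀ j, n + 1 ≤ j → (wU F l n p q).1.coeff j = 0 := by
  obtain ⟨-, -, -, -, h5, h6, h7⟩ := h
  constructor
  · obtain ⟨i, rfl⟩ : ∃ i, n = i + 1 := ⟨n - 1, by omega⟩
    simp only [wU, coeff_sub, coeff_X_mul, coeff_C_mul, h5 (i + 1) le_rfl, h7 (i + 1) (by omega)]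
    simpa using h6 i rfl
  · intro j hj
    obtain ⟨i, rfl⟩ : ∃ i, j = i + 1 := ⟨j - 1, by omega⟩
    simp only [wU, coeff_sub, coeff_X_mul, coeff_C_mul, h5 (i + 1) (by omega),
      h7 (i + 1) (by omega), h5 i (by omega)]
    simp

lemma wF_coeff (M : ℕ → ℂ) (l j : ℕ) :
    (∑ k ∈ Finset.Icc 1 (2 * l), C (M k) * X ^ (2 * l - k) : ℂ[X]).coeff j =
      if j < 2 * l then M (2 * l - j) else 0 := by
  simp only [finsetSum_coeff, coeff_C_mul, coeff_X_pow]
  split_ifs with hj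
  · rw [Finset.sum_eq_single (2 * l - j)]
    · rw [if_pos (by omega), mul_one]
    · intro b hb hne
      rw [Finset.mem_Icc] at hb
      rw [if_neg (by omega), mul_zero]
    · intro hh; exact absurd (Finset.mem_Icc.2 ⟨by omega, by omega⟩) hh
  · apply Finset.sum_eq_zero
    intro b hb
    rw [Finset.mem_Icc] at hb
    rw [if_neg (by omega), mul_zero]

lemma wa_ne {M : ℕ → ℂ} {l n : ℕ} {p q : ℂ[X] × ℂ[X]} {F : ℂ[X]}
    (hF : ∀ j, F.coeff j = if j < 2 * l then M (2 * l - j) else 0) (hn : 1 ≤ n) (hnl : n ≤ l)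
    (hΔ : n ≤ l - 1 →
      Matrix.det (Matrix.of fun i j : Fin (n + 1) => M ((i : ℕ) + (j : ℕ) + 1)) ≠ 0)
    (h : WInv F l n p q) : wa F l n p q ≠ 0 := by
  unfold wa
  split_ifs with hl
  · exact one_ne_zero
  intro h0
  obtain ⟨t1, t2⟩ := wU_top hn h
  have low := wU_low hn hnl h
  set U := wU F l n p q with hU
  apply hΔ (by omega)
  rw [← Matrix.exists_mulVec_eq_zero_iff]
  refine ⟨fun j => U.1.coeff j, fun hv => t1 ?_, ?_⟩
  · simpa using congrFun hv (Fin.last n)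
  · funext i
    have hi := i.2
    have hz : (wR F l U).coeff (2 * l - 1 - i) = 0 := by
      rcases Nat.lt_or_ge (i : ℕ) n with h' | h'
      · exact low _ (by omega)
      · rw [← h0]; congr 1; omega
    have hUs : U.1 = ∑ j ∈ Finset.range (n + 1), C (U.1.coeff j) * X ^ j := by
      ext m
      simp only [finsetSum_coeff, coeff_C_mul, coeff_X_pow]
      rcases Nat.lt_or_ge m (n + 1) with h' | h'
      · rw [Finset.sum_eq_single m] <;> simp +contextual [h', eq_comm]
      · rw [t2 m h', Finset.sum_eq_zero]
        intro b hb
        rw [Finset.mem_range] at hb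
        rw [if_neg (by omega), mul_zero]
    rw [wR, coeff_add, coeff_X_pow_mul', if_neg (by omega), zero_add, hUs, Finset.sum_mul,
      finsetSum_coeff] at hz
    simp only [Matrix.mulVec, dotProduct, Matrix.of_apply, Pi.zero_apply]
    rw [← hz, Finset.sum_range]
    apply Finset.sum_congr rfl
    intro j _
    have hj := j.2
    rw [mul_assoc, coeff_C_mul, coeff_X_pow_mul', if_pos (by omega), hF, if_pos (by omega), mul_comm]
    congr 2
    omega

lemma wInv_next {F : ℂ[X]} {l n : ℕ} {p q : ℂ[X] × ℂ[X]} (hn : 1 ≤ n) (hnl : n < l)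
    (h : WInv F l n p q) (ha : wa F l n p q ≠ 0) : WInv F l (n + 1) q (wnext F l n p q) := by
  obtain ⟨t1, t2⟩ := wU_top hn h
  have low := wU_low hn hnl.le h
  obtain ⟨h1, h2, h3, h4, h5, h6, h7⟩ := h
  refine ⟨?_, ?_, ?_, ?_, ?_, ?_, ?_⟩
  · intro j hj
    rw [wR_next, coeff_C_mul, low j (by omega), mul_zero]
  · intro j hj
    rw [wR_next, coeff_C_mul]
    have : (wR F l (wU F l n p q)).coeff j = wa F l n p q := by
      rw [wa, if_neg (by omega)]; congr 1; omega
    rw [this, inv_mul_cancel₀ ha]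
  · intro j hj; exact h1 j (by omega)
  · intro j hj; exact h2 j (by omega)
  · intro j hj
    simp only [wnext, coeff_C_mul, t2 j hj, mul_zero]
  · intro j hj
    obtain rfl : j = n := by omega
    simp only [wnext, coeff_C_mul]
    exact mul_ne_zero (inv_ne_zero ha) t1
  · intro j hj; exact h5 j (by omega)


/-- Sufficiency part of the theorem on Weyl coefficients: if `M 1 = 1` and all the Hankel
determinants `Δ_n = det [M (i+j-1)]_{i,j=1}^{n+1}`, `n = 1,…,l-1`, are nonzero, then
`M 1, …, M (2l)` are the Weyl coefficients of some system with `a n ≠ 0` for `n = 1,…,l-1`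
and `a l = 1`. -/
theorem weyl_coefficients_sufficiency (l : ℕ) (hl : 1 ≤ l) (M : ℕ → ℂ) (hM1 : M 1 = 1)
    (hΔ : ∀ n, 1 ≤ n → n ≤ l - 1 →
      Matrix.det (Matrix.of fun i j : Fin (n + 1) => M ((i : ℕ) + (j : ℕ) + 1)) ≠ 0) :
    ∃ a b : ℕ → ℂ, (∀ n, 1 ≤ n → n ≤ l - 1 → a n ≠ 0) ∧ a l = 1 ∧
      ∃ P Q : ℕ → Polynomial ℂ,
        P 0 = 0 ∧ P 1 = 1 ∧ Q 0 = 1 ∧ Q 1 = 0 ∧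
        (∀ n, 1 ≤ n → n ≤ l →
          C (a n) * P (n + 1) + C (b n) * P n + P (n - 1) = X * P n) ∧
        (∀ n, 1 ≤ n → n ≤ l →
          C (a n) * Q (n + 1) + C (b n) * Q n + Q (n - 1) = X * Q n) ∧
        (X ^ (2 * l) * Q (l + 1) +
          P (l + 1) * ∑ k ∈ Finset.Icc 1 (2 * l), C (M k) * X ^ (2 * l - k)).degree
          ≤ ((l - 1 : ℕ) : WithBot ℕ) := by
  set F : ℂ[X] := ∑ k ∈ Finset.Icc 1 (2 * l), C (M k) * X ^ (2 * l - k) with hFd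
  have hF : ∀ j, F.coeff j = if j < 2 * l then M (2 * l - j) else 0 := wF_coeff M l
  have inv : ∀ k, k < l → WInv F l (k + 1) (wst F l k).1 (wst F l k).2 := by
    intro k
    induction k with
    | zero =>
      intro _
      simp only [wst, WInv, wR, mul_one, zero_mul, add_zero, mul_zero, zero_add, one_mul]
      refine ⟨?_, ?_, ?_, ?_, ?_, ?_, ?_⟩
      · intro j hj; rw [hF, if_neg (by omega)]
      · intro j hj; rw [hF, if_pos (by omega), ← hM1]; congr 1; omega
      · intro j hj; rw [coeff_X_pow, if_neg (by omega)]
      · intro j hj; rw [coeff_X_pow, if_pos (by omega)]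
      · intro j hj; rw [coeff_one, if_neg (by omega)]
      · intro j hj; rw [coeff_one, if_pos (by omega)]; exact one_ne_zero
      · intro j hj; simp
    | succ k ih =>
      intro hk
      have h := ih (by omega)
      exact wInv_next (by omega) hk h (wa_ne hF (by omega) (by omega) (hΔ (k + 1) (by omega)) h)
  have ane : ∀ k, k < l → wa F l (k + 1) (wst F l k).1 (wst F l k).2 ≠ 0 := fun k hk =>
    wa_ne hF (by omega) (by omega) (hΔ (k + 1) (by omega)) (inv k hk)
  refine ⟨fun n => wa F l n (wst F l (n - 1)).1 (wst F l (n - 1)).2,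
    fun n => wb F l n (wst F l (n - 1)).1 (wst F l (n - 1)).2, ?_, ?_,
    fun n => (wst F l n).1.1, fun n => (wst F l n).1.2, rfl, rfl, rfl, rfl, ?_, ?_, ?_⟩
  · intro n h1 h2
    obtain ⟨k, rfl⟩ : ∃ k, n = k + 1 := ⟨n - 1, by omega⟩
    exact ane k (by omega)
  · simp [wa]
  · intro n h1 h2
    obtain ⟨k, rfl⟩ : ∃ k, n = k + 1 := ⟨n - 1, by omega⟩
    simp only [Nat.add_sub_cancel, wst, wnext]
    rw [← mul_assoc, ← C_mul, mul_inv_cancel₀ (ane k (by omega)), C_1]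
    simp only [wU]; ring
  · intro n h1 h2
    obtain ⟨k, rfl⟩ : ∃ k, n = k + 1 := ⟨n - 1, by omega⟩
    simp only [Nat.add_sub_cancel, wst, wnext]
    rw [← mul_assoc, ← C_mul, mul_inv_cancel₀ (ane k (by omega)), C_1]
    simp only [wU]; ring
  · obtain ⟨k, rfl⟩ : ∃ k, l = k + 1 := ⟨l - 1, by omega⟩
    change (wR F (k + 1) (wnext F (k + 1) (k + 1) (wst F (k + 1) k).1 (wst F (k + 1) k).2)).degree ≤ _
    rw [degree_le_iff_coeff_zero]
    intro m hm
    have hm' : k < m := by simpa using hm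
    rw [wR_next, coeff_C_mul, wU_low (by omega) le_rfl (inv k (by omega)) m (by omega), mul_zero]
end

section
/- (Uniqueness part of Theorem on Weyl coefficients.) Suppose two systems of coefficients (a_1,…,a_l, b_1,…,b_l) and (ã_1,…,ã_l, b̃_1,…,b̃_l), with a_n ≠ 0 and ã_n ≠ 0 for n = 1,…,l−1 and a_l = ã_l = 1, have the same Weyl coefficients M_1,…,M_{2l}. Then a_n = ã_n for n = 1,…,l−1 and b_n = b̃_n for n = 1,…,l. -/
open Polynomial

lemma weyl_dC (c : ℂ) (p : Polynomial ℂ) : (C c * p).degree ≤ p.degree := by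
  rw [← smul_eq_C_mul]; exact degree_smul_le c p

lemma weyl_deg (l : ℕ) (a b : ℕ → ℂ) (P : ℕ → Polynomial ℂ)
    (ha : ∀ n, n + 1 ≤ l → a (n + 1) ≠ 0) (h0 : P 0 = 0) (h1 : P 1 = 1)
    (h : ∀ n, n + 1 ≤ l →
      C (a (n + 1)) * P (n + 2) + C (b (n + 1)) * P (n + 1) + P n = X * P (n + 1)) :
    ∀ n, n ≤ l → (P (n + 1)).degree = n ∧ (P n).degree < n := by
  intro n
  induction n with
  | zero => intro _; simp [h0, h1]
  | succ n ih =>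
    intro hn
    obtain ⟨d1, d2⟩ := ih (by omega)
    have hh := h n hn
    have e : C (a (n + 1)) * P (n + 2) = X * P (n + 1) - (C (b (n + 1)) * P (n + 1) + P n) := by
      rw [← hh]; ring
    have dX : (X * P (n + 1)).degree = ((n + 1 : ℕ) : WithBot ℕ) := by
      rw [degree_mul, degree_X, d1]; norm_cast; omega
    have lt1 : (n : WithBot ℕ) < ((n + 1 : ℕ) : WithBot ℕ) := by exact_mod_cast Nat.lt_succ_self n
    have dr : (C (b (n + 1)) * P (n + 1) + P n).degree < ((n + 1 : ℕ) : WithBot ℕ) := by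
      refine lt_of_le_of_lt (degree_add_le _ _) (max_lt ?_ (d2.trans lt1))
      refine lt_of_le_of_lt (weyl_dC _ _) ?_
      rw [d1]; exact lt1
    constructor
    · rw [← degree_C_mul (ha n hn), e, degree_sub_eq_left_of_degree_lt (by rw [dX]; exact dr), dX]
    · rw [d1]; exact lt1

lemma weyl_lead (l : ℕ) (a b : ℕ → ℂ) (P : ℕ → Polynomial ℂ)
    (ha : ∀ n, n + 1 ≤ l → a (n + 1) ≠ 0) (h0 : P 0 = 0) (h1 : P 1 = 1)
    (h : ∀ n, n + 1 ≤ l →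
      C (a (n + 1)) * P (n + 2) + C (b (n + 1)) * P (n + 1) + P n = X * P (n + 1))
    (n : ℕ) (hn : n + 1 ≤ l) :
    a (n + 1) * (P (n + 2)).coeff (n + 1) = (P (n + 1)).coeff n := by
  have hd := weyl_deg l a b P ha h0 h1 h
  have c := congrArg (fun p => p.coeff (n + 1)) (h n hn)
  have z1 : (P (n + 1)).coeff (n + 1) = 0 := coeff_eq_zero_of_degree_lt (hd (n + 1) hn).2
  have z2 : (P n).coeff (n + 1) = 0 := coeff_eq_zero_of_degree_lt
    ((hd n (by omega)).2.trans (by exact_mod_cast Nat.lt_succ_self n))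
  simpa [z1, z2] using c

lemma weyl_wronsk (l : ℕ) (a b : ℕ → ℂ) (P Q : ℕ → Polynomial ℂ)
    (ha : ∀ n, n + 1 ≤ l → a (n + 1) ≠ 0) (h0 : P 0 = 0) (h1 : P 1 = 1)
    (g0 : Q 0 = 1) (g1 : Q 1 = 0)
    (h : ∀ n, n + 1 ≤ l →
      C (a (n + 1)) * P (n + 2) + C (b (n + 1)) * P (n + 1) + P n = X * P (n + 1))
    (g : ∀ n, n + 1 ≤ l →
      C (a (n + 1)) * Q (n + 2) + C (b (n + 1)) * Q (n + 1) + Q n = X * Q (n + 1)) :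
    ∀ n, n ≤ l → ∃ w : ℂ, w ≠ 0 ∧ P (n + 1) * Q n - P n * Q (n + 1) = C w := by
  intro n
  induction n with
  | zero => intro _; exact ⟨1, one_ne_zero, by simp [h0, h1, g0]⟩
  | succ n ih =>
    intro hn
    obtain ⟨w, hw, e⟩ := ih (by omega)
    have hane := ha n hn
    refine ⟨(a (n + 1))⁻¹ * w, mul_ne_zero (inv_ne_zero hane) hw, ?_⟩
    have hC : C (a (n + 1)) ≠ (0 : ℂ[X]) := by simpa using hane
    apply mul_left_cancel₀ hC
    rw [← C_mul, mul_inv_cancel_left₀ hane, ← e]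
    linear_combination Q (n + 1) * h n hn - P (n + 1) * g n hn

/-- Uniqueness part of the theorem on Weyl coefficients: two systems with `a n ≠ 0`,
`ã n ≠ 0` for `n = 1,…,l-1`, `a l = ã l = 1`, having the same Weyl coefficients
`M 1, …, M (2l)`, coincide: `a n = ã n` for `n = 1,…,l-1` and `b n = b̃ n` for `n = 1,…,l`. -/
theorem weyl_coefficients_uniqueness (l : ℕ) (hl : 1 ≤ l)
    (a b a' b' : ℕ → ℂ)
    (ha : ∀ n, 1 ≤ n → n ≤ l - 1 → a n ≠ 0) (hal : a l = 1)
    (ha' : ∀ n, 1 ≤ n → n ≤ l - 1 → a' n ≠ 0) (hal' : a' l = 1)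
    (P Q P' Q' : ℕ → Polynomial ℂ)
    (hP0 : P 0 = 0) (hP1 : P 1 = 1) (hQ0 : Q 0 = 1) (hQ1 : Q 1 = 0)
    (hP'0 : P' 0 = 0) (hP'1 : P' 1 = 1) (hQ'0 : Q' 0 = 1) (hQ'1 : Q' 1 = 0)
    (hPrec : ∀ n, 1 ≤ n → n ≤ l →
      C (a n) * P (n + 1) + C (b n) * P n + P (n - 1) = X * P n)
    (hQrec : ∀ n, 1 ≤ n → n ≤ l →
      C (a n) * Q (n + 1) + C (b n) * Q n + Q (n - 1) = X * Q n)
    (hP'rec : ∀ n, 1 ≤ n → n ≤ l →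
      C (a' n) * P' (n + 1) + C (b' n) * P' n + P' (n - 1) = X * P' n)
    (hQ'rec : ∀ n, 1 ≤ n → n ≤ l →
      C (a' n) * Q' (n + 1) + C (b' n) * Q' n + Q' (n - 1) = X * Q' n)
    (M : ℕ → ℂ)
    (hM : (X ^ (2 * l) * Q (l + 1) +
        P (l + 1) * ∑ k ∈ Finset.Icc 1 (2 * l), C (M k) * X ^ (2 * l - k)).degree
        ≤ ((l - 1 : ℕ) : WithBot ℕ))
    (hM' : (X ^ (2 * l) * Q' (l + 1) +
        P' (l + 1) * ∑ k ∈ Finset.Icc 1 (2 * l), C (M k) * X ^ (2 * l - k)).degree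
        ≤ ((l - 1 : ℕ) : WithBot ℕ)) :
    (∀ n, 1 ≤ n → n ≤ l - 1 → a n = a' n) ∧ (∀ n, 1 ≤ n → n ≤ l → b n = b' n) := by
  have hane : ∀ n, n + 1 ≤ l → a (n + 1) ≠ 0 := by
    intro n hn
    rcases Nat.lt_or_ge (n + 1) l with h | h
    · exact ha _ (by omega) (by omega)
    · rw [show n + 1 = l by omega, hal]; exact one_ne_zero
  have hane' : ∀ n, n + 1 ≤ l → a' (n + 1) ≠ 0 := by
    intro n hn
    rcases Nat.lt_or_ge (n + 1) l with h | h
    · exact ha' _ (by omega) (by omega)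
    · rw [show n + 1 = l by omega, hal']; exact one_ne_zero
  have rP : ∀ n, n + 1 ≤ l →
      C (a (n + 1)) * P (n + 2) + C (b (n + 1)) * P (n + 1) + P n = X * P (n + 1) :=
    fun n hn => hPrec (n + 1) (by omega) hn
  have rQ : ∀ n, n + 1 ≤ l →
      C (a (n + 1)) * Q (n + 2) + C (b (n + 1)) * Q (n + 1) + Q n = X * Q (n + 1) :=
    fun n hn => hQrec (n + 1) (by omega) hn
  have rP' : ∀ n, n + 1 ≤ l →
      C (a' (n + 1)) * P' (n + 2) + C (b' (n + 1)) * P' (n + 1) + P' n = X * P' (n + 1) :=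
    fun n hn => hP'rec (n + 1) (by omega) hn
  have rQ' : ∀ n, n + 1 ≤ l →
      C (a' (n + 1)) * Q' (n + 2) + C (b' (n + 1)) * Q' (n + 1) + Q' n = X * Q' (n + 1) :=
    fun n hn => hQ'rec (n + 1) (by omega) hn
  have dP := weyl_deg l a b P hane hP0 hP1 rP
  have dP' := weyl_deg l a' b' P' hane' hP'0 hP'1 rP'
  have lP := weyl_lead l a b P hane hP0 hP1 rP
  have lP' := weyl_lead l a' b' P' hane' hP'0 hP'1 rP'
  obtain ⟨w, hw, hW⟩ := weyl_wronsk l a b P Q hane hP0 hP1 hQ0 hQ1 rP rQ l le_rfl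
  obtain ⟨w', hw', hW'⟩ := weyl_wronsk l a' b' P' Q' hane' hP'0 hP'1 hQ'0 hQ'1 rP' rQ' l le_rfl
  have cop : IsCoprime (P (l + 1)) (Q (l + 1)) := by
    refine ⟨C w⁻¹ * Q l, - C w⁻¹ * P l, ?_⟩
    have : C w⁻¹ * C w = (1 : ℂ[X]) := by rw [← C_mul, inv_mul_cancel₀ hw, C_1]
    rw [← this, ← hW]; ring
  have Pne : P (l + 1) ≠ 0 := by
    intro h; have := (dP l le_rfl).1; simp [h] at this
  have lcne : ∀ n, n ≤ l → (P (n + 1)).coeff n ≠ 0 := fun n hn =>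
    coeff_ne_zero_of_eq_degree (dP n hn).1
  have cross : Q (l + 1) * P' (l + 1) = Q' (l + 1) * P (l + 1) := by
    generalize (∑ k ∈ Finset.Icc 1 (2 * l), C (M k) * X ^ (2 * l - k) : ℂ[X]) = S at hM hM'
    by_contra hne
    have hne' := sub_ne_zero.2 hne
    have e : X ^ (2 * l) * (Q (l + 1) * P' (l + 1) - Q' (l + 1) * P (l + 1)) =
      P' (l + 1) * (X ^ (2 * l) * Q (l + 1) + P (l + 1) * S) -
      P (l + 1) * (X ^ (2 * l) * Q' (l + 1) + P' (l + 1) * S) := by ring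
    have hlt : ((l : ℕ) : WithBot ℕ) + ((l - 1 : ℕ) : WithBot ℕ) < ((2 * l : ℕ) : WithBot ℕ) := by
      rw [← Nat.cast_add]
      exact_mod_cast (by omega : l + (l - 1) < 2 * l)
    have hd : (X ^ (2 * l) * (Q (l + 1) * P' (l + 1) - Q' (l + 1) * P (l + 1))).degree
        < ((2 * l : ℕ) : WithBot ℕ) := by
      rw [e]
      refine lt_of_le_of_lt (degree_sub_le _ _) (max_lt ?_ ?_)
      · rw [degree_mul, (dP' l le_rfl).1]
        exact lt_of_le_of_lt (by gcongr) hlt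
      · rw [degree_mul, (dP l le_rfl).1]
        exact lt_of_le_of_lt (by gcongr) hlt
    rw [degree_mul, degree_X_pow, degree_eq_natDegree hne', ← Nat.cast_add] at hd
    have := (Nat.cast_lt (α := WithBot ℕ)).1 hd
    omega
  have dvd1 : P (l + 1) ∣ P' (l + 1) :=
    cop.dvd_of_dvd_mul_left ⟨Q' (l + 1), by rw [cross]; ring⟩
  obtain ⟨c, hc, hcP⟩ : ∃ c : ℂ, c ≠ 0 ∧ P' (l + 1) = C c * P (l + 1) := by
    obtain ⟨d, hd⟩ := dvd1
    have dne : d ≠ 0 := by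
      rintro rfl
      have := (dP' l le_rfl).1
      simp [hd] at this
    have h := (dP' l le_rfl).1
    rw [hd, degree_mul, (dP l le_rfl).1, degree_eq_natDegree dne, ← Nat.cast_add] at h
    have h2 : l + d.natDegree = l := by exact_mod_cast h
    have h3 := eq_C_of_natDegree_eq_zero (show d.natDegree = 0 by omega)
    refine ⟨d.coeff 0, ?_, ?_⟩
    · intro h4; rw [h4, C_0] at h3; exact dne h3
    · rw [hd, ← h3, mul_comm]
  have hcQ : Q' (l + 1) = C c * Q (l + 1) := by
    apply mul_right_cancel₀ Pne
    rw [← cross, hcP]; ring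
  have hl1 : l - 1 + 1 = l := by omega
  have hcl : P' l = C c * P l := by
    have key : C w' * P l - C (c * w) * P' l = 0 := by
      have hdv : P (l + 1) ∣ C w' * P l - C (c * w) * P' l := by
        apply cop.dvd_of_dvd_mul_right
        rw [← hW', C_mul, ← hW, hcP, hcQ]
        refine ⟨C c * (Q' l * P l - P' l * Q l) * Q (l + 1), ?_⟩
        ring
      apply eq_zero_of_dvd_of_degree_lt hdv
      rw [(dP l le_rfl).1]
      refine lt_of_le_of_lt (degree_sub_le _ _) (max_lt ?_ ?_)
      · exact lt_of_le_of_lt (weyl_dC _ _) (dP l le_rfl).2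
      · exact lt_of_le_of_lt (weyl_dC _ _) (dP' l le_rfl).2
    have k1 := lP (l - 1) (by omega)
    have k2 := lP' (l - 1) (by omega)
    have i2 : l - 1 + 2 = l + 1 := by omega
    rw [i2, hl1, hal, one_mul] at k1
    rw [i2, hl1, hal', one_mul] at k2
    have k3 := congrArg (fun p => p.coeff (l - 1)) key
    simp only [coeff_sub, coeff_C_mul, coeff_zero] at k3
    rw [← k1, ← k2, hcP, coeff_C_mul] at k3
    have k4 : w' = c * w * c := by
      apply mul_right_cancel₀ (lcne l le_rfl)
      linear_combination k3
    have hC : C (c * w) ≠ (0 : ℂ[X]) := by simpa using ⟨hc, hw⟩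
    apply mul_left_cancel₀ hC
    rw [k4, C_mul] at key
    linear_combination -key
  have step : ∀ n, n + 1 ≤ l → P' (n + 2) = C c * P (n + 2) → P' (n + 1) = C c * P (n + 1) →
      a (n + 1) = a' (n + 1) ∧ b (n + 1) = b' (n + 1) ∧ P' n = C c * P n := by
    intro n hn e2 e1
    have q1 := lP n hn
    have q2 := lP' n hn
    rw [e2, e1, coeff_C_mul, coeff_C_mul, ← q1] at q2
    have hA : a (n + 1) = a' (n + 1) := by
      apply mul_right_cancel₀ (mul_ne_zero hc (lcne (n + 1) hn))
      linear_combination -q2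
    have r1 := rP n hn
    have r2 := rP' n hn
    rw [e2, e1, ← hA] at r2
    have r3 : P' n = C c * P n + C c * (C (b (n + 1)) - C (b' (n + 1))) * P (n + 1) := by
      linear_combination r2 - C c * r1
    have z1 : (P' n).coeff n = 0 := coeff_eq_zero_of_degree_lt (dP' n (by omega)).2
    have z2 : (P n).coeff n = 0 := coeff_eq_zero_of_degree_lt (dP n (by omega)).2
    have r4 := congrArg (fun p => p.coeff n) r3
    simp only [← C_sub, ← C_mul, coeff_add, coeff_C_mul, z1, z2] at r4
    have hB : b (n + 1) = b' (n + 1) := by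
      apply mul_right_cancel₀ (mul_ne_zero hc (lcne n (by omega)))
      linear_combination -r4
    refine ⟨hA, hB, ?_⟩
    rw [r3, hB]; ring
  have all : ∀ k n, n + k = l → P' (n + 1) = C c * P (n + 1) ∧ P' n = C c * P n := by
    intro k
    induction k with
    | zero => intro n hn; obtain rfl : n = l := by omega
              exact ⟨hcP, hcl⟩
    | succ k ih =>
      intro n hn
      obtain ⟨e2, e1⟩ := ih (n + 1) (by omega)
      exact ⟨e1, (step n (by omega) e2 e1).2.2⟩
  have fin : ∀ n, 1 ≤ n → n ≤ l → a n = a' n ∧ b n = b' n := by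
    intro n h1 hn
    obtain ⟨m, rfl⟩ : ∃ m, n = m + 1 := ⟨n - 1, by omega⟩
    obtain ⟨e2, e1⟩ := all (l - (m + 1)) (m + 1) (by omega)
    exact ⟨(step m hn e2 e1).1, (step m hn e2 e1).2.1⟩
  exact ⟨fun n h1 h2 => (fin n h1 (by omega)).1, fun n h1 h2 => (fin n h1 h2).2⟩
end

section
/- (Local solvability and stability by Weyl coefficients.) Let M_1,…,M_{2l} be the Weyl coefficients of a system with a_n ≠ 0 for n = 1,…,l−1 and a_l = 1. Then there exist ε > 0 and C > 0, depending only on a_1,…,a_l and b_1,…,b_l, such that for any complex numbers M̃_2,…,M̃_{2l} with δ := max_{2 ≤ k ≤ 2l} |M_k − M̃_k| ≤ ε, there exist unique complex numbers ã_1,…,ã_l, b̃_1,…,b̃_l with ã_n ≠ 0 for n = 1,…,l−1 and ã_l = 1 whose Weyl coefficients are 1, M̃_2,…,M̃_{2l}; moreover |a_n − ã_n| ≤ Cδ and |b_n − b̃_n| ≤ Cδ for n = 1,…,l. -/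
open Polynomial

/-- `M 1, …, M (2l)` are the Weyl coefficients of the system with coefficients `a`, `b`:
there are polynomial solutions `P`, `Q` of the difference equation with the standard initial
conditions such that `λ^{2l} Q (l+1) + P (l+1) Σ_{k=1}^{2l} M k λ^{2l-k}` has degree
at most `l - 1`. -/
def IsWeylCoeffs (l : ℕ) (a b M : ℕ → ℂ) : Prop :=
  ∃ P Q : ℕ → Polynomial ℂ,
    P 0 = 0 ∧ P 1 = 1 ∧ Q 0 = 1 ∧ Q 1 = 0 ∧
    (∀ n, 1 ≤ n → n ≤ l →
      C (a n) * P (n + 1) + C (b n) * P n + P (n - 1) = X * P n) ∧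
    (∀ n, 1 ≤ n → n ≤ l →
      C (a n) * Q (n + 1) + C (b n) * Q n + Q (n - 1) = X * Q n) ∧
    (X ^ (2 * l) * Q (l + 1) +
      P (l + 1) * ∑ k ∈ Finset.Icc 1 (2 * l), C (M k) * X ^ (2 * l - k)).degree
      ≤ ((l - 1 : ℕ) : WithBot ℕ)


noncomputable def pq : ℕ → (ℕ → ℂ) → (ℕ → ℂ) → ℂ[X] × ℂ[X]
  | 0, _, _ => (1, 0)
  | l+1, α, β =>
    (C (α 0)⁻¹ * (X - C (β 0)) * (pq l (fun n => α (n+1)) (fun n => β (n+1))).1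
        + (pq l (fun n => α (n+1)) (fun n => β (n+1))).2,
      -C (α 0)⁻¹ * (pq l (fun n => α (n+1)) (fun n => β (n+1))).1)

noncomputable def SS (l : ℕ) (μ : ℕ → ℂ) : ℂ[X] :=
  ∑ k ∈ Finset.range (2*l), C (μ k) * X^(2*l-1-k)

def Wy (l : ℕ) (α β μ : ℕ → ℂ) : Prop :=
  (X^(2*l) * (pq l α β).2 + (pq l α β).1 * SS l μ).degree < (l : WithBot ℕ)

noncomputable def gc (μ : ℕ → ℂ) (k : ℕ) : ℂ := PowerSeries.coeff k (PowerSeries.mk μ)⁻¹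

noncomputable def RR (d : ℕ) (μ : ℕ → ℂ) : ℂ[X] :=
  ∑ k ∈ Finset.range (d+1), C (μ k) * X^(d-k)

lemma RR_coeff (d : ℕ) (μ : ℕ → ℂ) (n : ℕ) :
    (RR d μ).coeff n = if n ≤ d then μ (d-n) else 0 := by
  unfold RR
  simp only [finsetSum_coeff, coeff_C_mul, coeff_X_pow]
  split_ifs with h
  · rw [Finset.sum_eq_single (d-n)]
    · rw [if_pos (by omega)]; simp
    · intro k hk hne
      have := Finset.mem_range.1 hk
      rw [if_neg (by omega)]; simp
    · intro hh; exact absurd (Finset.mem_range.2 (by omega)) hh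
  · apply Finset.sum_eq_zero
    intro k hk
    rw [if_neg (by omega)]; simp

lemma SS_succ (l : ℕ) (μ : ℕ → ℂ) : SS (l+1) μ = RR (2*l+1) μ := rfl

lemma SS_coeff (l : ℕ) (μ : ℕ → ℂ) (n : ℕ) :
    (SS l μ).coeff n = if n < 2*l then μ (2*l-1-n) else 0 := by
  rcases l with _ | l
  · simp [SS]
  · rw [SS_succ, RR_coeff]
    by_cases h : n ≤ 2*l+1
    · rw [if_pos h, if_pos (by omega)]; congr 1
    · rw [if_neg h, if_neg (by omega)]

lemma pq_deg (l : ℕ) : ∀ α β : ℕ → ℂ, (∀ n < l, α n ≠ 0) →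
    (pq l α β).1.degree ≤ l ∧ (pq l α β).1.coeff l ≠ 0 ∧ (pq l α β).2.degree < l ∧
    (∀ k, l = k + 1 → (pq l α β).2.coeff k = - (pq l α β).1.coeff l) := by
  induction l with
  | zero => intro α β h; simp [pq, coeff_one]
  | succ l ih =>
    intro α β h
    obtain ⟨h1, h2, h3, h4⟩ := ih (fun n => α (n+1)) (fun n => β (n+1))
      (fun n hn => h _ (by omega))
    have ha := h 0 (by omega)
    simp only [pq]
    generalize pq l (fun n => α (n+1)) (fun n => β (n+1)) = r at *
    have c1 : r.1.coeff (l+1) = 0 := coeff_eq_zero_of_degree_lt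
      (lt_of_le_of_lt h1 (by exact_mod_cast Nat.lt_succ_self l))
    have c2 : r.2.coeff (l+1) = 0 := coeff_eq_zero_of_degree_lt
      (lt_trans h3 (by exact_mod_cast Nat.lt_succ_self l))
    have c3 : (C (α 0)⁻¹ * (X - C (β 0)) * r.1 + r.2).coeff (l+1) = (α 0)⁻¹ * r.1.coeff l := by
      rw [coeff_add, mul_assoc, coeff_C_mul, sub_mul, coeff_sub, coeff_X_mul, coeff_C_mul, c1, c2]
      simp
    refine ⟨?_, ?_, ?_, ?_⟩
    · rw [degree_le_iff_coeff_zero]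
      intro m hm
      have hm : l + 1 < m := by exact_mod_cast hm
      obtain ⟨m, rfl⟩ : ∃ k, m = k+1 := ⟨m-1, by omega⟩
      have e1 : ∀ j, l < j → r.1.coeff j = 0 := fun j hj => coeff_eq_zero_of_degree_lt
        (lt_of_le_of_lt h1 (by exact_mod_cast hj))
      have e2 : ∀ j, l < j → r.2.coeff j = 0 := fun j hj => coeff_eq_zero_of_degree_lt
        (lt_trans h3 (by exact_mod_cast hj))
      rw [coeff_add, mul_assoc, coeff_C_mul, sub_mul, coeff_sub, coeff_X_mul, coeff_C_mul,
        e1 _ (by omega), e1 _ (by omega), e2 _ (by omega)]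
      simp
    · rw [c3]; exact mul_ne_zero (inv_ne_zero ha) h2
    · rw [degree_lt_iff_coeff_zero]
      intro m hm
      have e1 : ∀ j, l < j → r.1.coeff j = 0 := fun j hj => coeff_eq_zero_of_degree_lt
        (lt_of_le_of_lt h1 (by exact_mod_cast hj))
      rw [neg_mul, coeff_neg, coeff_C_mul, e1 _ (by omega)]; simp
    · intro k hk
      obtain rfl : l = k := by omega
      rw [c3, neg_mul, coeff_neg, coeff_C_mul]

lemma gc_zero (μ : ℕ → ℂ) (h : μ 0 = 1) : gc μ 0 = 1 := by
  simp [gc, h]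

lemma gc_conv (μ : ℕ → ℂ) (h : μ 0 = 1) (n : ℕ) :
    ∑ x ∈ Finset.HasAntidiagonal.antidiagonal n, μ x.1 * gc μ x.2 = if n = 0 then 1 else 0 := by
  have : PowerSeries.mk μ * (PowerSeries.mk μ)⁻¹ = 1 :=
    PowerSeries.mul_inv_cancel _ (by simp [h])
  have := congrArg (PowerSeries.coeff n) this
  rw [PowerSeries.coeff_mul, PowerSeries.coeff_one] at this
  simpa [gc] using this

lemma RR_mul (d : ℕ) (μ : ℕ → ℂ) (h : μ 0 = 1) :
    (RR d μ * RR d (gc μ) - X^(2*d)).degree < (d : WithBot ℕ) := by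
  rw [degree_lt_iff_coeff_zero]
  intro m hm
  rw [coeff_sub, coeff_mul, coeff_X_pow, sub_eq_zero]
  simp only [RR_coeff]
  by_cases h2 : m ≤ 2*d
  · have := gc_conv μ h (2*d-m)
    have e : (if m = 2*d then (1:ℂ) else 0) = if 2*d-m = 0 then 1 else 0 := by
      congr 1; simp; omega
    rw [e, ← this]
    symm
    apply Finset.sum_of_injOn (fun x => (d - x.1, d - x.2))
    · rintro ⟨x1, x2⟩ hx ⟨y1, y2⟩ hy hxy
      simp at hx hy hxy ⊢
      omega
    · rintro ⟨x1, x2⟩ hx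
      simp at hx ⊢
      omega
    · rintro ⟨x1, x2⟩ hx hn
      simp at hx hn ⊢
      intro h1 h2'
      exfalso
      exact hn (d-x1) (d-x2) (by omega) (by omega) (by omega)
    · rintro ⟨x1, x2⟩ hx
      simp at hx ⊢
      rw [Nat.sub_sub_self (by omega), Nat.sub_sub_self (by omega)]
  · rw [if_neg (by omega)]
    apply Finset.sum_eq_zero
    rintro ⟨x1, x2⟩ hx
    simp at hx ⊢
    intro h1 h2'
    omega

lemma deg_mul_iff (E W : ℂ[X]) (d n : ℕ) (hW : W.degree = d) :
    (E * W).degree < ((n + d : ℕ) : WithBot ℕ) ↔ E.degree < (n : WithBot ℕ) := by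
  by_cases hE : E = 0
  · subst hE; simp
  · rw [degree_mul, hW, degree_eq_natDegree hE]
    norm_cast; omega

lemma RR_deg (d : ℕ) (μ : ℕ → ℂ) (h : μ 0 = 1) : (RR d μ).degree = d := by
  apply le_antisymm
  · rw [degree_le_iff_coeff_zero]
    intro m hm
    have hm : d < m := by exact_mod_cast hm
    rw [RR_coeff, if_neg (by omega)]
  · apply le_degree_of_ne_zero
    rw [RR_coeff]; simp [h]

lemma deg_add_iff (A B : ℂ[X]) (n : WithBot ℕ) (hB : B.degree < n) :
    (A + B).degree < n ↔ A.degree < n := by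
  constructor
  · intro h
    have : A = (A + B) - B := by ring
    rw [this]; exact lt_of_le_of_lt (degree_sub_le _ _) (max_lt h hB)
  · intro h
    exact lt_of_le_of_lt (degree_add_le _ _) (max_lt h hB)

noncomputable def Rem (l : ℕ) (α β μ : ℕ → ℂ) : ℂ[X] :=
  (pq l (fun n => α (n+1)) (fun n => β (n+1))).1 *
    (X^(2*l) * (X - C (β 0)) - RR (2*l+1) (gc μ)) +
   C (α 0) * (pq l (fun n => α (n+1)) (fun n => β (n+1))).2 * X^(2*l)

lemma Wy_iff_Rem (l : ℕ) (α β μ : ℕ → ℂ) (hα : ∀ n < l+1, α n ≠ 0) (h0 : μ 0 = 1) :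
    Wy (l+1) α β μ ↔ (Rem l α β μ).degree < (l : WithBot ℕ) := by
  have hW := RR_deg (2*l+1) (gc μ) (gc_zero μ h0)
  have hB := RR_mul (2*l+1) μ h0
  obtain ⟨hp, -⟩ := pq_deg (l+1) α β hα
  unfold Wy
  rw [← deg_mul_iff _ _ _ _ hW, ← deg_mul_iff (Rem l α β μ) (X^(2*l+2)) (2*l+2) _ (degree_X_pow _)]
  have ha := hα 0 (by omega)
  set B := RR (2*l+1) μ * RR (2*l+1) (gc μ) - X^(2*(2*l+1)) with hBd
  have hpB : ((pq (l+1) α β).1 * B).degree < ((l + 1 + (2*l+1) : ℕ) : WithBot ℕ) := by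
    rw [degree_mul]
    by_cases hB0 : B = 0
    · rw [hB0, degree_zero, WithBot.add_bot]; exact WithBot.bot_lt_coe _
    by_cases hp0 : (pq (l+1) α β).1 = 0
    · rw [hp0, degree_zero, WithBot.bot_add]; exact WithBot.bot_lt_coe _
    rw [degree_eq_natDegree hB0] at hB ⊢
    rw [degree_eq_natDegree hp0] at hp ⊢
    norm_cast at *
    omega
  have key : (X ^ (2 * (l + 1)) * (pq (l + 1) α β).2 + (pq (l + 1) α β).1 * SS (l + 1) μ) *
      RR (2 * l + 1) (gc μ) = C (α 0)⁻¹ * (Rem l α β μ * X^(2*l+2)) + (pq (l+1) α β).1 * B := by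
    rw [SS_succ, hBd]
    have hcc : C (α 0)⁻¹ * C (α 0) = (1 : ℂ[X]) := by rw [← C_mul, inv_mul_cancel₀ ha, C_1]
    simp only [pq, Rem]
    linear_combination (-(pq l (fun n => α (n+1)) (fun n => β (n+1))).2 * X^(4*l+2)) * hcc
  rw [key, deg_add_iff _ _ _ hpB, degree_C_mul (inv_ne_zero ha)]
  rw [show l + 1 + (2*l+1) = l + (2*l+2) by ring]

lemma Rem_eq (l : ℕ) (α β μ : ℕ → ℂ) (ha : α 0 ≠ 0) (h0 : μ 0 = 1) (hb : β 0 = - gc μ 1) :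
    Rem l α β μ = C (α 0) * (X^(2*l) * (pq l (fun n => α (n+1)) (fun n => β (n+1))).2 +
      (pq l (fun n => α (n+1)) (fun n => β (n+1))).1 * SS l (fun k => - gc μ (k+2) / α 0)) := by
  have : X^(2*l) * (X - C (β 0)) - RR (2*l+1) (gc μ)
      = C (α 0) * SS l (fun k => - gc μ (k+2) / α 0) := by
    ext n
    rw [mul_sub, coeff_sub, coeff_sub, ← pow_succ, mul_comm (X^(2*l)), coeff_C_mul, coeff_C_mul,
      coeff_X_pow, coeff_X_pow, RR_coeff, SS_coeff]
    rcases lt_trichotomy n (2*l) with h | h | h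
    · rw [if_neg (by omega), if_neg (by omega), if_pos (by omega), if_pos h,
        show 2*l+1-n = 2*l-1-n+2 by omega]
      field_simp; ring
    · subst h
      rw [if_neg (by omega), if_pos rfl, if_pos (by omega), if_neg (by omega), hb,
        show 2*l+1-2*l = 1 by omega]
      ring
    · by_cases h' : n = 2*l+1
      · subst h'
        rw [if_pos rfl, if_neg (by omega), if_pos (by omega), if_neg (by omega)]
        simp [gc_zero μ h0]
      · rw [if_neg (by omega), if_neg (by omega), if_neg (by omega), if_neg (by omega)]
        simp
  rw [Rem, this]; ring

lemma Wy_back (l : ℕ) (α β μ : ℕ → ℂ) (hα : ∀ n < l+1, α n ≠ 0) (h0 : μ 0 = 1)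
    (hb : β 0 = - gc μ 1) (h : Wy l (fun n => α (n+1)) (fun n => β (n+1))
      (fun k => - gc μ (k+2) / α 0)) : Wy (l+1) α β μ := by
  rw [Wy_iff_Rem l α β μ hα h0, Rem_eq l α β μ (hα 0 (by omega)) h0 hb,
    degree_C_mul (hα 0 (by omega))]
  exact h

lemma Wy_fst (l : ℕ) (α β μ : ℕ → ℂ) (hα : ∀ n < l+1, α n ≠ 0) (h : Wy (l+1) α β μ) :
    μ 0 = 1 := by
  obtain ⟨hp, hp1, hq, hq1⟩ := pq_deg (l+1) α β hα
  have h2 := hq1 l rfl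
  have h3 : (X ^ (2 * (l + 1)) * (pq (l + 1) α β).2 +
      (pq (l + 1) α β).1 * SS (l + 1) μ).coeff (l + (2*(l+1))) = 0 :=
    coeff_eq_zero_of_degree_lt (lt_of_lt_of_le h (by norm_cast; omega))
  rw [coeff_add, mul_comm, coeff_mul_X_pow, h2,
    show l + 2*(l+1) = (l+1) + (2*l+1) by ring,
    coeff_mul_add_eq_of_natDegree_le (natDegree_le_of_degree_le hp)
      (natDegree_le_of_degree_le (n := 2*l+1) ?_), SS_coeff, if_pos (by omega),
      show 2*(l+1)-1-(2*l+1) = 0 by omega] at h3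
  · have : (pq (l+1) α β).1.coeff (l+1) * (μ 0 - 1) = 0 := by linear_combination h3
    rcases mul_eq_zero.1 this with h | h
    · exact absurd h hp1
    · exact sub_eq_zero.1 h
  · rw [degree_le_iff_coeff_zero]
    intro m hm
    have hm : 2*l+1 < m := by exact_mod_cast hm
    rw [SS_coeff, if_neg (by omega)]

lemma Wy_fwd (l : ℕ) (α β μ : ℕ → ℂ) (hα : ∀ n < l+1, α n ≠ 0) (h : Wy (l+1) α β μ) :
    μ 0 = 1 ∧ β 0 = - gc μ 1 ∧ Wy l (fun n => α (n+1)) (fun n => β (n+1))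
      (fun k => - gc μ (k+2) / α 0) := by
  have h0 := Wy_fst l α β μ hα h
  rw [Wy_iff_Rem l α β μ hα h0] at h
  have hb : β 0 = - gc μ 1 := by
    obtain ⟨hp, hp1, hq, -⟩ := pq_deg l (fun n => α (n+1)) (fun n => β (n+1))
      (fun n hn => hα _ (by omega))
    have h3 : (Rem l α β μ).coeff (l + 2*l) = 0 :=
      coeff_eq_zero_of_degree_lt (lt_of_lt_of_le h (by norm_cast; omega))
    have hc : ∀ n, (X^(2*l) * (X - C (β 0)) - RR (2*l+1) (gc μ)).coeff n =
        (if n = 2*l+1 then 1 else 0) - β 0 * (if n = 2*l then 1 else 0)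
          - if n ≤ 2*l+1 then gc μ (2*l+1-n) else 0 := by
      intro n
      rw [mul_sub, coeff_sub, coeff_sub, ← pow_succ, mul_comm (X^(2*l)), coeff_C_mul,
        coeff_X_pow, coeff_X_pow, RR_coeff]
    rw [Rem, coeff_add, coeff_mul_X_pow, coeff_C_mul, coeff_eq_zero_of_degree_lt hq,
      coeff_mul_add_eq_of_natDegree_le (natDegree_le_of_degree_le hp)
      (natDegree_le_of_degree_le (n := 2*l) ?_), hc, if_neg (by omega), if_pos rfl,
      if_pos (by omega), show 2*l+1-2*l = 1 by omega] at h3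
    · have h4 : (pq l (fun n => α (n+1)) (fun n => β (n+1))).1.coeff l * (β 0 + gc μ 1) = 0 := by
        linear_combination -h3
      rcases mul_eq_zero.1 h4 with h | h
      · exact absurd h hp1
      · linear_combination h
    · rw [degree_le_iff_coeff_zero]
      intro m hm
      have hm : 2*l < m := by exact_mod_cast hm
      rw [hc]
      by_cases h' : m = 2*l+1
      · subst h'; simp [gc_zero μ h0]
      · rw [if_neg (by omega), if_neg (by omega), if_neg (by omega)]; simp
  refine ⟨h0, hb, ?_⟩
  rw [Rem_eq l α β μ (hα 0 (by omega)) h0 hb, degree_C_mul (hα 0 (by omega))] at h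
  exact h

def Near (μ : ℕ → ℂ) (N : ℕ) (ν : ℕ → ℂ) (δ : ℝ) : Prop :=
  ν 0 = 1 ∧ 0 ≤ δ ∧ ∀ k, 1 ≤ k → k < N → ‖μ k - ν k‖ ≤ δ

def Lip (μ : ℕ → ℂ) (N : ℕ) (g : (ℕ → ℂ) → ℂ) : Prop :=
  ∃ ε > (0:ℝ), ∃ K > (0:ℝ), ∀ ν δ, Near μ N ν δ → δ ≤ ε → ‖g μ - g ν‖ ≤ K * δ

lemma Lip.const (μ N) (c : ℂ) : Lip μ N (fun _ => c) :=
  ⟨1, one_pos, 1, one_pos, fun ν δ h _ => by simpa using h.2.1⟩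

lemma Lip.coord (μ : ℕ → ℂ) (N k : ℕ) (h0 : μ 0 = 1) (hk : k < N) : Lip μ N (fun ν => ν k) := by
  refine ⟨1, one_pos, 1, one_pos, fun ν δ h _ => ?_⟩
  rcases Nat.eq_zero_or_pos k with rfl | hk'
  · simpa [h0, h.1] using h.2.1
  · simpa using h.2.2 k hk' hk

lemma Lip.add {μ N f g} (hf : Lip μ N f) (hg : Lip μ N g) : Lip μ N (fun ν => f ν + g ν) := by
  obtain ⟨e1, he1, K1, hK1, h1⟩ := hf
  obtain ⟨e2, he2, K2, hK2, h2⟩ := hg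
  refine ⟨min e1 e2, lt_min he1 he2, K1 + K2, by positivity, fun ν δ h hδ => ?_⟩
  have a1 := h1 ν δ h (hδ.trans (min_le_left _ _))
  have a2 := h2 ν δ h (hδ.trans (min_le_right _ _))
  calc _ = ‖(f μ - f ν) + (g μ - g ν)‖ := by congr 1; ring
    _ ≤ _ := norm_add_le _ _
    _ ≤ _ := by linarith

lemma Lip.mul {μ N f g} (hf : Lip μ N f) (hg : Lip μ N g) : Lip μ N (fun ν => f ν * g ν) := by
  obtain ⟨e1, he1, K1, hK1, h1⟩ := hf
  obtain ⟨e2, he2, K2, hK2, h2⟩ := hg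
  refine ⟨min e1 e2, lt_min he1 he2, K1 * ‖g μ‖ + (‖f μ‖ + K1 * e1) * K2, by positivity,
    fun ν δ h hδ => ?_⟩
  have b1 := hδ.trans (min_le_left e1 e2)
  have a1 := h1 ν δ h b1
  have a2 := h2 ν δ h (hδ.trans (min_le_right _ _))
  have a3 : ‖f ν‖ ≤ ‖f μ‖ + K1 * e1 := by
    have : ‖f ν‖ ≤ ‖f μ‖ + ‖f μ - f ν‖ := by
      have := norm_sub_norm_le (f ν) (f μ)
      rw [norm_sub_rev] at this; linarith
    have : K1 * δ ≤ K1 * e1 := by gcongr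
    linarith
  calc _ = ‖(f μ - f ν) * g μ + f ν * (g μ - g ν)‖ := by congr 1; ring
    _ ≤ ‖f μ - f ν‖ * ‖g μ‖ + ‖f ν‖ * ‖g μ - g ν‖ := by
        refine (norm_add_le _ _).trans ?_
        rw [norm_mul, norm_mul]
    _ ≤ (K1 * δ) * ‖g μ‖ + (‖f μ‖ + K1 * e1) * (K2 * δ) := by gcongr
    _ = _ := by ring

lemma Lip.ne {μ N f} (hf : Lip μ N f) (h0 : f μ ≠ 0) :
    ∃ ε > (0:ℝ), ∀ ν δ, Near μ N ν δ → δ ≤ ε → ‖f μ‖ / 2 ≤ ‖f ν‖ := by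
  obtain ⟨e1, he1, K1, hK1, h1⟩ := hf
  have hp : 0 < ‖f μ‖ := norm_pos_iff.2 h0
  refine ⟨min e1 (‖f μ‖ / 2 / K1), lt_min he1 (by positivity), fun ν δ h hδ => ?_⟩
  have a1 := h1 ν δ h (hδ.trans (min_le_left _ _))
  have a2 := hδ.trans (min_le_right _ _)
  rw [le_div_iff₀ hK1] at a2
  have := norm_sub_norm_le (f μ) (f ν)
  linarith

lemma Lip.inv {μ N f} (hf : Lip μ N f) (h0 : f μ ≠ 0) : Lip μ N (fun ν => (f ν)⁻¹) := by
  obtain ⟨e2, he2, h2⟩ := hf.ne h0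
  obtain ⟨e1, he1, K1, hK1, h1⟩ := hf
  have hp : 0 < ‖f μ‖ := norm_pos_iff.2 h0
  refine ⟨min e1 e2, lt_min he1 he2, K1 / (‖f μ‖ * (‖f μ‖ / 2)), by positivity,
    fun ν δ h hδ => ?_⟩
  have a1 := h1 ν δ h (hδ.trans (min_le_left _ _))
  have a2 := h2 ν δ h (hδ.trans (min_le_right _ _))
  have hν : f ν ≠ 0 := norm_pos_iff.1 (lt_of_lt_of_le (by positivity) a2)
  have : (f μ)⁻¹ - (f ν)⁻¹ = (f ν - f μ) / (f μ * f ν) := by field_simp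
  have hδ0 := h.2.1
  rw [this, norm_div, norm_mul, norm_sub_rev, div_mul_eq_mul_div]
  gcongr

lemma Lip.sum {ι : Type*} {μ N} (s : Finset ι) (f : ι → (ℕ → ℂ) → ℂ)
    (h : ∀ i ∈ s, Lip μ N (f i)) : Lip μ N (fun ν => ∑ i ∈ s, f i ν) := by
  classical
  induction s using Finset.induction_on with
  | empty => simpa using Lip.const μ N 0
  | insert a s ha ih =>
    simp only [Finset.sum_insert ha]
    exact (h a (by simp)).add (ih fun i hi => h i (by simp [hi]))

lemma Lip.congr {μ N f g} (hf : Lip μ N f) (h0 : μ 0 = 1) (h : ∀ ν, ν 0 = 1 → f ν = g ν) :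
    Lip μ N g := by
  obtain ⟨e1, he1, K1, hK1, h1⟩ := hf
  refine ⟨e1, he1, K1, hK1, fun ν δ hn hδ => ?_⟩
  rw [← h μ h0, ← h ν hn.1]; exact h1 ν δ hn hδ

lemma gc_rec (μ : ℕ → ℂ) (h : μ 0 = 1) (n : ℕ) :
    gc μ (n+1) = (-1) * ∑ i ∈ Finset.range (n+1), μ (i+1) * gc μ (n-i) := by
  have := gc_conv μ h (n+1)
  rw [Finset.Nat.sum_antidiagonal_eq_sum_range_succ_mk, Finset.sum_range_succ'] at this
  simp only [Nat.sub_zero, h, Nat.add_sub_add_right] at this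
  simp at this
  linear_combination this

lemma Lip.gc (μ : ℕ → ℂ) (N : ℕ) (h0 : μ 0 = 1) (k : ℕ) (hk : k < N) :
    Lip μ N (fun ν => gc ν k) := by
  induction k using Nat.strong_induction_on with
  | _ k ih =>
    rcases k with _ | n
    · exact (Lip.const μ N 1).congr h0 (fun ν hν => (gc_zero ν hν).symm)
    · refine Lip.congr ?_ h0 (fun ν hν => (gc_rec ν hν n).symm)
      refine (Lip.const μ N (-1)).mul (Lip.sum _ _ fun i hi => ?_)
      have := Finset.mem_range.1 hi
      exact (Lip.coord μ N _ h0 (by omega)).mul (ih _ (by omega) (by omega))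

lemma Lip.unif {μ N} (f : ℕ → (ℕ → ℂ) → ℂ) (m : ℕ) (h : ∀ k < m, Lip μ N (f k)) :
    ∃ ε > (0:ℝ), ∃ K > (0:ℝ), ∀ ν δ, Near μ N ν δ → δ ≤ ε → ∀ k < m, ‖f k μ - f k ν‖ ≤ K * δ := by
  induction m with
  | zero => exact ⟨1, one_pos, 1, one_pos, by simp⟩
  | succ m ih =>
    obtain ⟨e1, he1, K1, hK1, h1⟩ := ih fun k hk => h k (by omega)
    obtain ⟨e2, he2, K2, hK2, h2⟩ := h m (by omega)
    refine ⟨min e1 e2, lt_min he1 he2, max K1 K2, lt_max_of_lt_left hK1, fun ν δ hn hδ k hk => ?_⟩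
    have := hn.2.1
    by_cases hkm : k = m
    · subst hkm
      exact (h2 ν δ hn (hδ.trans (min_le_right _ _))).trans (by gcongr; exact le_max_right _ _)
    · exact (h1 ν δ hn (hδ.trans (min_le_left _ _)) k (by omega)).trans
        (by gcongr; exact le_max_left _ _)

def cons (x : ℂ) (f : ℕ → ℂ) : ℕ → ℂ
  | 0 => x
  | n+1 => f n

lemma main_ind (l : ℕ) : ∀ α β μ : ℕ → ℂ, (∀ n < l+1, α n ≠ 0) → α l = 1 → Wy (l+1) α β μ →
    ∃ ε > (0:ℝ), ∃ K > (0:ℝ), ∀ ν δ, Near μ (2*l+2) ν δ → δ ≤ ε →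
      ∃ α' β' : ℕ → ℂ, (∀ n < l+1, α' n ≠ 0) ∧ α' l = 1 ∧ Wy (l+1) α' β' ν ∧
        (∀ n < l+1, ‖α n - α' n‖ ≤ K * δ ∧ ‖β n - β' n‖ ≤ K * δ) ∧
        ∀ α'' β'' : ℕ → ℂ, (∀ n < l+1, α'' n ≠ 0) → α'' l = 1 → Wy (l+1) α'' β'' ν →
          ∀ n < l+1, α'' n = α' n ∧ β'' n = β' n := by
  induction l with
  | zero =>
    intro α β μ hα h1 hW
    obtain ⟨h0, hb, -⟩ := Wy_fwd 0 α β μ hα hW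
    obtain ⟨e, he, K, hK, h⟩ := Lip.gc μ (2*0+2) h0 1 (by omega)
    refine ⟨e, he, K, hK, fun ν δ hn hδ => ⟨fun _ => 1, fun _ => - gc ν 1, by simp, rfl, ?_, ?_, ?_⟩⟩
    · apply Wy_back 0 _ _ ν (by simp) hn.1 rfl
      simp [Wy, pq, SS]
    · intro n hn'
      obtain rfl : n = 0 := by omega
      have := hn.2.1
      refine ⟨by rw [h1]; simp; positivity, ?_⟩
      rw [hb, ← norm_neg, show -(-gc μ 1 - -gc ν 1) = gc μ 1 - gc ν 1 by ring]
      exact h ν δ hn hδ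
    · intro α'' β'' h2 h3 h4 n hn'
      obtain rfl : n = 0 := by omega
      exact ⟨h3, (Wy_fwd 0 α'' β'' ν h2 h4).2.1⟩
  | succ l ih =>
    intro α β μ hα h1 hW
    have fact : ∀ α β μ : ℕ → ℂ, (∀ n < l+1+1, α n ≠ 0) → Wy (l+1+1) α β μ →
        μ 0 = 1 ∧ β 0 = - gc μ 1 ∧ α 0 = - gc μ 2 ∧
        Wy (l+1) (fun n => α (n+1)) (fun n => β (n+1)) (fun k => gc μ (k+2) * (gc μ 2)⁻¹) := by
      intro α β μ hα hW
      obtain ⟨h0, hb, hw⟩ := Wy_fwd (l+1) α β μ hα hW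
      have h2 := Wy_fst l _ _ _ (fun n hn => hα _ (by omega)) hw
      have ha := hα 0 (by omega)
      rw [div_eq_one_iff_eq ha] at h2
      refine ⟨h0, hb, h2.symm, ?_⟩
      convert hw using 2 with k
      rw [← h2]
      rw [neg_div_neg_eq]; rfl
    obtain ⟨h0, hb, ha, hw⟩ := fact α β μ hα hW
    have hg2 : gc μ 2 ≠ 0 := fun h => hα 0 (by omega) (by rw [ha, h, neg_zero])
    obtain ⟨e1, he1, K1, hK1, H1⟩ := ih _ _ _ (fun n hn => hα (n+1) (by omega)) h1 hw
    have L := fun k hk => Lip.gc μ (2*(l+1)+2) h0 k hk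
    obtain ⟨e2, he2, K2, hK2, H2⟩ := Lip.unif (fun k ν => gc ν (k+2) * (gc ν 2)⁻¹) (2*l+2)
      (fun k hk => (L (k+2) (by omega)).mul ((L 2 (by omega)).inv hg2))
    obtain ⟨e3, he3, H3⟩ := (L 2 (by omega)).ne hg2
    obtain ⟨e4, he4, K4, hK4, H4⟩ := Lip.unif (fun k ν => gc ν k) 3 (fun k hk => L k (by omega))
    refine ⟨min (min (e1 / K2) e2) (min e3 e4), by positivity, max (K1 * K2) K4,
      lt_max_of_lt_right hK4, fun ν δ hn hδ => ?_⟩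
    have d1 : δ ≤ e1 / K2 := hδ.trans ((min_le_left _ _).trans (min_le_left _ _))
    have d2 : δ ≤ e2 := hδ.trans ((min_le_left _ _).trans (min_le_right _ _))
    have d3 : δ ≤ e3 := hδ.trans ((min_le_right _ _).trans (min_le_left _ _))
    have d4 : δ ≤ e4 := hδ.trans ((min_le_right _ _).trans (min_le_right _ _))
    have hδ0 := hn.2.1
    have g2 : gc ν 2 ≠ 0 := norm_pos_iff.1 (lt_of_lt_of_le (by positivity) (H3 ν δ hn d3))
    have D := H4 ν δ hn d4
    obtain ⟨α', β', A1, A2, A3, A4, A5⟩ := H1 (fun k => gc ν (k+2) * (gc ν 2)⁻¹) (K2 * δ)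
      ⟨mul_inv_cancel₀ g2, by positivity, fun k _ hk => H2 ν δ hn d2 k hk⟩
      (by rw [le_div_iff₀ hK2] at d1; linarith)
    have hne : ∀ n < l+1+1, cons (- gc ν 2) α' n ≠ 0 := by
      rintro (_ | n) hn'
      · exact neg_ne_zero.2 g2
      · exact A1 n (by omega)
    refine ⟨cons (- gc ν 2) α', cons (- gc ν 1) β', hne, A2, ?_, ?_, ?_⟩
    · apply Wy_back (l+1) _ _ ν hne hn.1 rfl
      have e : (fun k => - gc ν (k+2) / cons (- gc ν 2) α' 0) =
          fun k => gc ν (k+2) * (gc ν 2)⁻¹ := by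
        funext k
        simp only [cons]
        rw [neg_div_neg_eq]; rfl
      rw [e]
      exact A3
    · have hm1 : K1 * K2 * δ ≤ max (K1 * K2) K4 * δ := by gcongr; exact le_max_left _ _
      have hm2 : K4 * δ ≤ max (K1 * K2) K4 * δ := by gcongr; exact le_max_right _ _
      rintro (_ | n) hn'
      · simp only [cons]
        rw [ha, hb]
        constructor
        · rw [← norm_neg, show -(-gc μ 2 - -gc ν 2) = gc μ 2 - gc ν 2 by ring]
          exact (D 2 (by omega)).trans hm2
        · rw [← norm_neg, show -(-gc μ 1 - -gc ν 1) = gc μ 1 - gc ν 1 by ring]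
          exact (D 1 (by omega)).trans hm2
      · have := A4 n (by omega)
        simp only [cons]
        exact ⟨this.1.trans (by linarith), this.2.trans (by linarith)⟩
    · intro α'' β'' B1 B2 B3
      obtain ⟨c0, cb, ca, cw⟩ := fact α'' β'' ν B1 B3
      have := A5 _ _ (fun n hn => B1 (n+1) (by omega)) B2 cw
      rintro (_ | n) hn'
      · exact ⟨ca, cb⟩
      · exact this n (by omega)

def Sol (l : ℕ) (a b : ℕ → ℂ) (P : ℕ → ℂ[X]) : Prop :=
  ∀ n, n < l → C (a n) * P (n + 2) + C (b n) * P (n+1) + P n = X * P (n+1)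

lemma sol_eq (l : ℕ) : ∀ (α β : ℕ → ℂ) (P Q : ℕ → ℂ[X]), (∀ n < l, α n ≠ 0) →
    P 0 = 0 → P 1 = 1 → Q 0 = 1 → Q 1 = 0 → Sol l α β P → Sol l α β Q →
    P (l+1) = (pq l α β).1 ∧ Q (l+1) = (pq l α β).2 := by
  induction l with
  | zero => intro α β P Q _ h0 h1 h2 h3 _ _; exact ⟨h1, h3⟩
  | succ l ih =>
    intro α β P Q hα h0 h1 h2 h3 hP hQ
    have ha := hα 0 (by omega)
    have hcc : C (α 0)⁻¹ * C (α 0) = (1 : ℂ[X]) := by rw [← C_mul, inv_mul_cancel₀ ha, C_1]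
    have p0 := hP 0 (by omega)
    have q0 := hQ 0 (by omega)
    simp only [zero_add, h0, h1, h2, h3] at p0 q0
    obtain ⟨e1, e2⟩ := ih (fun n => α (n+1)) (fun n => β (n+1))
      (fun n => - C (α 0) * Q (n+1)) (fun n => P (n+1) + (X - C (β 0)) * Q (n+1))
      (fun n hn => hα _ (by omega)) (by simp [h3]) (by linear_combination -q0)
      (by simp [h1, h3])
      (by
          linear_combination (-(P (1+1) + (X - C (β 0)) * Q (1+1))) * hcc + C (α 0)⁻¹ * p0 +
            C (α 0)⁻¹ * (X - C (β 0)) * q0)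
      (fun n hn => by
        have := hQ (n+1) (by omega)
        simp only
        linear_combination (- C (α 0)) * this)
      (fun n hn => by
        have t1 := hQ (n+1) (by omega)
        have t2 := hP (n+1) (by omega)
        simp only
        linear_combination t2 + (X - C (β 0)) * t1)
    simp only [pq, ← e1, ← e2]
    constructor
    · linear_combination ((X - C (β 0)) * Q (l+1+1)) * hcc
    · linear_combination -(Q (l+1+1)) * hcc

lemma sol_ex (l : ℕ) : ∀ (α β : ℕ → ℂ), (∀ n < l, α n ≠ 0) →
    ∃ P Q : ℕ → ℂ[X], P 0 = 0 ∧ P 1 = 1 ∧ Q 0 = 1 ∧ Q 1 = 0 ∧ Sol l α β P ∧ Sol l α β Q := by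
  induction l with
  | zero =>
    intro α β _
    exact ⟨fun n => if n = 0 then 0 else 1, fun n => if n = 0 then 1 else 0, by simp, by simp,
      by simp, by simp, fun n hn => by omega, fun n hn => by omega⟩
  | succ l ih =>
    intro α β hα
    have ha := hα 0 (by omega)
    have hcc : C (α 0)⁻¹ * C (α 0) = (1 : ℂ[X]) := by rw [← C_mul, inv_mul_cancel₀ ha, C_1]
    obtain ⟨P, Q, p0, p1, q0, q1, hP, hQ⟩ := ih (fun n => α (n+1)) (fun n => β (n+1))
      (fun n hn => hα _ (by omega))
    refine ⟨fun n => Nat.casesOn n 0 (fun n => C (α 0)⁻¹ * (X - C (β 0)) * P n + Q n),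
      fun n => Nat.casesOn n 1 (fun n => - C (α 0)⁻¹ * P n), rfl, ?_, rfl, ?_, ?_, ?_⟩
    · simp [p0, q0]
    · simp [p0]
    · rintro (_ | n) hn
      · simp only [zero_add, p0, p1, q0, q1]
        change _ + _ + 0 = _
        linear_combination (X - C (β 0)) * hcc
      · have t1 := hP n (by omega)
        have t2 := hQ n (by omega)
        simp only at t1 t2 ⊢
        linear_combination t2 + C (α 0)⁻¹ * (X - C (β 0)) * t1
    · rintro (_ | n) hn
      · simp only [zero_add, p0, p1, q0, q1]
        change _ + _ + 1 = _
        linear_combination (-1) * hcc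
      · have t1 := hP n (by omega)
        simp only at t1 ⊢
        linear_combination (-C (α 0)⁻¹) * t1

lemma sum_eq_SS (l : ℕ) (M : ℕ → ℂ) :
    ∑ k ∈ Finset.Icc 1 (2 * l), C (M k) * X ^ (2 * l - k) = SS l (fun n => M (n+1)) := by
  rw [SS, ← Finset.Ico_succ_right_eq_Icc, Finset.sum_Ico_eq_sum_range]
  apply Finset.sum_congr (by simp)
  intro k hk
  rw [add_comm 1 k, Nat.sub_sub, add_comm 1 k]

lemma weyl_iff (l : ℕ) (a b M : ℕ → ℂ) (ha : ∀ n < l+1, a (n+1) ≠ 0) :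
    IsWeylCoeffs (l+1) a b M ↔
      Wy (l+1) (fun n => a (n+1)) (fun n => b (n+1)) (fun n => M (n+1)) := by
  have hd : ∀ p : ℂ[X], p.degree ≤ ((l + 1 - 1 : ℕ) : WithBot ℕ) ↔
      p.degree < ((l+1 : ℕ) : WithBot ℕ) := by
    intro p
    by_cases hp : p = 0
    · subst hp; simp
    · rw [degree_eq_natDegree hp]; norm_cast; omega
  have hs : ∀ P : ℕ → ℂ[X], (∀ n, 1 ≤ n → n ≤ l+1 →
      C (a n) * P (n + 1) + C (b n) * P n + P (n - 1) = X * P n) ↔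
      Sol (l+1) (fun n => a (n+1)) (fun n => b (n+1)) P := by
    intro P
    constructor
    · intro h n hn
      exact h (n+1) (by omega) (by omega)
    · rintro h (_ | n) h1 h2
      · omega
      · exact h n (by omega)
  constructor
  · rintro ⟨P, Q, p0, p1, q0, q1, hP, hQ, h⟩
    obtain ⟨e1, e2⟩ := sol_eq (l+1) _ _ P Q ha p0 p1 q0 q1 ((hs P).1 hP) ((hs Q).1 hQ)
    rw [hd, sum_eq_SS, e1, e2] at h
    exact h
  · intro h
    obtain ⟨P, Q, p0, p1, q0, q1, hP, hQ⟩ := sol_ex (l+1) _ (fun n => b (n+1)) ha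
    obtain ⟨e1, e2⟩ := sol_eq (l+1) _ _ P Q ha p0 p1 q0 q1 hP hQ
    refine ⟨P, Q, p0, p1, q0, q1, (hs P).2 hP, (hs Q).2 hQ, ?_⟩
    rw [hd, sum_eq_SS, e1, e2]
    exact h

/-- Local solvability and stability of the inverse problem by the Weyl coefficients:
if `M 1, …, M (2l)` are the Weyl coefficients of a system with `a n ≠ 0` for `n = 1,…,l-1`
and `a l = 1`, then for all sufficiently small perturbations `M̃` of the Weyl coefficients
(with `M̃ 1 = 1`, `max_{2 ≤ k ≤ 2l} |M k - M̃ k| = δ ≤ ε`) there is a unique perturbed system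
with Weyl coefficients `M̃`, and its coefficients satisfy `|a n - ã n| ≤ C δ`,
`|b n - b̃ n| ≤ C δ`. -/
theorem weyl_coefficients_local_solvability_stability (l : ℕ) (hl : 1 ≤ l)
    (a b : ℕ → ℂ)
    (ha : ∀ n, 1 ≤ n → n ≤ l - 1 → a n ≠ 0) (hal : a l = 1)
    (M : ℕ → ℂ) (hM : IsWeylCoeffs l a b M) :
    ∃ ε > (0 : ℝ), ∃ Cst > (0 : ℝ),
      ∀ (M' : ℕ → ℂ) (δ : ℝ), M' 1 = 1 → δ ≤ ε →
        (∀ k, 2 ≤ k → k ≤ 2 * l → ‖M k - M' k‖ ≤ δ) →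
        ∃ a' b' : ℕ → ℂ,
          (∀ n, 1 ≤ n → n ≤ l - 1 → a' n ≠ 0) ∧ a' l = 1 ∧
          IsWeylCoeffs l a' b' M' ∧
          (∀ n, 1 ≤ n → n ≤ l →
            ‖a n - a' n‖ ≤ Cst * δ ∧ ‖b n - b' n‖ ≤ Cst * δ) ∧
          (∀ a'' b'' : ℕ → ℂ,
            (∀ n, 1 ≤ n → n ≤ l - 1 → a'' n ≠ 0) → a'' l = 1 →
            IsWeylCoeffs l a'' b'' M' →
            ∀ n, 1 ≤ n → n ≤ l → a'' n = a' n ∧ b'' n = b' n) := by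
  obtain ⟨l, rfl⟩ : ∃ k, l = k+1 := ⟨l-1, by omega⟩
  have nz : ∀ a : ℕ → ℂ, (∀ n, 1 ≤ n → n ≤ l + 1 - 1 → a n ≠ 0) → a (l+1) = 1 →
      ∀ n < l+1, a (n+1) ≠ 0 := by
    intro a h1 h2 n hn
    by_cases h : n = l
    · subst h; rw [h2]; exact one_ne_zero
    · exact h1 _ (by omega) (by omega)
  have hnz := nz a ha hal
  rw [weyl_iff l a b M hnz] at hM
  obtain ⟨e, he, K, hK, H⟩ := main_ind l _ _ _ hnz hal hM
  refine ⟨e, he, K, hK, fun M' δ h1 hδ hk => ?_⟩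
  obtain ⟨α, β, A1, A2, A3, A4, A5⟩ := H (fun n => M' (n+1)) δ
    ⟨h1, (norm_nonneg _).trans (hk 2 le_rfl (by omega)), fun k _ _ => hk (k+1) (by omega) (by omega)⟩ hδ
  refine ⟨cons 0 α, cons 0 β, ?_, A2, ?_, ?_, ?_⟩
  · rintro (_ | n) h1 h2
    · omega
    · exact A1 n (by omega)
  · rw [weyl_iff l _ _ _ A1]; exact A3
  · rintro (_ | n) h1 h2
    · omega
    · exact A4 n (by omega)
  · intro a'' b'' B1 B2 B3
    have hz := nz a'' B1 B2
    rw [weyl_iff l _ _ _ hz] at B3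
    rintro (_ | n) h1 h2
    · omega
    · exact A5 _ _ hz B2 B3 n (by omega)
end

section
/- (Lemma 3.1.) Let R_0, R_1 ∈ ℂ[λ] be relatively prime polynomials such that R_0 has degree l with leading coefficient r_0 ≠ 0 and R_1 has degree l−1 with leading coefficient r_1 ≠ 0, where r_0 ≠ r_1. Let E ∈ ℂ[λ] be any polynomial of degree 2l−1 with leading coefficient r_0 − r_1. Then there exist unique polynomials v_0 and v_1, with v_0 monic of degree l and v_1 monic of degree l−1, such that E(λ) = R_0(λ) v_1(λ) − R_1(λ) v_0(λ). -/
open Polynomial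

/-- Lemma 3.1: if `R0`, `R1` are relatively prime polynomials over `ℂ` with
`deg R0 = l`, `leadingCoeff R0 = r0 ≠ 0`, `deg R1 = l-1`, `leadingCoeff R1 = r1 ≠ 0`,
`r0 ≠ r1`, and `E` is any polynomial of degree `2l-1` with leading coefficient `r0 - r1`,
then there exists a unique pair `(v0, v1)` of monic polynomials of degrees `l` and `l-1`
respectively such that `E = R0 * v1 - R1 * v0`. -/
theorem exists_unique_v0_v1 (l : ℕ) (hl : 1 ≤ l) (R0 R1 : Polynomial ℂ) (r0 r1 : ℂ)
    (hcop : IsCoprime R0 R1)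
    (hR0d : R0.degree = (l : WithBot ℕ)) (hR0lc : R0.leadingCoeff = r0) (hr0 : r0 ≠ 0)
    (hR1d : R1.degree = ((l - 1 : ℕ) : WithBot ℕ)) (hR1lc : R1.leadingCoeff = r1)
    (hr1 : r1 ≠ 0) (hne : r0 ≠ r1)
    (E : Polynomial ℂ)
    (hEd : E.degree = ((2 * l - 1 : ℕ) : WithBot ℕ)) (hElc : E.leadingCoeff = r0 - r1) :
    ∃! vp : Polynomial ℂ × Polynomial ℂ,
      vp.1.Monic ∧ vp.1.degree = (l : WithBot ℕ) ∧
      vp.2.Monic ∧ vp.2.degree = ((l - 1 : ℕ) : WithBot ℕ) ∧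
      E = R0 * vp.2 - R1 * vp.1 := by
  have hR0 : R0 ≠ 0 := by
    intro h
    apply hr0
    rw [← hR0lc, h, leadingCoeff_zero]
  have hR0n : R0.natDegree = l := natDegree_eq_of_degree_eq_some hR0d
  have hR1n : R1.natDegree = l - 1 := natDegree_eq_of_degree_eq_some hR1d
  have hEn : E.natDegree = 2 * l - 1 := natDegree_eq_of_degree_eq_some hEd
  obtain ⟨a, b, hab⟩ := hcop
  set w := (-(b * E) - X ^ l) % R0 with hw
  set q := (-(b * E) - X ^ l) / R0 with hq
  have hwq : R0 * q + w = -(b * E) - X ^ l := EuclideanDomain.div_add_mod _ _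
  have hwd : w.degree < (l : WithBot ℕ) := by
    rw [← hR0d]
    exact EuclideanDomain.mod_lt _ hR0
  have hm : (X ^ l + w).Monic := monic_X_pow_add hwd
  have hd : (X ^ l + w).degree = (l : WithBot ℕ) := by
    rw [degree_add_eq_left_of_degree_lt] <;> simp [hwd]
  have hn : (X ^ l + w).natDegree = l := natDegree_eq_of_degree_eq_some hd
  have hS : R0 * (a * E - R1 * q) = E + R1 * (X ^ l + w) := by
    linear_combination E * hab - R1 * hwq
  have hlen : l - 1 + l = 2 * l - 1 := by omega
  have hc : (R0 * (a * E - R1 * q)).coeff (2 * l - 1) = r0 := by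
    rw [hS, coeff_add]
    have h1 : E.coeff (2 * l - 1) = r0 - r1 := by
      rw [← hElc, leadingCoeff, hEn]
    have h2 : (R1 * (X ^ l + w)).coeff (2 * l - 1) = r1 := by
      have := coeff_mul_degree_add_degree R1 (X ^ l + w)
      rw [hR1n, hn, hlen, hm.leadingCoeff, hR1lc, mul_one] at this
      exact this
    rw [h1, h2]
    ring
  have hle : (R0 * (a * E - R1 * q)).natDegree ≤ 2 * l - 1 := by
    rw [hS]
    refine natDegree_add_le_of_degree_le hEn.le ?_
    refine natDegree_mul_le.trans ?_
    rw [hR1n, hn, hlen]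
  have hnS : (R0 * (a * E - R1 * q)).natDegree = 2 * l - 1 :=
    le_antisymm hle (le_natDegree_of_ne_zero (by rw [hc]; exact hr0))
  have hlS : (R0 * (a * E - R1 * q)).leadingCoeff = r0 := by
    rw [leadingCoeff, hnS, hc]
  have hvm : (a * E - R1 * q).Monic := by
    rw [leadingCoeff_mul, hR0lc] at hlS
    exact mul_left_cancel₀ hr0 (by rw [hlS, mul_one])
  have hvn : (a * E - R1 * q).natDegree = l - 1 := by
    rw [natDegree_mul hR0 hvm.ne_zero, hR0n] at hnS
    omega
  refine ⟨(X ^ l + w, a * E - R1 * q), ⟨hm, hd, hvm, ?_, ?_⟩, ?_⟩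
  · rw [degree_eq_natDegree hvm.ne_zero, hvn]
  · linear_combination -hS
  · rintro ⟨u0, u1⟩ ⟨hu0m, hu0d, hu1m, hu1d, hu⟩
    simp only at hu0m hu0d hu1m hu1d hu
    have hdvd : R0 ∣ u0 - (X ^ l + w) := by
      refine ⟨a * (u0 - (X ^ l + w)) + b * (u1 - (a * E - R1 * q)), ?_⟩
      linear_combination (-(u0 - (X ^ l + w))) * hab + b * hu + b * hS
    have hlt : (u0 - (X ^ l + w)).degree < R0.degree := by
      rw [hR0d, ← hu0d]
      exact degree_sub_lt (hu0d.trans hd.symm) hu0m.ne_zero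
        (hu0m.leadingCoeff.trans hm.leadingCoeff.symm)
    have h0 : u0 - (X ^ l + w) = 0 := eq_zero_of_dvd_of_degree_lt hdvd hlt
    have h1 : u1 = a * E - R1 * q := by
      apply mul_left_cancel₀ hR0
      linear_combination R1 * h0 - hu - hS
    rw [sub_eq_zero.mp h0, h1]
end

section
/- (Theorem 3.1, solvability criterion for the inverse problem with polynomials in the boundary condition.) Let λ_1,…,λ_{2l−1} be complex numbers. Define E(λ) = (r_0 − r_1)·∏_{j=1}^{2l−1}(λ − λ_j); let v_0 (monic, degree l) and v_1 (monic, degree l−1) be the unique polynomials with E = R_0 v_1 − R_1 v_0; and let M_1,…,M_{2l−1} be the coefficients of the quotient of λ^{2l−1} v_1(λ) upon division by v_0(λ), written as quotient = Σ_{k=1}^{2l−1} M_k λ^{2l−1−k}. Then λ_1,…,λ_{2l−1} are the eigenvalues (zeros, counted with multiplicity, of the characteristic polynomial R_0 w_1 − R_1 w_0, where [w_n]_{n=0}^{l+1} solves a_n w_{n+1} + b_n w_n + w_{n−1} = λ w_n with w_{l+1} = 0, w_l = 1) of the boundary value problem for some complex coefficients a_1,…,a_l, b_1,…,b_l with a_n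 ≠ 0 for n = 1,…,l−1 and a_l = 1, if and only if the Hankel determinants Δ_n := det[M_{i+j−1}]_{i,j=1}^{n+1} are nonzero for all n = 1,…,l−1. -/
open Polynomial

namespace InvAux

def CH : ℕ → ℂ[X] → ℂ[X] → Prop
  | 0, v0, v1 => v1 = 1 ∧ ∃ b : ℂ, v0 = X - C b
  | l + 1, v0, v1 => ∃ (a b : ℂ) (v2 : ℂ[X]), a ≠ 0 ∧ v0 = (X - C b) * v1 - C a * v2 ∧ CH l v1 v2

def Sg (n l : ℕ) (v0 v1 : ℂ[X]) : Prop :=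
  ∃ p q : ℂ[X], p ≠ 0 ∧ p.degree < (n : WithBot ℕ) ∧
    (p * v1 - q * v0).degree < ((l - n : ℕ) : WithBot ℕ)

lemma dlt_iff {p : ℂ[X]} {k : ℕ} : p.degree < (k : WithBot ℕ) ↔ p = 0 ∨ p.natDegree < k := by
  by_cases h : p = 0
  · simp [h]
  · rw [degree_eq_natDegree h]; simp [h]

lemma dlt_monic {s v : ℂ[X]} (hv : v.Monic) {d k : ℕ} (hd : v.natDegree = d) :
    (s * v).degree < ((k + d : ℕ) : WithBot ℕ) ↔ s.degree < (k : WithBot ℕ) := by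
  rw [dlt_iff, dlt_iff]
  by_cases h : s = 0
  · simp [h]
  · rw [natDegree_mul h hv.ne_zero]
    simp [h, hv.ne_zero, hd]

lemma dlt_monic_zero {s v : ℂ[X]} (hv : v.Monic) {d k : ℕ} (hd : v.natDegree = d) (hk : k ≤ d)
    (h : (s * v).degree < (k : WithBot ℕ)) : s = 0 := by
  rw [dlt_iff] at h
  by_contra hs
  rw [natDegree_mul hs hv.ne_zero] at h
  rcases h with h | h
  · simp [hs, hv.ne_zero] at h
  · omega

lemma dlt_mul {p t : ℂ[X]} {n m : ℕ} (hp : p.degree < ((n + 1 : ℕ) : WithBot ℕ))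
    (ht : t.degree < (m : WithBot ℕ)) : (p * t).degree < ((n + m : ℕ) : WithBot ℕ) := by
  rw [dlt_iff] at *
  by_cases h : p = 0
  · simp [h]
  by_cases h' : t = 0
  · simp [h']
  simp only [h, h', false_or] at hp ht
  right
  rw [natDegree_mul h h']; omega

lemma dlt_mono {p : ℂ[X]} {n m : ℕ} (hp : p.degree < (n : WithBot ℕ)) (h : n ≤ m) :
    p.degree < (m : WithBot ℕ) := lt_of_lt_of_le hp (by exact_mod_cast h)

lemma dlt_sub {p q : ℂ[X]} {n : ℕ} (hp : p.degree < (n : WithBot ℕ))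
    (hq : q.degree < (n : WithBot ℕ)) : (p - q).degree < (n : WithBot ℕ) :=
  lt_of_le_of_lt (degree_sub_le _ _) (max_lt hp hq)

lemma dlt_add {p q : ℂ[X]} {n : ℕ} (hp : p.degree < (n : WithBot ℕ))
    (hq : q.degree < (n : WithBot ℕ)) : (p + q).degree < (n : WithBot ℕ) :=
  lt_of_le_of_lt (degree_add_le _ _) (max_lt hp hq)

lemma dlt_C {p : ℂ[X]} {n : ℕ} (c : ℂ) (hp : p.degree < (n : WithBot ℕ)) :
    (C c * p).degree < (n : WithBot ℕ) := by
  have h : (C c : ℂ[X]).degree < ((0 + 1 : ℕ) : WithBot ℕ) :=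
    lt_of_le_of_lt degree_C_le (by norm_num)
  have := dlt_mul h hp
  rwa [Nat.zero_add] at this

lemma dlt_XC (b : ℂ) : (X - C b : ℂ[X]).degree < ((1 + 1 : ℕ) : WithBot ℕ) := by
  rw [degree_X_sub_C]; norm_num

lemma dlt_self {v : ℂ[X]} {d : ℕ} (hd : v.natDegree = d) :
    v.degree < ((d + 1 : ℕ) : WithBot ℕ) := by
  rw [dlt_iff]; right; omega

lemma sg_step {l n : ℕ} {v0 v1 v2 : ℂ[X]} {a b : ℂ} (ha : a ≠ 0)
    (h : v0 = (X - C b) * v1 - C a * v2)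
    (h0 : v0.Monic) (d0 : v0.natDegree = l + 2) (h1 : v1.Monic) (d1 : v1.natDegree = l + 1)
    (d2 : v2.natDegree = l) (hn : 1 ≤ n) (hnl : n ≤ l + 1) :
    Sg (n + 1) (l + 2) v0 v1 ↔ Sg n (l + 1) v1 v2 := by
  have e : l + 2 - (n + 1) = l + 1 - n := by omega
  have hC : C a⁻¹ * C a = (1 : ℂ[X]) := by rw [← C_mul, inv_mul_cancel₀ ha, C_1]
  constructor
  · rintro ⟨p, q, hp, hpd, hr⟩
    rw [e] at hr
    refine ⟨q, -C a⁻¹ * (p - q * (X - C b)), ?_, ?_, ?_⟩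
    · rintro rfl
      apply hp
      rw [zero_mul, sub_zero] at hr
      exact dlt_monic_zero h1 d1 (by omega) hr
    · rw [← dlt_monic h0 d0]
      have : q * v0 = p * v1 - (p * v1 - q * v0) := by ring
      rw [this]
      apply dlt_sub
      · exact dlt_mono (dlt_mul hpd (dlt_self d1)) (by omega)
      · exact dlt_mono hr (by omega)
    · have : q * v2 - -C a⁻¹ * (p - q * (X - C b)) * v1 = C a⁻¹ * (p * v1 - q * v0) := by
        rw [h]; linear_combination (-q * v2) * hC
      rw [this]
      exact dlt_C _ hr
  · rintro ⟨p, q, hp, hpd, hr⟩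
    obtain ⟨n, rfl⟩ : ∃ m, n = m + 1 := ⟨n - 1, by omega⟩
    have key : (p * (X - C b) - C a * q) * v1 - p * v0 = C a * (p * v2 - q * v1) := by
      rw [h]; ring
    refine ⟨p * (X - C b) - C a * q, p, ?_, ?_, ?_⟩
    · intro h'
      rw [h', zero_mul, zero_sub] at key
      apply hp
      apply dlt_monic_zero h0 d0 (k := l + 1 - (n + 1)) (by omega)
      rw [← degree_neg, key]
      exact dlt_C _ hr
    · apply dlt_sub
      · exact dlt_mono (dlt_mul hpd (dlt_XC b)) (by omega)
      · apply dlt_C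
        rw [← dlt_monic h1 d1]
        have : q * v1 = p * v2 - (p * v2 - q * v1) := by ring
        rw [this]
        apply dlt_sub
        · exact dlt_mono (dlt_mul hpd (dlt_self d2)) (by omega)
        · exact dlt_mono hr (by omega)
    · rw [e, key]; exact dlt_C _ hr

lemma not_sg_one {l : ℕ} {v0 v1 : ℂ[X]} 
    (h0 : v0.Monic) (d0 : v0.natDegree = l + 1) (h1 : v1.Monic) (d1 : v1.natDegree = l) :
    ¬ Sg 1 (l + 1) v0 v1 := by
  rintro ⟨p, q, hp, hpd, hr⟩
  have hq : q = 0 := by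
    have : q.degree < ((0 : ℕ) : WithBot ℕ) := by
      rw [← dlt_monic h0 d0]
      have : q * v0 = p * v1 - (p * v1 - q * v0) := by ring
      rw [this]
      apply dlt_sub
      · exact dlt_mono (dlt_mul (n := 0) hpd (dlt_self d1)) (by omega)
      · exact dlt_mono hr (by omega)
    rw [dlt_iff] at this
    simpa using this
  rw [hq, zero_mul, sub_zero] at hr
  exact hp (dlt_monic_zero h1 d1 (by omega) hr)

lemma ch_monic : ∀ (l : ℕ) {v0 v1 : ℂ[X]}, CH l v0 v1 →
    v0.Monic ∧ v0.natDegree = l + 1 ∧ v1.Monic ∧ v1.natDegree = l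
  | 0, v0, v1, h => by
    obtain ⟨rfl, b, rfl⟩ := h
    exact ⟨monic_X_sub_C b, natDegree_X_sub_C b, monic_one, natDegree_one⟩
  | l + 1, v0, v1, h => by
    obtain ⟨a, b, v2, ha, rfl, h⟩ := h
    obtain ⟨m1, d1, m2, d2⟩ := ch_monic l h
    have hm : ((X - C b) * v1).Monic := (monic_X_sub_C b).mul m1
    have hd : ((X - C b) * v1).natDegree = l + 1 + 1 := by
      rw [(monic_X_sub_C b).natDegree_mul m1, natDegree_X_sub_C, d1]; ring
    have hlt : (C a * v2).degree < ((X - C b) * v1).degree := by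
      rw [degree_eq_natDegree hm.ne_zero, hd]
      exact dlt_mono (dlt_C a (dlt_self d2)) (by omega)
    refine ⟨hm.sub_of_left hlt, ?_, m1, d1⟩
    rw [natDegree_eq_of_degree_eq (degree_sub_eq_left_of_degree_lt hlt), hd]

lemma euclid {l : ℕ} {v0 v1 : ℂ[X]} (h0 : v0.Monic) (d0 : v0.natDegree = l + 2)
    (h1 : v1.Monic) (d1 : v1.natDegree = l + 1) (hs : ¬ Sg 2 (l + 2) v0 v1) :
    ∃ (a b : ℂ) (v2 : ℂ[X]), a ≠ 0 ∧ v0 = (X - C b) * v1 - C a * v2 ∧ v2.Monic ∧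
      v2.natDegree = l := by
  have hQd : (v0 /ₘ v1).natDegree = 1 := by
    rw [natDegree_divByMonic _ h1, d0, d1]; omega
  have hQm : (v0 /ₘ v1).Monic := by
    rw [Monic, leadingCoeff_divByMonic_of_monic h1 ?_, h0.leadingCoeff]
    rw [degree_eq_natDegree h0.ne_zero, degree_eq_natDegree h1.ne_zero, d0, d1]
    exact_mod_cast (by omega)
  have hQ : ∃ b : ℂ, v0 /ₘ v1 = X - C b := by
    have := hQm.eq_X_add_C hQd
    exact ⟨-(v0 /ₘ v1).coeff 0, by rw [this]; simp⟩
  obtain ⟨b, hb⟩ := hQ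
  have hdiv := modByMonic_add_div v0 v1
  rw [hb] at hdiv
  set r := v0 %ₘ v1 with hrdef
  have hr : r.degree < ((l + 1 : ℕ) : WithBot ℕ) := by
    have := degree_modByMonic_lt v0 h1
    rwa [degree_eq_natDegree h1.ne_zero, d1] at this
  have hr' : ¬ r.degree < (l : WithBot ℕ) := by
    intro h
    apply hs
    refine ⟨X - C b, 1, X_sub_C_ne_zero b, dlt_XC b, ?_⟩
    have : (X - C b) * v1 - 1 * v0 = -r := by rw [← hdiv]; ring
    rw [this, degree_neg]
    exact h
  rw [dlt_iff] at hr hr'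
  push Not at hr'
  obtain ⟨hr0, hr2⟩ := hr'
  have hrd : r.natDegree = l := by
    rcases hr with h | h
    · exact absurd h hr0
    · omega
  have hlc : r.leadingCoeff ≠ 0 := leadingCoeff_ne_zero.mpr hr0
  refine ⟨-r.leadingCoeff, b, r * C r.leadingCoeff⁻¹, neg_ne_zero.mpr hlc, ?_,
    monic_mul_leadingCoeff_inv hr0, ?_⟩
  · have hC : C r.leadingCoeff * C r.leadingCoeff⁻¹ = (1 : ℂ[X]) := by
      rw [← C_mul, mul_inv_cancel₀ hlc, C_1]
    rw [C_neg]
    linear_combination -hdiv - r * hC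
  · rw [natDegree_mul_C (inv_ne_zero hlc), hrd]

lemma ch_iff : ∀ (l : ℕ) {v0 v1 : ℂ[X]}, v0.Monic → v0.natDegree = l + 1 → v1.Monic →
    v1.natDegree = l → (CH l v0 v1 ↔ ∀ n, 2 ≤ n → n ≤ l + 1 → ¬ Sg n (l + 1) v0 v1)
  | 0, v0, v1, h0, d0, h1, d1 => by
    refine ⟨fun _ n _ _ => by omega, fun _ => ⟨h1.natDegree_eq_zero.mp d1, -v0.coeff 0, ?_⟩⟩
    have := h0.eq_X_add_C d0
    rw [C_neg, sub_neg_eq_add]; exact this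
  | l + 1, v0, v1, h0, d0, h1, d1 => by
    constructor
    · rintro ⟨a, b, v2, ha, h, hc⟩ n hn hnl hs
      obtain ⟨_, _, m2, d2⟩ := ch_monic l hc
      obtain ⟨n, rfl⟩ : ∃ m, n = m + 1 := ⟨n - 1, by omega⟩
      have hs' := (sg_step ha h h0 d0 h1 d1 d2 (by omega) (by omega)).mp hs
      rcases Nat.lt_or_ge n 2 with h2 | h2
      · obtain rfl : n = 1 := by omega
        exact not_sg_one h1 d1 m2 d2 hs'
      · exact (ch_iff l h1 d1 m2 d2).mp hc n h2 (by omega) hs'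
    · intro H
      obtain ⟨a, b, v2, ha, h, m2, d2⟩ := euclid h0 d0 h1 d1 (H 2 le_rfl (by omega))
      refine ⟨a, b, v2, ha, h, (ch_iff l h1 d1 m2 d2).mpr fun n hn hnl hs => ?_⟩
      exact H (n + 1) (by omega) (by omega)
        ((sg_step ha h h0 d0 h1 d1 d2 (by omega) (by omega)).mpr hs)

lemma ch_seq : ∀ (l : ℕ) (v0 v1 : ℂ[X]), CH l v0 v1 ↔
    ∃ a b : ℕ → ℂ, (∀ n, 1 ≤ n → n ≤ l → a n ≠ 0) ∧ a (l + 1) = 1 ∧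
      ∃ v : ℕ → ℂ[X], v (l + 1 + 1) = 0 ∧ v (l + 1) = 1 ∧
        (∀ n, 1 ≤ n → n ≤ l + 1 →
          v (n - 1) = (X - C (b n)) * v n - C (a n) * v (n + 1)) ∧ v 0 = v0 ∧ v 1 = v1
  | 0, v0, v1 => by
    constructor
    · rintro ⟨rfl, b, rfl⟩
      refine ⟨fun _ => 1, fun _ => b, fun n _ _ => one_ne_zero, rfl,
        fun n => if n = 0 then X - C b else if n = 1 then 1 else 0, by simp, by simp, ?_,
        by simp, by simp⟩
      intro n h1 h2
      obtain rfl : n = 1 := by omega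
      simp
    · rintro ⟨a, b, -, -, v, hv, hv', hrec, rfl, rfl⟩
      refine ⟨hv', b 1, ?_⟩
      have := hrec 1 le_rfl le_rfl
      simp only [Nat.sub_self, Nat.zero_add, Nat.reduceAdd] at this hv hv'
      rw [this, hv, hv']; ring
  | l + 1, v0, v1 => by
    constructor
    · rintro ⟨a, b, v2, ha, h, hc⟩
      obtain ⟨a', b', hne, hal, v, hv, hv', hrec, hz, ho⟩ := (ch_seq l v1 v2).mp hc
      refine ⟨fun n => if n = 1 then a else a' (n - 1), fun n => if n = 1 then b else b' (n - 1),
        ?_, ?_, fun n => if n = 0 then v0 else v (n - 1), ?_, ?_, ?_, ?_, ?_⟩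
      · intro n h1 h2
        by_cases hn : n = 1
        · simp [hn, ha]
        · simpa [hn] using hne (n - 1) (by omega) (by omega)
      · simpa using hal
      · simpa using hv
      · simpa using hv'
      · intro n h1 h2
        by_cases hn : n = 1
        · subst hn; simp [hz, ho, h]
        · obtain ⟨n, rfl⟩ : ∃ m, n = m + 2 := ⟨n - 2, by omega⟩
          simpa using hrec (n + 1) (by omega) (by omega)
      · simp
      · simpa using hz
    · rintro ⟨a, b, hne, hal, v, hv, hv', hrec, rfl, rfl⟩
      refine ⟨a 1, b 1, v 2, hne 1 le_rfl (by omega), hrec 1 le_rfl (by omega),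
        (ch_seq l _ _).mpr ⟨fun n => a (n + 1), fun n => b (n + 1),
          fun n h1 h2 => hne (n + 1) (by omega) (by omega), hal, fun n => v (n + 1), hv, hv',
          ?_, rfl, rfl⟩⟩
      intro n h1 h2
      obtain ⟨n, rfl⟩ : ∃ m, n = m + 1 := ⟨n - 1, by omega⟩
      simpa using hrec (n + 2) (by omega) (by omega)

lemma sg_iff {l n : ℕ} (hn : 1 ≤ n) (hnl : n ≤ l) {v0 v1 : ℂ[X]}
    (h0 : v0.Monic) (d0 : v0.natDegree = l) {Q : ℂ[X]}
    (hQ : Q = (X ^ (2 * l - 1) * v1) /ₘ v0) (p : ℂ[X]) (hp : p.degree < (n : WithBot ℕ)) :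
    (∃ q : ℂ[X], (p * v1 - q * v0).degree < ((l - n : ℕ) : WithBot ℕ)) ↔
      ∀ i < n, (p * Q).coeff (2 * l - 2 - i) = 0 := by
  have hdiv := modByMonic_add_div (X ^ (2 * l - 1) * v1) v0
  have hT := degree_modByMonic_lt (X ^ (2 * l - 1) * v1) h0
  rw [← hQ] at hdiv
  set T := (X ^ (2 * l - 1) * v1) %ₘ v0
  rw [degree_eq_natDegree h0.ne_zero, d0] at hT
  obtain ⟨n, rfl⟩ : ∃ m, n = m + 1 := ⟨n - 1, by omega⟩
  have hpT := dlt_mul hp hT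
  have dX : (X ^ (2 * l - 1) : ℂ[X]).natDegree = 2 * l - 1 := natDegree_X_pow _
  have mX : (X ^ (2 * l - 1) : ℂ[X]).Monic := monic_X_pow _
  constructor
  · rintro ⟨q, hr⟩ i hi
    have key : (p * Q - q * X ^ (2 * l - 1)) * v0 =
        (p * v1 - q * v0) * X ^ (2 * l - 1) - p * T := by
      linear_combination p * hdiv
    have hd : (p * Q - q * X ^ (2 * l - 1)).degree < ((2 * l - 1 - (n + 1) : ℕ) : WithBot ℕ) := by
      rw [← dlt_monic h0 d0, key]
      apply dlt_sub
      · exact dlt_mono ((dlt_monic mX dX).mpr hr) (by omega)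
      · exact dlt_mono hpT (by omega)
    have hc : (p * Q - q * X ^ (2 * l - 1)).coeff (2 * l - 2 - i) = 0 :=
      coeff_eq_zero_of_degree_lt (dlt_mono hd (by omega))
    rw [coeff_sub, coeff_mul_X_pow', if_neg (by omega), sub_zero] at hc
    exact hc
  · intro H
    have hd2 := modByMonic_add_div (p * Q) (X ^ (2 * l - 1))
    have hs := degree_modByMonic_lt (p * Q) mX
    set s := (p * Q) %ₘ X ^ (2 * l - 1)
    set q := (p * Q) /ₘ X ^ (2 * l - 1)
    rw [degree_X_pow] at hs
    refine ⟨q, ?_⟩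
    have hs' : s.degree < ((2 * l - 1 - (n + 1) : ℕ) : WithBot ℕ) := by
      rw [degree_lt_iff_coeff_zero]
      intro m hm
      by_cases hm2 : 2 * l - 1 ≤ m
      · exact coeff_eq_zero_of_degree_lt (dlt_mono hs hm2)
      · have := H (2 * l - 2 - m) (by omega)
        rw [← hd2, show 2 * l - 2 - (2 * l - 2 - m) = m by omega, coeff_add, mul_comm,
          coeff_mul_X_pow', if_neg hm2, add_zero] at this
        exact this
    rw [← dlt_monic mX dX]
    have key : (p * v1 - q * v0) * X ^ (2 * l - 1) = s * v0 + p * T := by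
      linear_combination -p * hdiv - v0 * hd2
    rw [key]
    apply dlt_add
    · exact dlt_mono ((dlt_monic h0 d0).mpr hs') (by omega)
    · exact dlt_mono hpT (by omega)

lemma hankel {l n : ℕ} (hn : 1 ≤ n) (hnl : n ≤ l) {v0 v1 : ℂ[X]}
    (h0 : v0.Monic) (d0 : v0.natDegree = l) (M : ℕ → ℂ)
    (hM : (X ^ (2 * l - 1) * v1) /ₘ v0
      = ∑ k ∈ Finset.Icc 1 (2 * l - 1), C (M k) * X ^ (2 * l - 1 - k)) :
    Matrix.det (Matrix.of fun i j : Fin n => M ((i : ℕ) + (j : ℕ) + 1)) = 0 ↔ Sg n l v0 v1 := by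
  set Q := (X ^ (2 * l - 1) * v1) /ₘ v0 with hQ
  have hco : ∀ m, m ≤ 2 * l - 2 → Q.coeff (2 * l - 2 - m) = M (m + 1) := by
    intro m hm
    rw [hM, finset_sum_coeff, Finset.sum_eq_single (m + 1)]
    · rw [coeff_C_mul_X_pow, if_pos (by omega)]
    · intro k hk hk'
      rw [Finset.mem_Icc] at hk
      rw [coeff_C_mul_X_pow, if_neg (by omega)]
    · intro h
      exact absurd (Finset.mem_Icc.mpr ⟨by omega, by omega⟩) h
  have hmul : ∀ (c : Fin n → ℂ) (i : Fin n),
      ((∑ j : Fin n, C (c j) * X ^ (j : ℕ)) * Q).coeff (2 * l - 2 - i) =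
      ((Matrix.of fun i j : Fin n => M ((i : ℕ) + (j : ℕ) + 1)).mulVec c) i := by
    intro c i
    rw [Finset.sum_mul, finset_sum_coeff, Matrix.mulVec, dotProduct]
    refine Finset.sum_congr rfl fun j _ => ?_
    have hi := i.2
    have hj := j.2
    rw [mul_assoc, coeff_C_mul, coeff_X_pow_mul', if_pos (by omega),
      show 2 * l - 2 - (i : ℕ) - j = 2 * l - 2 - (i + j) by omega, hco _ (by omega), mul_comm]
    rfl
  rw [← Matrix.exists_mulVec_eq_zero_iff]
  constructor
  · rintro ⟨c, hc, hz⟩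
    set p : ℂ[X] := ∑ j : Fin n, C (c j) * X ^ (j : ℕ) with hpdef
    have hpd : p.degree < (n : WithBot ℕ) := degree_sum_fin_lt c
    have hpc : ∀ j : Fin n, p.coeff j = c j := by
      intro j
      simp [hpdef, finset_sum_coeff, coeff_X_pow, Fin.val_inj]
    obtain ⟨q, hq⟩ := (sg_iff hn hnl h0 d0 hQ p hpd).mpr fun i hi => by
      have := hmul c ⟨i, hi⟩
      rw [hz] at this
      exact this
    refine ⟨p, q, ?_, hpd, hq⟩
    intro hp
    apply hc
    funext j
    rw [← hpc j, hp]; simp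
  · rintro ⟨p, q, hp, hpd, hr⟩
    have hps : p = ∑ j : Fin n, C (p.coeff j) * X ^ (j : ℕ) := by
      rw [Fin.sum_univ_eq_sum_range (fun j => C (p.coeff j) * X ^ j)]
      apply as_sum_range_C_mul_X_pow'
      rcases dlt_iff.mp hpd with h | h
      · exact absurd h hp
      · exact h
    have H := (sg_iff hn hnl h0 d0 hQ p hpd).mp ⟨q, hr⟩
    refine ⟨fun j => p.coeff j, ?_, ?_⟩
    · intro h
      apply hp
      rw [hps]
      apply Finset.sum_eq_zero
      intro j _
      rw [show p.coeff j = 0 from congrFun h j]; simp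
    · funext i
      rw [← hmul, ← hps]
      exact H i i.2

end InvAux

/-- Theorem 3.1: solvability criterion for the inverse problem with polynomials in the
boundary condition. Given relatively prime polynomials `R0`, `R1` (of degrees `l`, `l-1`,
nonzero leading coefficients `r0 ≠ r1`) and complex numbers `Λ 1, …, Λ (2l-1)`, construct
`E = (r0 - r1) ∏ (X - Λ j)`, the unique monic `v0`, `v1` of degrees `l`, `l-1` with
`E = R0 v1 - R1 v0`, and the numbers `M k` as the coefficients of the quotient of
`X^{2l-1} v1` upon division by `v0`. Then `Λ 1, …, Λ (2l-1)` are the eigenvalues of the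
boundary value problem for some coefficients `a`, `b` with `a n ≠ 0` (`n = 1,…,l-1`),
`a l = 1`, if and only if the Hankel determinants `Δ_n` are nonzero for `n = 1,…,l-1`. -/
theorem inverse_problem_solvability_criterion (l : ℕ) (hl : 1 ≤ l)
    (R0 R1 : Polynomial ℂ) (r0 r1 : ℂ)
    (hcop : IsCoprime R0 R1)
    (hR0d : R0.degree = (l : WithBot ℕ)) (hR0lc : R0.leadingCoeff = r0) (hr0 : r0 ≠ 0)
    (hR1d : R1.degree = ((l - 1 : ℕ) : WithBot ℕ)) (hR1lc : R1.leadingCoeff = r1)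
    (hr1 : r1 ≠ 0) (hne : r0 ≠ r1)
    (Λ : ℕ → ℂ)
    (E : Polynomial ℂ)
    (hE : E = C (r0 - r1) * ∏ j ∈ Finset.Icc 1 (2 * l - 1), (X - C (Λ j)))
    (v0 v1 : Polynomial ℂ)
    (hv0m : v0.Monic) (hv0d : v0.degree = (l : WithBot ℕ))
    (hv1m : v1.Monic) (hv1d : v1.degree = ((l - 1 : ℕ) : WithBot ℕ))
    (hEv : E = R0 * v1 - R1 * v0)
    (M : ℕ → ℂ)
    (hM : (X ^ (2 * l - 1) * v1) /ₘ v0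
      = ∑ k ∈ Finset.Icc 1 (2 * l - 1), C (M k) * X ^ (2 * l - 1 - k)) :
    (∃ a b : ℕ → ℂ, (∀ n, 1 ≤ n → n ≤ l - 1 → a n ≠ 0) ∧ a l = 1 ∧
      ∃ v : ℕ → Polynomial ℂ, v (l + 1) = 0 ∧ v l = 1 ∧
        (∀ n, 1 ≤ n → n ≤ l →
          v (n - 1) = (X - C (b n)) * v n - C (a n) * v (n + 1)) ∧
        R0 * v 1 - R1 * v 0 = E) ↔
    (∀ n, 1 ≤ n → n ≤ l - 1 →
      Matrix.det (Matrix.of fun i j : Fin (n + 1) => M ((i : ℕ) + (j : ℕ) + 1)) ≠ 0) := by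
  obtain ⟨l, rfl⟩ : ∃ m, l = m + 1 := ⟨l - 1, by omega⟩
  simp only [Nat.add_sub_cancel] at hv1d hR1d ⊢
  have d0 : v0.natDegree = l + 1 := natDegree_eq_of_degree_eq_some hv0d
  have d1 : v1.natDegree = l := natDegree_eq_of_degree_eq_some hv1d
  have hmain := InvAux.ch_iff l hv0m d0 hv1m d1
  have hHank : (∀ n, 1 ≤ n → n ≤ l →
      Matrix.det (Matrix.of fun i j : Fin (n + 1) => M ((i : ℕ) + (j : ℕ) + 1)) ≠ 0) ↔
      ∀ n, 2 ≤ n → n ≤ l + 1 → ¬ InvAux.Sg n (l + 1) v0 v1 := by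
    constructor
    · intro H n h1 h2
      obtain ⟨n, rfl⟩ : ∃ m, n = m + 1 := ⟨n - 1, by omega⟩
      rw [← InvAux.hankel (by omega) h2 hv0m d0 M hM]
      exact H n (by omega) (by omega)
    · intro H n h1 h2
      rw [Ne, InvAux.hankel (by omega) (by omega) hv0m d0 M hM]
      exact H (n + 1) (by omega) (by omega)
  rw [hHank, ← hmain, InvAux.ch_seq]
  constructor
  · rintro ⟨a, b, hne', hal, v, hv, hv', hrec, hEE⟩
    have hc := (InvAux.ch_seq l (v 0) (v 1)).mpr ⟨a, b, hne', hal, v, hv, hv', hrec, rfl, rfl⟩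
    obtain ⟨m0, e0, m1, e1⟩ := InvAux.ch_monic l hc
    have hR0ne : R0 ≠ 0 := by
      intro h
      rw [h, leadingCoeff_zero] at hR0lc
      exact hr0 hR0lc.symm
    have hdvd : R0 ∣ v 0 - v0 := by
      apply hcop.dvd_of_dvd_mul_left
      exact ⟨v 1 - v1, by linear_combination -hEv - hEE⟩
    have hz : v 0 - v0 = 0 := by
      apply eq_zero_of_dvd_of_degree_lt hdvd
      rw [hR0d, ← hv0d]
      have hdd : (v 0).degree = v0.degree := by
        rw [hv0d, degree_eq_natDegree m0.ne_zero, e0]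
      rw [← hdd]
      exact degree_sub_lt hdd m0.ne_zero (by rw [m0.leadingCoeff, hv0m.leadingCoeff])
    have hz0 : v 0 = v0 := sub_eq_zero.mp hz
    refine ⟨a, b, hne', hal, v, hv, hv', hrec, hz0, ?_⟩
    apply mul_left_cancel₀ hR0ne
    rw [hz0] at hEE
    linear_combination hEE + hEv
  · rintro ⟨a, b, hne', hal, v, hv, hv', hrec, h0, h1⟩
    exact ⟨a, b, hne', hal, v, hv, hv', hrec, by rw [h0, h1, hEv]⟩
end

section
/- (Uniqueness for the inverse problem with polynomials in the boundary condition.) Suppose (a_1,…,a_l, b_1,…,b_l) and (ã_1,…,ã_l, b̃_1,…,b̃_l) are coefficient systems with a_n ≠ 0, ã_n ≠ 0 for n = 1,…,l−1 and a_l = ã_l = 1, whose boundary value problems have the same characteristic polynomial: R_0 v_1 − R_1 v_0 = R_0 ṽ_1 − R_1 ṽ_0 (equivalently, the same 2l−1 eigenvalues counted with multiplicity). Then a_n = ã_n for n = 1,…,l−1 and b_n = b̃_n for n = 1,…,l. -/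
open Polynomial

theorem aux_monic (l : ℕ) (a b : ℕ → ℂ) (v : ℕ → Polynomial ℂ)
    (hvl1 : v (l + 1) = 0) (hvl : v l = 1)
    (hvrec : ∀ n, 1 ≤ n → n ≤ l →
      v (n - 1) = (X - C (b n)) * v n - C (a n) * v (n + 1)) :
    ∀ k n, n + k = l → (v n).Monic ∧ (v n).degree = (k : WithBot ℕ) ∧
      (v (n + 1)).degree < (k : WithBot ℕ) := by
  intro k
  induction k with
  | zero =>
    intro n hn
    have : n = l := by omega
    subst this
    simp [hvl1, hvl]
  | succ k ih =>
    intro n hn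
    obtain ⟨h1, h2, h3⟩ := ih (n + 1) (by omega)
    have hr := hvrec (n + 1) (by omega) (by omega)
    simp only [Nat.add_sub_cancel] at hr
    have hm : ((X - C (b (n + 1))) * v (n + 1)).Monic := (monic_X_sub_C _).mul h1
    have hd : ((X - C (b (n + 1))) * v (n + 1)).degree = ((k + 1 : ℕ) : WithBot ℕ) := by
      rw [degree_mul, degree_X_sub_C, h2]
      push_cast
      rw [add_comm]
    have hlt : (C (a (n + 1)) * v (n + 1 + 1)).degree < ((k + 1 : ℕ) : WithBot ℕ) := by
      rw [← smul_eq_C_mul]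
      refine (degree_smul_le _ _).trans_lt (h3.trans ?_)
      exact_mod_cast Nat.lt_succ_self k
    rw [← hd] at hlt
    refine ⟨?_, ?_, ?_⟩
    · rw [hr]; exact hm.sub_of_left hlt
    · rw [hr, degree_sub_eq_left_of_degree_lt hlt, hd]
    · rw [h2]; exact_mod_cast Nat.lt_succ_self k

/-- Uniqueness for the inverse problem with polynomials in the boundary condition: two
coefficient systems (with `a n ≠ 0`, `ã n ≠ 0` for `n = 1,…,l-1`, `a l = ã l = 1`) whose
boundary value problems have the same characteristic polynomial `R0 v1 - R1 v0`
(equivalently the same `2l-1` eigenvalues with multiplicity) coincide. -/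
theorem inverse_problem_uniqueness (l : ℕ) (hl : 1 ≤ l)
    (R0 R1 : Polynomial ℂ) (r0 r1 : ℂ)
    (hcop : IsCoprime R0 R1)
    (hR0d : R0.degree = (l : WithBot ℕ)) (hR0lc : R0.leadingCoeff = r0) (hr0 : r0 ≠ 0)
    (hR1d : R1.degree = ((l - 1 : ℕ) : WithBot ℕ)) (hR1lc : R1.leadingCoeff = r1)
    (hr1 : r1 ≠ 0) (hne : r0 ≠ r1)
    (a b a' b' : ℕ → ℂ)
    (ha : ∀ n, 1 ≤ n → n ≤ l - 1 → a n ≠ 0) (hal : a l = 1)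
    (ha' : ∀ n, 1 ≤ n → n ≤ l - 1 → a' n ≠ 0) (hal' : a' l = 1)
    (v v' : ℕ → Polynomial ℂ)
    (hvl1 : v (l + 1) = 0) (hvl : v l = 1)
    (hvrec : ∀ n, 1 ≤ n → n ≤ l →
      v (n - 1) = (X - C (b n)) * v n - C (a n) * v (n + 1))
    (hv'l1 : v' (l + 1) = 0) (hv'l : v' l = 1)
    (hv'rec : ∀ n, 1 ≤ n → n ≤ l →
      v' (n - 1) = (X - C (b' n)) * v' n - C (a' n) * v' (n + 1))
    (hsame : R0 * v 1 - R1 * v 0 = R0 * v' 1 - R1 * v' 0) :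
    (∀ n, 1 ≤ n → n ≤ l - 1 → a n = a' n) ∧ (∀ n, 1 ≤ n → n ≤ l → b n = b' n) := by
  have hm := aux_monic l a b v hvl1 hvl hvrec
  have hm' := aux_monic l a' b' v' hv'l1 hv'l hv'rec
  have hR0 : R0 ≠ 0 := by
    rintro rfl
    simp at hR0lc
    exact hr0 hR0lc.symm
  have heq : R0 * (v 1 - v' 1) = R1 * (v 0 - v' 0) := by linear_combination hsame
  have h0 : v 0 = v' 0 := by
    have hdvd : R0 ∣ v 0 - v' 0 := hcop.dvd_of_dvd_mul_left ⟨_, heq.symm⟩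
    obtain ⟨p1, p2, -⟩ := hm l 0 (by omega)
    obtain ⟨q1, q2, -⟩ := hm' l 0 (by omega)
    have hlt : (v 0 - v' 0).degree < R0.degree := by
      rw [hR0d, ← p2]
      exact degree_sub_lt (by rw [p2, q2]) p1.ne_zero (by rw [p1.leadingCoeff, q1.leadingCoeff])
    exact sub_eq_zero.mp (eq_zero_of_dvd_of_degree_lt hdvd hlt)
  have h1 : v 1 = v' 1 := by
    rw [h0, sub_self, mul_zero] at heq
    exact sub_eq_zero.mp ((mul_eq_zero.mp heq).resolve_left hR0)
  have step : ∀ n, 1 ≤ n → n ≤ l → v (n - 1) = v' (n - 1) → v n = v' n →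
      b n = b' n ∧ (n ≤ l - 1 → a n = a' n ∧ v (n + 1) = v' (n + 1)) := by
    intro n hn hnl e0 e1
    have r := hvrec n hn hnl
    have r' := hv'rec n hn hnl
    obtain ⟨p1, p2, p3⟩ := hm (l - n) n (by omega)
    obtain ⟨q1, q2, q3⟩ := hm' (l - n) n (by omega)
    have key : C (b' n - b n) * v n = C (a n) * v (n + 1) - C (a' n) * v' (n + 1) := by
      rw [C_sub]
      rw [← e0, r, ← e1] at r'
      linear_combination r'
    have hb : b n = b' n := by
      by_contra hne'
      have hlt : (C (a n) * v (n + 1) - C (a' n) * v' (n + 1)).degree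
          < ((l - n : ℕ) : WithBot ℕ) := by
        rw [← smul_eq_C_mul, ← smul_eq_C_mul]
        exact (degree_sub_le _ _).trans_lt
          (max_lt ((degree_smul_le _ _).trans_lt p3) ((degree_smul_le _ _).trans_lt q3))
      rw [← key, degree_C_mul (sub_ne_zero.mpr (Ne.symm hne')), p2] at hlt
      exact lt_irrefl _ hlt
    refine ⟨hb, fun hn1 => ?_⟩
    obtain ⟨s1, -, -⟩ := hm (l - (n + 1)) (n + 1) (by omega)
    obtain ⟨t1, -, -⟩ := hm' (l - (n + 1)) (n + 1) (by omega)
    rw [hb, sub_self, C_0, zero_mul] at key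
    have key2 := sub_eq_zero.mp key.symm
    have haa : a n = a' n := by
      have := congrArg leadingCoeff key2
      simpa [leadingCoeff_mul, s1.leadingCoeff, t1.leadingCoeff] using this
    refine ⟨haa, ?_⟩
    rw [← haa] at key2
    exact mul_left_cancel₀ (C_ne_zero.mpr (ha n hn hn1)) key2
  have all : ∀ n, n + 1 ≤ l → v n = v' n ∧ v (n + 1) = v' (n + 1) := by
    intro n
    induction n with
    | zero => exact fun _ => ⟨h0, h1⟩
    | succ n ih =>
      intro hn
      obtain ⟨e0, e1⟩ := ih (by omega)
      exact ⟨e1, ((step (n + 1) (by omega) (by omega) e0 e1).2 (by omega)).2⟩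
  have fin : ∀ n, 1 ≤ n → n ≤ l → b n = b' n ∧ (n ≤ l - 1 → a n = a' n ∧ v (n + 1) = v' (n + 1)) := by
    intro n hn hnl
    obtain ⟨e0, e1⟩ := all (n - 1) (by omega)
    rw [Nat.sub_add_cancel hn] at e1
    exact step n hn hnl e0 e1
  exact ⟨fun n hn hnl => ((fin n hn (by omega)).2 hnl).1, fun n hn hnl => (fin n hn hnl).1⟩
end

section
/- (Theorem 3.2, solvability criterion for the inverse discrete transmission eigenvalue problem.) Let λ_1,…,λ_{2l−1} be complex numbers. Set R_0(λ) = α_l φ•_{l+1}(λ), R_1(λ) = φ•_l(λ), r_1 = ∏_{k=1}^{l−1} (α•_k)^{−1}, r_0 = (α_l/α•_l) r_1 (the leading coefficients of R_0 and R_1). Define E(λ) = (r_0 − r_1)·∏_{j=1}^{2l−1}(λ − λ_j); let v_0 (monic, degree l) and v_1 (monic, degree l−1) be the unique polynomials with E = R_0 v_1 − R_1 v_0; and let M_1,…,M_{2l−1} be the coefficients of the quotient of λ^{2l−1} v_1(λ) upon division by v_0(λ), written as quotient = Σ_{k=1}^{2l−1} M_k λ^{2l−1−k}. Then λ_1,…,λ_{2l−1}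 are the eigenvalues, counted with multiplicity, of the transmission problem for some complex numbers α_1,…,α_{l−1} (all nonzero, together with the given α_l) and β_1,…,β_l, if and only if the Hankel determinants Δ_n := det[M_{i+j−1}]_{i,j=1}^{n+1} are nonzero for all n = 1,…,l−1. -/
open Polynomial

namespace TIP

def ND (l : ℕ) (u v : Polynomial ℂ) (n : ℕ) : Prop :=
  ∀ p s : Polynomial ℂ, p.degree < (n : WithBot ℕ) →
    (p * v - s * u).degree < ((l - n : ℕ) : WithBot ℕ) → p = 0

lemma dlt_mono {p : Polynomial ℂ} {a b : ℕ} (h : p.degree < (a : WithBot ℕ)) (hab : a ≤ b) :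
    p.degree < (b : WithBot ℕ) :=
  lt_of_lt_of_le h (by exact_mod_cast hab)

lemma dlt_sub {p q : Polynomial ℂ} {a : ℕ} (hp : p.degree < (a : WithBot ℕ))
    (hq : q.degree < (a : WithBot ℕ)) : (p - q).degree < (a : WithBot ℕ) :=
  lt_of_le_of_lt (degree_sub_le p q) (max_lt hp hq)

lemma dlt_add {p q : Polynomial ℂ} {a : ℕ} (hp : p.degree < (a : WithBot ℕ))
    (hq : q.degree < (a : WithBot ℕ)) : (p + q).degree < (a : WithBot ℕ) :=
  lt_of_le_of_lt (degree_add_le p q) (max_lt hp hq)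

lemma dlt_mul {p u : Polynomial ℂ} {k d : ℕ} (hp : p.degree < (k : WithBot ℕ))
    (hu : u.degree ≤ (d : WithBot ℕ)) : (p * u).degree < ((k + d : ℕ) : WithBot ℕ) := by
  by_cases hp0 : p = 0
  · subst hp0
    simp only [zero_mul, degree_zero]; exact WithBot.bot_lt_coe _
  by_cases hu0 : u = 0
  · subst hu0
    simp only [mul_zero, degree_zero]; exact WithBot.bot_lt_coe _
  rw [degree_mul, degree_eq_natDegree hp0, degree_eq_natDegree hu0]
  rw [degree_eq_natDegree hp0] at hp
  rw [degree_eq_natDegree hu0] at hu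
  norm_cast at *
  omega

lemma dlt_of_mul {p u : Polynomial ℂ} {k d : ℕ} (hu : u.degree = (d : WithBot ℕ))
    (h : (p * u).degree < ((k + d : ℕ) : WithBot ℕ)) : p.degree < (k : WithBot ℕ) := by
  by_cases hp0 : p = 0
  · subst hp0
    simp only [degree_zero]; exact WithBot.bot_lt_coe _
  rw [degree_mul, hu, degree_eq_natDegree hp0] at h
  rw [degree_eq_natDegree hp0]
  norm_cast at *
  omega

lemma eq_zero_of_dlt {p : Polynomial ℂ} (h : p.degree < ((0 : ℕ) : WithBot ℕ)) : p = 0 := by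
  rw [← degree_eq_bot]
  simpa using h

lemma eq_zero_of_mul {p u : Polynomial ℂ} {k d : ℕ} (hu : u.degree = (d : WithBot ℕ))
    (h : (p * u).degree < (k : WithBot ℕ)) (hk : k ≤ d) : p = 0 :=
  eq_zero_of_dlt (dlt_of_mul (k := 0) hu (dlt_mono h (by omega)))

lemma dle_of_dlt {p : Polynomial ℂ} {a : ℕ} (h : p.degree < ((a + 1 : ℕ) : WithBot ℕ)) :
    p.degree ≤ (a : WithBot ℕ) := by
  by_cases hp0 : p = 0
  · subst hp0; simp
  rw [degree_eq_natDegree hp0] at *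
  norm_cast at *
  omega

lemma ND_scale {l n : ℕ} {u v : Polynomial ℂ} {a b : ℂ} (hb : b ≠ 0)
    (h : ND l u v n) : ND l (C a * u) (C b * v) n := by
  intro p s hp hps
  have := h (C b * p) (C a * s) (by rwa [degree_C_mul hb])
    (by convert hps using 2; ring)
  simpa [hb] using this

lemma ND_one {m : ℕ} {u v : Polynomial ℂ} (hu : u.degree = ((m + 1 : ℕ) : WithBot ℕ))
    (hv : v.degree = (m : WithBot ℕ)) : ND (m + 1) u v 1 := by
  intro p s hp hps
  have h1 : (p * v).degree < ((m + 1 : ℕ) : WithBot ℕ) :=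
    dlt_mono (dlt_mul hp hv.le) (by omega)
  have hs : s = 0 := by
    apply eq_zero_of_mul hu (k := m + 1) _ le_rfl
    have : s * u = p * v - (p * v - s * u) := by ring
    rw [this]
    exact dlt_sub h1 (dlt_mono hps (by omega))
  subst hs
  rw [zero_mul, sub_zero] at hps
  exact eq_zero_of_mul hv hps (by omega)

lemma ND_up {m n : ℕ} {v0 v1 w : Polynomial ℂ} {β : ℂ}
    (h0 : v0.degree = ((m + 2 : ℕ) : WithBot ℕ)) (h1 : v1.degree = ((m + 1 : ℕ) : WithBot ℕ))
    (hr : v0 = (X - C β) * v1 - w)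
    (h : ND (m + 1) v1 w n) : ND (m + 2) v0 v1 (n + 1) := by
  intro p s hp hps
  have hs : s.degree < (n : WithBot ℕ) ∨ p = 0 := by
    left
    apply dlt_of_mul h0
    have : s * v0 = p * v1 - (p * v1 - s * v0) := by ring
    rw [this]
    exact dlt_sub (dlt_mono (dlt_mul hp h1.le) (by omega)) (dlt_mono hps (by omega))
  rcases hs with hs | hs
  · have hs0 := h s ((X - C β) * s - p) hs (by
      have e : s * w - ((X - C β) * s - p) * v1 = p * v1 - s * v0 := by rw [hr]; ring
      rw [e]; exact dlt_mono hps (by omega))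
    subst hs0
    rw [zero_mul, sub_zero] at hps
    exact eq_zero_of_mul h1 hps (by omega)
  · exact hs

lemma ND_down {m n : ℕ} {v0 v1 w : Polynomial ℂ} {β : ℂ} 
    (h0 : v0.degree = ((m + 2 : ℕ) : WithBot ℕ)) (h1 : v1.degree = ((m + 1 : ℕ) : WithBot ℕ))
    (hw : w.degree ≤ (m : WithBot ℕ)) (hn : 1 ≤ n)
    (hr : v0 = (X - C β) * v1 - w)
    (h : ND (m + 2) v0 v1 (n + 1)) : ND (m + 1) v1 w n := by
  intro s t hs hst
  have ht : t.degree < (n : WithBot ℕ) := by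
    apply dlt_of_mul h1
    have : t * v1 = s * w - (s * w - t * v1) := by ring
    rw [this]
    exact dlt_sub (dlt_mono (dlt_mul hs hw) (by omega)) (dlt_mono hst (by omega))
  have hp := h (s * (X - C β) - t) s
    (dlt_sub (dlt_mul hs (d := 1) (by rw [degree_X_sub_C]; rfl)) (dlt_mono ht (by omega)))
    (by
      have e : (s * (X - C β) - t) * v1 - s * v0 = s * w - t * v1 := by rw [hr]; ring
      rw [e]; exact dlt_mono hst (by omega))
  apply eq_zero_of_mul h0 (k := m + 1 - n) _ (by omega)
  have ht' : t = s * (X - C β) := (sub_eq_zero.mp hp).symm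
  have e : s * v0 = - (s * w - t * v1) := by rw [hr, ht']; ring
  rw [e, degree_neg]; exact hst

lemma solve_rec {a b : ℂ} (ha : a ≠ 0) {p q r : Polynomial ℂ}
    (h : C a * p + C b * q + C a * r = X * q) : p = C a⁻¹ * ((X - C b) * q) - r := by
  have h1 : C a⁻¹ * C a = (1 : Polynomial ℂ) := by
    rw [← C_mul, inv_mul_cancel₀ ha, C_1]
  linear_combination C a⁻¹ * h - (p + r) * h1

lemma deg_phi_aux {l : ℕ} {α β : ℕ → ℂ} {φ : ℕ → Polynomial ℂ}
    (hα : ∀ n, 1 ≤ n → n ≤ l → α n ≠ 0) (h0 : φ 0 = 0) (h1 : φ 1 = 1)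
    (hrec : ∀ n, 1 ≤ n → n ≤ l →
      C (α n) * φ (n + 1) + C (β n) * φ n + C (α n) * φ (n - 1) = X * φ n) :
    ∀ n, n ≤ l → (φ n).degree < (n : WithBot ℕ) ∧
      (φ (n + 1)).degree < ((n + 1 : ℕ) : WithBot ℕ) ∧
      (φ (n + 1)).coeff n = ∏ k ∈ Finset.Icc 1 n, (α k)⁻¹ := by
  intro n
  induction n with
  | zero =>
    intro _
    refine ⟨?_, ?_, ?_⟩
    · rw [h0]; simp
    · rw [h1]; simp
    · simp [h1]
  | succ n ih =>
    intro hn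
    obtain ⟨a1, a2, a3⟩ := ih (by omega)
    have hs := solve_rec (hα (n + 1) (by omega) hn) (hrec (n + 1) (by omega) hn)
    rw [Nat.add_sub_cancel] at hs
    refine ⟨a2, ?_, ?_⟩
    · rw [hs]
      apply dlt_sub _ (dlt_mono a1 (by omega))
      rw [degree_C_mul (inv_ne_zero (hα (n + 1) (by omega) hn)), mul_comm]
      exact dlt_mul a2 (by rw [degree_X_sub_C]; rfl)
    · rw [hs, Finset.prod_Icc_succ_top (by omega), ← a3, coeff_sub, coeff_C_mul, sub_mul,
        coeff_sub, coeff_X_mul, coeff_C_mul,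
        coeff_eq_zero_of_degree_lt a2,
        coeff_eq_zero_of_degree_lt (dlt_mono a1 (by omega))]
      ring

lemma deg_phi {l : ℕ} {α β : ℕ → ℂ} {φ : ℕ → Polynomial ℂ}
    (hα : ∀ n, 1 ≤ n → n ≤ l → α n ≠ 0) (h0 : φ 0 = 0) (h1 : φ 1 = 1)
    (hrec : ∀ n, 1 ≤ n → n ≤ l →
      C (α n) * φ (n + 1) + C (β n) * φ n + C (α n) * φ (n - 1) = X * φ n)
    (n : ℕ) (hn : n ≤ l) : (φ (n + 1)).degree = (n : WithBot ℕ) ∧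
      (φ (n + 1)).coeff n = ∏ k ∈ Finset.Icc 1 n, (α k)⁻¹ := by
  obtain ⟨a1, a2, a3⟩ := deg_phi_aux hα h0 h1 hrec n hn
  refine ⟨le_antisymm (dle_of_dlt a2) (le_degree_of_ne_zero ?_), a3⟩
  rw [a3, Finset.prod_ne_zero_iff]
  intro k hk
  rw [Finset.mem_Icc] at hk
  exact inv_ne_zero (hα k hk.1 (by omega))

lemma coprime_phi {l : ℕ} {α β : ℕ → ℂ} {φ : ℕ → Polynomial ℂ}
    (hα : ∀ n, 1 ≤ n → n ≤ l → α n ≠ 0) (h1 : φ 1 = 1)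
    (hrec : ∀ n, 1 ≤ n → n ≤ l →
      C (α n) * φ (n + 1) + C (β n) * φ n + C (α n) * φ (n - 1) = X * φ n)
    (n : ℕ) (hn : n ≤ l) : IsCoprime (φ n) (φ (n + 1)) := by
  induction n with
  | zero => rw [h1]; exact isCoprime_one_right
  | succ n ih =>
    have hs := solve_rec (hα (n + 1) (by omega) hn) (hrec (n + 1) (by omega) hn)
    rw [Nat.add_sub_cancel] at hs
    obtain ⟨x, y, hxy⟩ := ih (by omega)
    refine ⟨y + x * (C (α (n + 1))⁻¹ * (X - C (β (n + 1)))), -x, ?_⟩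
    rw [hs]
    linear_combination hxy

lemma ND_phi {l : ℕ} {α β : ℕ → ℂ} {φ : ℕ → Polynomial ℂ}
    (hα : ∀ n, 1 ≤ n → n ≤ l → α n ≠ 0) (h0 : φ 0 = 0) (h1 : φ 1 = 1)
    (hrec : ∀ n, 1 ≤ n → n ≤ l →
      C (α n) * φ (n + 1) + C (β n) * φ n + C (α n) * φ (n - 1) = X * φ n)
    (m : ℕ) (hm : m + 1 ≤ l) : ∀ n, 1 ≤ n → n ≤ m + 1 →
      ND (m + 1) (φ (m + 2)) (φ (m + 1)) n := by
  induction m with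
  | zero =>
    intro n hn hn'
    obtain rfl : n = 1 := by omega
    exact ND_one (deg_phi hα h0 h1 hrec 1 hm).1 (deg_phi hα h0 h1 hrec 0 (by omega)).1
  | succ m ih =>
    intro n hn hn'
    have d2 := (deg_phi hα h0 h1 hrec (m + 2) hm).1
    have d1 := (deg_phi hα h0 h1 hrec (m + 1) (by omega)).1
    have d0 := (deg_phi hα h0 h1 hrec m (by omega)).1
    rcases Nat.lt_or_ge 1 n with h | h
    · obtain ⟨k, rfl⟩ : ∃ k, n = k + 1 := ⟨n - 1, by omega⟩
      have ha := hα (m + 2) (by omega) hm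
      have hND := ND_scale (a := 1) ha (ih (by omega) k (by omega) (by omega))
      rw [C_1, one_mul] at hND
      have hr := hrec (m + 2) (by omega) hm
      have := ND_up (v0 := C (α (m + 2)) * φ (m + 3)) (β := β (m + 2))
        (by rw [degree_C_mul ha]; exact d2) d1
        (by
          simp only [show m + 2 - 1 = m + 1 by omega, show m + 2 + 1 = m + 3 by omega] at hr
          linear_combination hr) hND
      have := ND_scale (a := (α (m + 2))⁻¹) (b := 1) one_ne_zero this
      rwa [C_1, one_mul, ← mul_assoc, ← C_mul, inv_mul_cancel₀ ha, C_1, one_mul] at this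
    · obtain rfl : n = 1 := by omega
      exact ND_one d2 d1

lemma chain_ex (m : ℕ) : ∀ (v0 v1 : Polynomial ℂ) (αl : ℂ), αl ≠ 0 → v0.Monic → v1.Monic →
    v0.degree = ((m + 1 : ℕ) : WithBot ℕ) → v1.degree = (m : WithBot ℕ) →
    (∀ n, 2 ≤ n → n ≤ m + 1 → ND (m + 1) v0 v1 n) →
    ∃ α β : ℕ → ℂ, (∀ n, 1 ≤ n → n ≤ m + 1 → α n ≠ 0) ∧ α (m + 1) = αl ∧
      ∃ φ : ℕ → Polynomial ℂ, φ 0 = 0 ∧ φ 1 = 1 ∧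
        (∀ n, 1 ≤ n → n ≤ m + 1 →
          C (α n) * φ (n + 1) + C (β n) * φ n + C (α n) * φ (n - 1) = X * φ n) ∧
        ∃ a : ℂ, a ≠ 0 ∧ φ (m + 1) = C a * v1 ∧ C αl * φ (m + 2) = C a * v0 := by
  induction m with
  | zero =>
    intro v0 v1 αl hα hm0 hm1 hd0 hd1 _
    have e1 : v1 = 1 := by
      rw [eq_C_of_degree_eq_zero (p := v1) (by simpa using hd1)]
      have := hm1.coeff_natDegree
      rw [natDegree_eq_of_degree_eq_some hd1] at this
      rw [this, C_1]
    have e0 : v0 = X + C (v0.coeff 0) := by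
      have h := eq_X_add_C_of_degree_le_one (p := v0) (by rw [hd0]; rfl)
      have := hm0.coeff_natDegree
      rw [natDegree_eq_of_degree_eq_some hd0] at this
      simp only [zero_add] at this
      rw [this, C_1, one_mul] at h
      exact h
    have hc : C αl * C αl⁻¹ = (1 : Polynomial ℂ) := by
      rw [← C_mul, mul_inv_cancel₀ hα, C_1]
    refine ⟨fun _ => αl, fun _ => - v0.coeff 0, fun _ _ _ => hα, rfl,
      fun n => if n = 0 then 0 else if n = 1 then 1 else C αl⁻¹ * v0, by simp, by simp, ?_,
      1, one_ne_zero, by simp [e1], ?_⟩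
    · intro n hn hn'
      obtain rfl : n = 1 := by omega
      simp only [C_neg]
      norm_num
      rw [← mul_assoc, hc]
      linear_combination e0
    · norm_num
      rw [← mul_assoc, hc, one_mul]
  | succ m ih =>
    intro v0 v1 αl hα hm0 hm1 hd0 hd1 hND
    have c0 : v0.coeff (m + 2) = 1 := by
      have := hm0.coeff_natDegree
      rwa [natDegree_eq_of_degree_eq_some hd0] at this
    have c1 : v1.coeff (m + 1) = 1 := by
      have := hm1.coeff_natDegree
      rwa [natDegree_eq_of_degree_eq_some hd1] at this
    obtain ⟨b, hb⟩ : ∃ b : ℂ, b = v1.coeff m - v0.coeff (m + 1) := ⟨_, rfl⟩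
    obtain ⟨w, hw⟩ : ∃ w : Polynomial ℂ, w = (X - C b) * v1 - v0 := ⟨_, rfl⟩
    have hwd : w.degree ≤ (m : WithBot ℕ) := by
      rw [degree_le_iff_coeff_zero]
      intro k hk
      have hk : m < k := by exact_mod_cast hk
      obtain ⟨j, rfl⟩ : ∃ j, k = j + 1 := ⟨k - 1, by omega⟩
      rw [hw, sub_mul, coeff_sub, coeff_sub, coeff_X_mul, coeff_C_mul]
      rcases Nat.lt_trichotomy j (m + 1) with h | h | h
      · obtain rfl : j = m := by omega
        rw [c1, hb]; ring
      · subst h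
        rw [c1, c0, coeff_eq_zero_of_degree_lt (p := v1) (n := m + 1 + 1)]
        · ring
        · rw [hd1]; exact_mod_cast Nat.lt_succ_self _
      · rw [coeff_eq_zero_of_degree_lt (p := v1) (n := j),
          coeff_eq_zero_of_degree_lt (p := v1) (n := j + 1),
          coeff_eq_zero_of_degree_lt (p := v0) (n := j + 1)]
        · ring
        · rw [hd0]; exact_mod_cast (by omega : m + 1 + 1 < j + 1)
        · rw [hd1]; exact_mod_cast (by omega : m + 1 < j + 1)
        · rw [hd1]; exact_mod_cast h
    have hr : v0 = (X - C b) * v1 - w := by rw [hw]; ring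
    have hND' : ∀ n, 1 ≤ n → n ≤ m + 1 → ND (m + 1) v1 w n := fun n hn hn' =>
      ND_down hd0 hd1 hwd hn hr (hND (n + 1) (by omega) (by omega))
    have hg : w.coeff m ≠ 0 := by
      intro h
      have := hND' 1 le_rfl (by omega) 1 0 (by simp) (by
        rw [one_mul, zero_mul, sub_zero, degree_lt_iff_coeff_zero]
        intro k hk
        rcases Nat.lt_or_ge m k with h' | h'
        · exact coeff_eq_zero_of_degree_lt (lt_of_le_of_lt hwd (by exact_mod_cast h'))
        · obtain rfl : k = m := by omega
          exact h)
      exact one_ne_zero this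
    obtain ⟨g, hgdef⟩ : ∃ g : ℂ, g = w.coeff m := ⟨_, rfl⟩
    rw [← hgdef] at hg
    have hwd' : w.degree = (m : WithBot ℕ) :=
      le_antisymm hwd (le_degree_of_ne_zero (by rwa [← hgdef]))
    obtain ⟨v2, hv2⟩ : ∃ v2 : Polynomial ℂ, v2 = C g⁻¹ * w := ⟨_, rfl⟩
    have hw2 : w = C g * v2 := by
      rw [hv2, ← mul_assoc, ← C_mul, mul_inv_cancel₀ hg, C_1, one_mul]
    have hd2 : v2.degree = (m : WithBot ℕ) := by
      rw [hv2, degree_C_mul (inv_ne_zero hg), hwd']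
    have hm2 : v2.Monic := by
      rw [Monic, leadingCoeff, natDegree_eq_of_degree_eq_some hd2, hv2, coeff_C_mul, ← hgdef,
        inv_mul_cancel₀ hg]
    obtain ⟨α, β, h1, h2, φ, h3, h4, h5, a, h6, h7, h8⟩ :=
      ih v1 v2 (g / αl) (div_ne_zero hg hα) hm1 hm2 hd1 hd2 (by
        intro n hn hn'
        have := ND_scale (a := 1) (inv_ne_zero hg) (hND' n (by omega) hn')
        rwa [C_1, one_mul, ← hv2] at this)
    have hga : g / αl ≠ 0 := div_ne_zero hg hα
    have hc : C αl * C αl⁻¹ = (1 : Polynomial ℂ) := by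
      rw [← C_mul, mul_inv_cancel₀ hα, C_1]
    have h8' : φ (m + 2) = C (a / (g / αl)) * v1 := by
      have : C (g / αl)⁻¹ * C (g / αl) = (1 : Polynomial ℂ) := by
        rw [← C_mul, inv_mul_cancel₀ hga, C_1]
      have e : C (a / (g / αl)) = C (g / αl)⁻¹ * C a := by
        rw [← C_mul]; congr 1; field_simp
      rw [e]
      linear_combination C (g / αl)⁻¹ * h8 - φ (m + 2) * this
    have hlast : C αl * (C αl⁻¹ * (C (a / (g / αl)) * v0)) = C (a / (g / αl)) * v0 := by
      rw [← mul_assoc, hc, one_mul]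
    refine ⟨fun n => if n = m + 2 then αl else α n, fun n => if n = m + 2 then b else β n, ?_,
      by simp, fun n => if n = m + 3 then C αl⁻¹ * (C (a / (g / αl)) * v0) else φ n,
      by simp [h3], by simp [h4], ?_, a / (g / αl), div_ne_zero h6 hga, ?_, ?_⟩
    · intro n hn hn'
      by_cases h : n = m + 2
      · simp [h, hα]
      · simp only [h, if_false]; exact h1 n hn (by omega)
    · intro n hn hn'
      by_cases h : n = m + 2
      · subst h
        simp only [if_true, show m + 2 + 1 = m + 3 by omega, show m + 2 - 1 = m + 1 by omega,
          show ¬ (m + 2 = m + 3) by omega, show ¬ (m + 1 = m + 3) by omega, if_false]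
        rw [hlast, h8', h7, hr, hw2]
        have e : C αl * C a = C (a / (g / αl)) * C g := by
          rw [← C_mul, ← C_mul]; congr 1; field_simp
        linear_combination v2 * e
      · simp only [h, show ¬ (n + 1 = m + 3) by omega, show ¬ (n = m + 3) by omega,
          show ¬ (n - 1 = m + 3) by omega, if_false]
        exact h5 n hn (by omega)
    · simp only [show ¬ (m + 1 + 1 = m + 3) by omega, if_false]
      exact h8'
    · simp only [show m + 1 + 2 = m + 3 by omega, if_true]
      exact hlast

lemma hankel_iff {l n : ℕ} (hn : 1 ≤ n) (hnl : n ≤ l) {v0 v1 : Polynomial ℂ}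
    (hm0 : v0.Monic) (hd0 : v0.degree = (l : WithBot ℕ))
    (M : ℕ → ℂ)
    (hM : (X ^ (2 * l - 1) * v1) /ₘ v0
      = ∑ k ∈ Finset.Icc 1 (2 * l - 1), C (M k) * X ^ (2 * l - 1 - k)) :
    Matrix.det (Matrix.of fun i j : Fin n => M ((i : ℕ) + (j : ℕ) + 1)) ≠ 0 ↔
      ND l v0 v1 n := by
  obtain ⟨Q, hQ⟩ : ∃ Q, Q = (X ^ (2 * l - 1) * v1) /ₘ v0 := ⟨_, rfl⟩
  obtain ⟨R, hR⟩ : ∃ R, R = (X ^ (2 * l - 1) * v1) %ₘ v0 := ⟨_, rfl⟩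
  have hRd : R.degree < (l : WithBot ℕ) := by
    rw [hR, ← hd0]; exact degree_modByMonic_lt _ hm0
  have hdiv : R + v0 * Q = X ^ (2 * l - 1) * v1 := by
    rw [hR, hQ]; exact modByMonic_add_div _ _
  have hQc : ∀ k, 1 ≤ k → k ≤ 2 * l - 1 → Q.coeff (2 * l - 1 - k) = M k := by
    intro k hk hk'
    rw [hQ, hM, finsetSum_coeff, Finset.sum_eq_single k]
    · simp
    · intro b hb hbk
      rw [Finset.mem_Icc] at hb
      rw [coeff_C_mul, coeff_X_pow, if_neg (by omega), mul_zero]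
    · intro h
      exact absurd (Finset.mem_Icc.mpr ⟨hk, hk'⟩) h
  -- coefficients of the product
  have hprod : ∀ p : Polynomial ℂ, p.degree < (n : WithBot ℕ) → ∀ i : Fin n,
      (p * Q).coeff (2 * l - 2 - i) =
        Matrix.mulVec (Matrix.of fun i j : Fin n => M ((i : ℕ) + (j : ℕ) + 1))
          (fun j => p.coeff j) i := by
    intro p hp i
    have hi := i.2
    rw [coeff_mul, Finset.Nat.sum_antidiagonal_eq_sum_range_succ
      (fun a b => p.coeff a * Q.coeff b)]
    change _ = ∑ j : Fin n, M ((i : ℕ) + (j : ℕ) + 1) * p.coeff (j : ℕ)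
    rw [Fin.sum_univ_eq_sum_range (fun j => (M ((i : ℕ) + j + 1)) * p.coeff j) n]
    rw [← Finset.sum_subset (s₁ := Finset.range n)]
    · apply Finset.sum_congr rfl
      intro j hj
      rw [Finset.mem_range] at hj
      rw [← hQc (i + j + 1) (by omega) (by omega), mul_comm]
      congr 2
      omega
    · intro j hj
      rw [Finset.mem_range] at *
      omega
    · intro j _ hj
      rw [Finset.mem_range, not_lt] at hj
      rw [coeff_eq_zero_of_degree_lt (lt_of_lt_of_le hp (by exact_mod_cast hj)), zero_mul]
  have hkey : ∀ p s : Polynomial ℂ, p.degree < (n : WithBot ℕ) →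
      ((p * v1 - s * v0).degree < ((l - n : ℕ) : WithBot ℕ) ↔
        (p * Q - s * X ^ (2 * l - 1)).degree < ((2 * l - 1 - n : ℕ) : WithBot ℕ)) := by
    intro p s hp
    have e : (p * v1 - s * v0) * X ^ (2 * l - 1) =
        (p * Q - s * X ^ (2 * l - 1)) * v0 + p * R := by
      linear_combination -p * hdiv
    have hpR : (p * R).degree < ((l - n + (2 * l - 1) : ℕ) : WithBot ℕ) :=
      dlt_mono (dlt_mul hp (d := l - 1) (dle_of_dlt (by rwa [Nat.sub_add_cancel (by omega)])))
        (by omega)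
    have hX : (X ^ (2 * l - 1) : Polynomial ℂ).degree = ((2 * l - 1 : ℕ) : WithBot ℕ) :=
      degree_X_pow _
    constructor
    · intro h
      apply dlt_of_mul hd0
      have h' := dlt_mul h hX.le
      rw [show (p * Q - s * X ^ (2 * l - 1)) * v0 =
        (p * v1 - s * v0) * X ^ (2 * l - 1) - p * R by rw [e]; ring]
      exact dlt_mono (dlt_sub h' hpR) (by omega)
    · intro h
      apply dlt_of_mul hX
      rw [e]
      exact dlt_add (dlt_mono (dlt_mul h hd0.le) (by omega)) hpR
  constructor
  · intro hdet p s hp hps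
    rw [hkey p s hp] at hps
    by_contra hp0
    apply hdet
    rw [← Matrix.exists_mulVec_eq_zero_iff]
    refine ⟨fun j => p.coeff j, ?_, ?_⟩
    · intro h
      apply hp0
      ext k
      rcases Nat.lt_or_ge k n with h' | h'
      · exact congrFun h ⟨k, h'⟩
      · rw [coeff_eq_zero_of_degree_lt (lt_of_lt_of_le hp (by exact_mod_cast h')), coeff_zero]
    · ext i
      have hi := i.2
      rw [← hprod p hp i]
      have h := coeff_eq_zero_of_degree_lt (n := 2 * l - 2 - i)
        (dlt_mono (b := 2 * l - 2 - i) hps (by omega))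
      rw [coeff_sub, coeff_mul_X_pow', if_neg (by omega), sub_zero] at h
      exact h
  · intro hND hdet
    rw [← Matrix.exists_mulVec_eq_zero_iff] at hdet
    obtain ⟨v, hv, hMv⟩ := hdet
    apply hv
    obtain ⟨p, hpdef⟩ : ∃ p : Polynomial ℂ, p = ∑ j : Fin n, C (v j) * X ^ (j : ℕ) := ⟨_, rfl⟩
    have hpc : ∀ j : Fin n, p.coeff j = v j := by
      intro j
      rw [hpdef, finsetSum_coeff, Finset.sum_eq_single j]
      · simp
      · intro b _ hb
        rw [coeff_C_mul, coeff_X_pow, if_neg (fun h => hb (Fin.ext h.symm)), mul_zero]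
      · simp
    have hpd : p.degree < (n : WithBot ℕ) := by
      rw [hpdef]; exact degree_sum_fin_lt v
    have hXm : (X ^ (2 * l - 1) : Polynomial ℂ).Monic := monic_X_pow _
    have hmod := modByMonic_add_div (p * Q) (X ^ (2 * l - 1))
    have hp0 := hND p ((p * Q) /ₘ X ^ (2 * l - 1)) hpd (by
      rw [hkey p _ hpd, degree_lt_iff_coeff_zero]
      intro k hk
      rcases Nat.lt_or_ge k (2 * l - 1) with h' | h'
      · rw [coeff_sub, coeff_mul_X_pow', if_neg (by omega), sub_zero]
        have h := hprod p hpd ⟨2 * l - 2 - k, by omega⟩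
        simp only [show 2 * l - 2 - (2 * l - 2 - k) = k by omega] at h
        rw [h, show (fun j : Fin n => p.coeff (j : ℕ)) = v from funext hpc, hMv]
        rfl
      · rw [show p * Q - (p * Q) /ₘ X ^ (2 * l - 1) * X ^ (2 * l - 1) =
          (p * Q) %ₘ X ^ (2 * l - 1) by linear_combination -hmod]
        apply coeff_eq_zero_of_degree_lt
        refine lt_of_lt_of_le (degree_modByMonic_lt _ hXm) ?_
        rw [degree_X_pow]
        exact_mod_cast h')
    ext j
    rw [← hpc j, hp0, coeff_zero]; rfl

end TIP

/-- Theorem 3.2: solvability criterion for the inverse discrete transmission eigenvalue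
problem. Given the data `α• n`, `β• n` (`n = 1,…,l`) and `α l` (with `α l ≠ 0`,
`α l ≠ α• l`), set `R0 = α_l φ• (l+1)`, `R1 = φ• l`, `r1 = ∏_{k=1}^{l-1} (α• k)⁻¹`,
`r0 = (α_l / α• l) r1`. Given complex numbers `Λ 1, …, Λ (2l-1)`, construct
`E = (r0 - r1) ∏ (X - Λ j)`, the unique monic `v0`, `v1` of degrees `l`, `l-1` with
`E = R0 v1 - R1 v0`, and `M k` as the coefficients of the quotient of `X^{2l-1} v1`
divided by `v0`. Then `Λ 1, …, Λ (2l-1)` are the eigenvalues (with multiplicity) of the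
transmission problem for some nonzero `α 1, …, α (l-1)` (together with the given `α l`)
and some `β 1, …, β l`, if and only if the Hankel determinants `Δ_n`, `n = 1,…,l-1`,
are nonzero. -/
theorem transmission_inverse_problem_criterion (l : ℕ) (hl : 1 ≤ l)
    (αs βs : ℕ → ℂ) (hαs : ∀ n, 1 ≤ n → n ≤ l → αs n ≠ 0)
    (αl : ℂ) (hαl : αl ≠ 0) (hαlne : αl ≠ αs l)
    (φs : ℕ → Polynomial ℂ) (hφs0 : φs 0 = 0) (hφs1 : φs 1 = 1)
    (hrecs : ∀ n, 1 ≤ n → n ≤ l →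
      C (αs n) * φs (n + 1) + C (βs n) * φs n + C (αs n) * φs (n - 1) = X * φs n)
    (Λ : ℕ → ℂ) (r0 r1 : ℂ)
    (hr1 : r1 = ∏ k ∈ Finset.Icc 1 (l - 1), (αs k)⁻¹)
    (hr0 : r0 = αl / αs l * r1)
    (E : Polynomial ℂ)
    (hE : E = C (r0 - r1) * ∏ j ∈ Finset.Icc 1 (2 * l - 1), (X - C (Λ j)))
    (v0 v1 : Polynomial ℂ)
    (hv0m : v0.Monic) (hv0d : v0.degree = (l : WithBot ℕ))
    (hv1m : v1.Monic) (hv1d : v1.degree = ((l - 1 : ℕ) : WithBot ℕ))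
    (hEv : E = (C αl * φs (l + 1)) * v1 - φs l * v0)
    (M : ℕ → ℂ)
    (hM : (X ^ (2 * l - 1) * v1) /ₘ v0
      = ∑ k ∈ Finset.Icc 1 (2 * l - 1), C (M k) * X ^ (2 * l - 1 - k)) :
    (∃ α β : ℕ → ℂ, (∀ n, 1 ≤ n → n ≤ l → α n ≠ 0) ∧ α l = αl ∧
      ∃ φ : ℕ → Polynomial ℂ, φ 0 = 0 ∧ φ 1 = 1 ∧
        (∀ n, 1 ≤ n → n ≤ l →
          C (α n) * φ (n + 1) + C (β n) * φ n + C (α n) * φ (n - 1) = X * φ n) ∧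
        ∃ c : ℂ, c ≠ 0 ∧
          φ l * φs (l + 1) - φ (l + 1) * φs l
            = C c * ∏ j ∈ Finset.Icc 1 (2 * l - 1), (X - C (Λ j))) ↔
    (∀ n, 1 ≤ n → n ≤ l - 1 →
      Matrix.det (Matrix.of fun i j : Fin (n + 1) => M ((i : ℕ) + (j : ℕ) + 1)) ≠ 0) := by
  obtain ⟨m, rfl⟩ : ∃ m, l = m + 1 := ⟨l - 1, by omega⟩
  simp only [Nat.add_sub_cancel] at hr1 hv1d
  have hds1 := TIP.deg_phi hαs hφs0 hφs1 hrecs m (by omega)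
  have hds0 := TIP.deg_phi hαs hφs0 hφs1 hrecs (m + 1) le_rfl
  rw [Finset.prod_Icc_succ_top (by omega), ← hr1] at hds0
  rw [← hr1] at hds1
  have hl0 := hαs (m + 1) (by omega) le_rfl
  have hr1ne : r1 ≠ 0 := by
    rw [hr1, Finset.prod_ne_zero_iff]
    intro k hk
    rw [Finset.mem_Icc] at hk
    exact inv_ne_zero (hαs k hk.1 (by omega))
  have hrne : r0 - r1 ≠ 0 := by
    rw [hr0, show αl / αs (m + 1) * r1 - r1 = (αl - αs (m + 1)) * (r1 / αs (m + 1)) by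
      field_simp]
    exact mul_ne_zero (sub_ne_zero.mpr hαlne) (div_ne_zero hr1ne hl0)
  have hCa : C αl⁻¹ * C αl = (1 : Polynomial ℂ) := by
    rw [← C_mul, inv_mul_cancel₀ hαl, C_1]
  constructor
  · rintro ⟨α, β, hα, hαm, φ, hφ0, hφ1, hrec, c, hc, hD⟩ n hn hn'
    rw [TIP.hankel_iff (by omega) (by omega) hv0m hv0d M hM]
    have hd1 := TIP.deg_phi hα hφ0 hφ1 hrec m (by omega)
    have hd0 := TIP.deg_phi hα hφ0 hφ1 hrec (m + 1) le_rfl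
    rw [Finset.prod_Icc_succ_top (by omega), ← hd1.2, hαm] at hd0
    obtain ⟨κ, hκ⟩ : ∃ κ : ℂ, κ = αl * c / (r0 - r1) := ⟨_, rfl⟩
    have hκ0 : κ ≠ 0 := by rw [hκ]; exact div_ne_zero (mul_ne_zero hαl hc) hrne
    have hκ' : C κ * C (r0 - r1) = C αl * C c := by
      rw [← C_mul, ← C_mul]; congr 1; rw [hκ]; field_simp
    have hAB : (C αl * φs (m + 2)) * (φ (m + 1) - C κ * v1) =
        φs (m + 1) * (C αl * φ (m + 2) - C κ * v0) := by
      rw [hE] at hEv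
      linear_combination C αl * hD + C κ * hEv -
        (∏ j ∈ Finset.Icc 1 (2 * (m + 1) - 1), (X - C (Λ j))) * hκ'
    have hcop := TIP.coprime_phi hαs hφs1 hrecs (m + 1) le_rfl
    have hdvd : φs (m + 1) ∣ φ (m + 1) - C κ * v1 := by
      apply hcop.dvd_of_dvd_mul_left
      refine ⟨C αl⁻¹ * (C αl * φ (m + 2) - C κ * v0), ?_⟩
      linear_combination C αl⁻¹ * hAB - φs (m + 2) * (φ (m + 1) - C κ * v1) * hCa
    obtain ⟨d, hd⟩ := hdvd
    have hsne : φs (m + 1) ≠ 0 := by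
      intro h
      rw [h] at hds1
      exact absurd hds1.1 (by simp)
    have hB : C αl * φ (m + 2) - C κ * v0 = C αl * φs (m + 2) * d := by
      apply mul_left_cancel₀ hsne
      rw [← hAB, hd]; ring
    have hdd : d.degree < ((1 : ℕ) : WithBot ℕ) := by
      apply TIP.dlt_of_mul hds1.1
      rw [mul_comm, ← hd]
      have hlt : ((m : ℕ) : WithBot ℕ) < ((1 + m : ℕ) : WithBot ℕ) := by
        exact_mod_cast (by omega : m < 1 + m)
      apply TIP.dlt_sub
      · rw [hd1.1]; exact hlt
      · rw [degree_C_mul hκ0, hv1d]; exact hlt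
    have hdC : d = C (d.coeff 0) := eq_C_of_degree_le_zero (TIP.dle_of_dlt (a := 0) hdd)
    have hv0c : v0.coeff (m + 1) = 1 := by
      have := hv0m.coeff_natDegree
      rwa [natDegree_eq_of_degree_eq_some hv0d] at this
    have hv1c : v1.coeff m = 1 := by
      have := hv1m.coeff_natDegree
      rwa [natDegree_eq_of_degree_eq_some hv1d] at this
    have c1 := congrArg (fun p => coeff p m) hd
    have c0 := congrArg (fun p => coeff p (m + 1)) hB
    rw [hdC] at c1 c0
    simp only [coeff_sub, coeff_C_mul, coeff_mul_C, hv0c, hv1c] at c1 c0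
    rw [hds1.2] at c1
    rw [hd0.2, hds0.2] at c0
    have hd00 : d.coeff 0 = 0 := by
      have : (r0 - r1) * d.coeff 0 = 0 := by
        rw [hr0]
        field_simp at c0 ⊢
        linear_combination αs (m + 1) * c1 - c0
      exact (mul_eq_zero.mp this).resolve_left hrne
    rw [hdC, hd00, C_0, mul_zero] at hd hB
    have e1 : v1 = C κ⁻¹ * φ (m + 1) := by
      rw [sub_eq_zero.mp hd, ← mul_assoc, ← C_mul, inv_mul_cancel₀ hκ0, C_1, one_mul]
    have e0 : v0 = C (κ⁻¹ * αl) * φ (m + 2) := by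
      rw [C_mul, mul_assoc, sub_eq_zero.mp hB, ← mul_assoc, ← C_mul, inv_mul_cancel₀ hκ0, C_1,
        one_mul]
    rw [e1, e0]
    exact TIP.ND_scale (inv_ne_zero hκ0)
      (TIP.ND_phi hα hφ0 hφ1 hrec m le_rfl (n + 1) (by omega) (by omega))
  · intro H
    obtain ⟨α, β, h1, h2, φ, h3, h4, h5, a, h6, h7, h8⟩ :=
      TIP.chain_ex m v0 v1 αl hαl hv0m hv1m hv0d hv1d (by
        intro n hn hn'
        obtain ⟨k, rfl⟩ : ∃ k, n = k + 1 := ⟨n - 1, by omega⟩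
        rw [← TIP.hankel_iff (by omega) hn' hv0m hv0d M hM]
        exact H k (by omega) (by omega))
    refine ⟨α, β, h1, h2, φ, h3, h4, h5, αl⁻¹ * a * (r0 - r1),
      mul_ne_zero (mul_ne_zero (inv_ne_zero hαl) h6) hrne, ?_⟩
    rw [hE] at hEv
    simp only [show m + 1 + 1 = m + 2 by omega] at *
    rw [C_mul, C_mul, mul_assoc _ (C (r0 - r1)), hEv, h7]
    linear_combination -(C αl⁻¹ * φs (m + 1)) * h8 -
      (C a * v1 * φs (m + 2) - φ (m + 2) * φs (m + 1)) * hCa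
end

section
/- (Uniqueness for the inverse discrete transmission eigenvalue problem.) Let (α_1,…,α_l, β_1,…,β_l) and (α̃_1,…,α̃_l, β̃_1,…,β̃_l) be two coefficient systems with all α_n ≠ 0, α̃_n ≠ 0, α_l = α̃_l ≠ α•_l, combined with the same data α•_1,…,α•_l, β•_1,…,β•_l. If the corresponding characteristic polynomials D and D̃ have the same zeros with the same multiplicities (equivalently, D̃ = c·D for some nonzero constant c), then α_n = α̃_n for n = 1,…,l−1 and β_n = β̃_n for n = 1,…,l. -/
open Polynomial

lemma aux_coeff (l : ℕ) (α β : ℕ → ℂ) (hα : ∀ n, 1 ≤ n → n ≤ l → α n ≠ 0)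
    (φ : ℕ → Polynomial ℂ) (hφ0 : φ 0 = 0) (hφ1 : φ 1 = 1)
    (hrec : ∀ n, 1 ≤ n → n ≤ l →
      C (α n) * φ (n + 1) + C (β n) * φ n + C (α n) * φ (n - 1) = X * φ n) :
    ∀ n, n ≤ l → (∀ k, n ≤ k → (φ n).coeff k = 0) ∧ (∀ k, n + 1 ≤ k → (φ (n+1)).coeff k = 0) ∧
      (φ (n+1)).coeff n ≠ 0 ∧ (1 ≤ n → α n * (φ (n+1)).coeff n = (φ n).coeff (n-1)) := by
  intro n
  induction n with
  | zero =>
    intro _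
    refine ⟨by simp [hφ0], ?_, by simp [hφ1], by simp⟩
    intro k hk
    rw [zero_add, hφ1, coeff_one, if_neg (by omega)]
  | succ n ih =>
    intro hn
    obtain ⟨h1, h2, h3, -⟩ := ih (by omega)
    have ha := hα (n+1) (by omega) hn
    have hr := hrec (n+1) (by omega) hn
    simp only [Nat.add_sub_cancel] at hr
    have key : ∀ k, n + 1 ≤ k + 1 → α (n+1) * (φ (n+1+1)).coeff (k+1) = (φ (n+1)).coeff k := by
      intro k hk
      have := congrArg (fun p => coeff p (k+1)) hr
      simp only [coeff_add, coeff_C_mul, coeff_X_mul] at this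
      rw [h1 (k+1) (by omega), h2 (k+1) (by omega)] at this
      simpa using this
    refine ⟨h2, ?_, ?_, ?_⟩
    · intro k hk
      obtain ⟨k, rfl⟩ : ∃ j, k = j + 1 := ⟨k-1, by omega⟩
      have := key k (by omega)
      rw [h2 k (by omega)] at this
      exact (mul_eq_zero.mp this).resolve_left ha
    · intro h
      have := key n le_rfl
      rw [h, mul_zero] at this
      exact h3 this.symm
    · intro _
      simpa using key n le_rfl

lemma aux_coprime (l : ℕ) (α β : ℕ → ℂ) (hα : ∀ n, 1 ≤ n → n ≤ l → α n ≠ 0)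
    (φ : ℕ → Polynomial ℂ) (hφ1 : φ 1 = 1)
    (hrec : ∀ n, 1 ≤ n → n ≤ l →
      C (α n) * φ (n + 1) + C (β n) * φ n + C (α n) * φ (n - 1) = X * φ n) :
    ∀ n, n ≤ l → IsCoprime (φ n) (φ (n+1)) := by
  intro n
  induction n with
  | zero => intro _; rw [zero_add, hφ1]; exact isCoprime_one_right
  | succ n ih =>
    intro hn
    obtain ⟨u, v, huv⟩ := ih (by omega)
    have ha := hα (n+1) (by omega) hn
    have hr := hrec (n+1) (by omega) hn
    simp only [Nat.add_sub_cancel] at hr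
    have hi : C (α (n+1))⁻¹ * C (α (n+1)) = 1 := by
      rw [← C_mul, inv_mul_cancel₀ ha, C_1]
    refine ⟨v + u * C (α (n+1))⁻¹ * (X - C (β (n+1))), -u, ?_⟩
    linear_combination huv - u * C (α (n+1))⁻¹ * hr + (u * φ (n+2) + u * φ n) * hi


/-- Uniqueness for the inverse discrete transmission eigenvalue problem: two coefficient
systems `(α, β)` and `(α̃, β̃)` with all `α n ≠ 0`, `α̃ n ≠ 0`, `α l = α̃ l ≠ α• l`, combined
with the same data `(α•, β•)`, whose characteristic polynomials `D`, `D̃` have the same zeros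
with the same multiplicities (i.e. `D̃ = c D` with `c ≠ 0`), coincide: `α n = α̃ n` for
`n = 1,…,l-1` and `β n = β̃ n` for `n = 1,…,l`. -/
theorem transmission_inverse_problem_uniqueness (l : ℕ) (hl : 1 ≤ l)
    (αs βs : ℕ → ℂ) (hαs : ∀ n, 1 ≤ n → n ≤ l → αs n ≠ 0)
    (α β α' β' : ℕ → ℂ)
    (hα : ∀ n, 1 ≤ n → n ≤ l → α n ≠ 0)
    (hα' : ∀ n, 1 ≤ n → n ≤ l → α' n ≠ 0)
    (hαl : α l = α' l) (hαlne : α l ≠ αs l)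
    (φ φ' φs : ℕ → Polynomial ℂ)
    (hφ0 : φ 0 = 0) (hφ1 : φ 1 = 1) (hφ'0 : φ' 0 = 0) (hφ'1 : φ' 1 = 1)
    (hφs0 : φs 0 = 0) (hφs1 : φs 1 = 1)
    (hrec : ∀ n, 1 ≤ n → n ≤ l →
      C (α n) * φ (n + 1) + C (β n) * φ n + C (α n) * φ (n - 1) = X * φ n)
    (hrec' : ∀ n, 1 ≤ n → n ≤ l →
      C (α' n) * φ' (n + 1) + C (β' n) * φ' n + C (α' n) * φ' (n - 1) = X * φ' n)
    (hrecs : ∀ n, 1 ≤ n → n ≤ l →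
      C (αs n) * φs (n + 1) + C (βs n) * φs n + C (αs n) * φs (n - 1) = X * φs n)
    (c : ℂ) (hc : c ≠ 0)
    (hDD : φ' l * φs (l + 1) - φ' (l + 1) * φs l
      = C c * (φ l * φs (l + 1) - φ (l + 1) * φs l)) :
    (∀ n, 1 ≤ n → n ≤ l - 1 → α n = α' n) ∧ (∀ n, 1 ≤ n → n ≤ l → β n = β' n) := by
  have A := aux_coeff l α β hα φ hφ0 hφ1 hrec
  have A' := aux_coeff l α' β' hα' φ' hφ'0 hφ'1 hrec'
  have As := aux_coeff l αs βs hαs φs hφs0 hφs1 hrecs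
  have top : φ' l = C c * φ l ∧ φ' (l+1) = C c * φ (l+1) := by
    have cop := aux_coprime l αs βs hαs φs hφs1 hrecs l le_rfl
    obtain ⟨a1, a2, a3, a4⟩ := A l le_rfl
    obtain ⟨b1, b2, b3, b4⟩ := A' l le_rfl
    obtain ⟨s1, s2, s3, s4⟩ := As l le_rfl
    have a4 := a4 hl
    have b4 := b4 hl
    have s4 := s4 hl
    have e : (φ' l - C c * φ l) * φs (l+1) = (φ' (l+1) - C c * φ (l+1)) * φs l := by
      linear_combination hDD
    have sl : (φs l).coeff (l-1) ≠ 0 := by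
      rw [← s4]; exact mul_ne_zero (hαs l hl le_rfl) s3
    have sne : φs l ≠ 0 := by
      intro h; rw [h] at sl; simp at sl
    obtain ⟨R, hR⟩ : φs l ∣ (φ' l - C c * φ l) :=
      cop.dvd_of_dvd_mul_right (e ▸ Dvd.intro_left _ rfl)
    have hQ : φ' (l+1) - C c * φ (l+1) = φs (l+1) * R := by
      apply mul_right_cancel₀ sne
      rw [← e, hR]; ring
    have hdeg : R.natDegree = 0 := by
      by_cases hR0 : R = 0
      · simp [hR0]
      · have h1 : (φ' l - C c * φ l).natDegree ≤ l - 1 := by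
          rw [natDegree_le_iff_coeff_eq_zero]
          intro k hk
          simp [a1 k (by omega), b1 k (by omega)]
        rw [hR, natDegree_mul sne hR0] at h1
        have := le_natDegree_of_ne_zero sl
        omega
    obtain ⟨k, rfl⟩ : ∃ k, R = C k := ⟨_, eq_C_of_natDegree_eq_zero hdeg⟩
    have c1 := congrArg (fun p => coeff p (l-1)) hR
    have c2 := congrArg (fun p => coeff p l) hQ
    simp only [coeff_sub, coeff_C_mul, coeff_mul_C] at c1 c2
    have hk : k = 0 := by
      have : (α l - αs l) * (φs (l+1)).coeff l * k = 0 := by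
        rw [← a4, ← b4, ← s4, ← hαl] at c1
        linear_combination c1 - α l * c2
      exact (mul_eq_zero.mp this).resolve_left (mul_ne_zero (sub_ne_zero.mpr hαlne) s3)
    rw [hk] at hR hQ
    simp only [C_0, mul_zero] at hR hQ
    exact ⟨sub_eq_zero.mp hR, sub_eq_zero.mp hQ⟩
  have main : ∀ n, n + 1 ≤ l → φ' (n+1) = C c * φ (n+1) → φ' (n+1+1) = C c * φ (n+1+1) →
      α (n+1) = α' (n+1) ∧ β (n+1) = β' (n+1) ∧ φ' n = C c * φ n := by
    intro n hn e1 e2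
    obtain ⟨a1, a2, a3, a4⟩ := A (n+1) hn
    obtain ⟨b1, b2, b3, b4⟩ := A' (n+1) hn
    obtain ⟨a1', -, a3', -⟩ := A n (by omega)
    obtain ⟨b1', -, -, -⟩ := A' n (by omega)
    have a4 := a4 (by omega)
    have b4 := b4 (by omega)
    have hr := hrec (n+1) (by omega) hn
    have hr' := hrec' (n+1) (by omega) hn
    have ha := hα (n+1) (by omega) hn
    simp only [Nat.add_sub_cancel] at hr hr' a4 b4
    rw [e1, e2] at b4
    simp only [coeff_C_mul] at b4
    have hαe : α (n+1) = α' (n+1) := by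
      have : c * (φ (n+1+1)).coeff (n+1) * (α (n+1) - α' (n+1)) = 0 := by
        linear_combination c * a4 - b4
      exact sub_eq_zero.mp ((mul_eq_zero.mp this).resolve_left (mul_ne_zero hc a3))
    rw [← hαe, e1, e2] at hr'
    have h : C c * (C (β' (n+1)) - C (β (n+1))) * φ (n+1)
        + C (α (n+1)) * (φ' n - C c * φ n) = 0 := by
      linear_combination hr' - C c * hr
    have hβe : β (n+1) = β' (n+1) := by
      have h' := congrArg (fun p => coeff p n) h
      simp only [← C_sub, ← C_mul, coeff_add, coeff_C_mul, coeff_sub, coeff_zero,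
        a1' n le_rfl, b1' n le_rfl, mul_zero, sub_zero, add_zero] at h'
      have h2 := (mul_eq_zero.mp h').resolve_right a3'
      exact (sub_eq_zero.mp ((mul_eq_zero.mp h2).resolve_left hc)).symm
    refine ⟨hαe, hβe, ?_⟩
    rw [hβe, sub_self, mul_zero, zero_mul, zero_add] at h
    exact sub_eq_zero.mp ((mul_eq_zero.mp h).resolve_left (by simpa using ha))
  have down : ∀ j n, n + j = l → φ' n = C c * φ n ∧ φ' (n+1) = C c * φ (n+1) := by
    intro j
    induction j with
    | zero => intro n hn; obtain rfl : n = l := by omega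
              exact top
    | succ j ih =>
      intro n hn
      obtain ⟨e1, e2⟩ := ih (n+1) (by omega)
      exact ⟨(main n (by omega) e1 e2).2.2, e1⟩
  have fin : ∀ n, 1 ≤ n → n ≤ l → α n = α' n ∧ β n = β' n := by
    intro n h1 h2
    obtain ⟨n, rfl⟩ : ∃ j, n = j + 1 := ⟨n-1, by omega⟩
    obtain ⟨e1, e2⟩ := down (l - (n+1)) (n+1) (by omega)
    obtain ⟨x, y, -⟩ := main n h2 e1 e2
    exact ⟨x, y⟩
  exact ⟨fun n h1 h2 => (fin n h1 (by omega)).1, fun n h1 h2 => (fin n h1 h2).2⟩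
end
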